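/- arXiv:1611.09719 — 3 statements merged into one kernel-verified Lean document; each statement's English description precedes it below -/
import Mathlib

section
/- Let α ∈ ℝ, γ ≥ 0, C > 0, let r ∈ ℕ satisfy r > |α|, and let δ > 0 be such that γ − δ < −1. Let (ζ_x)_{x∈ℝ} be a family of tempered distributions on ℝ such that |⟨ζ_x, φ_x^λ⟩| ≤ C λ^α for all x ∈ ℝ, λ ∈ (0,1] and φ ∈ B^r_0, and |⟨ζ_x − ζ_y, φ_x^λ⟩| ≤ C λ^{α−γ} |x−y|^γ for all λ ∈ (0,1], φ ∈ B^r_0 and x, y ∈ ℝ with |x−y| ≥ λ. Then for every Schwartz function ψ ∈ 𝒮(ℝ) there is a constant C′, depending only on α, γ, δ, r and on sup_{0≤j≤r} sup_{x∈ℝ} (1+|x|)^δ |ψ^{(j)}(x)| (in particular not on ζ, C, x or λ), such that |⟨ζ_x, ψ_x^λ⟩| ≤ C′ C λ^α for all x ∈ ℝ and λ ∈ (0,1], where ψ_x^λ(y) := λ^{−1} ψ(λ^{−1}(y−x)). -/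
open Real

noncomputable section

/-- `φ ∈ B^r_0`: a smooth function supported in `[-1,1]` whose derivatives up to
order `r` are bounded by `1`. -/
def IsTestFunction (r : ℕ) (φ : ℝ → ℝ) : Prop :=
  ContDiff ℝ (⊤ : ℕ∞) φ ∧ (∀ y : ℝ, y ∉ Set.Icc (-1 : ℝ) 1 → φ y = 0) ∧
    ∀ j ≤ r, ∀ y : ℝ, |iteratedDeriv j φ y| ≤ 1

/-!
Localize `ψ` by a smooth partition of unity subordinate to the intervals of length `2` around the
integers. Rescaled around `x`, the piece of `ψ` at `k` is a test function recentered at `x + λ k`,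
up to a factor of order `(1 + |k|) ^ (-δ)` coming from the decay of `ψ`. Since `|λ k| ≥ λ` for
`k ≠ 0`, the base point of `ζ` can be moved from `x + λ k` to `x` at the price of a factor of order
`(1 + |k|) ^ γ`, so the pairings with the pieces are summable as `γ - δ < -1`. The partial sums
converge to `ψ` in the Schwartz topology, hence the bound passes to `ψ` by continuity of `ζ x`.
-/

open Filter Topology SchwartzMap
open scoped ContDiff

section SchwartzCutoff

variable {E F : Type*} [NormedAddCommGroup E] [NormedSpace ℝ E]
  [NormedAddCommGroup F] [NormedSpace ℝ F]

theorem norm_iteratedFDeriv_smul_le_two_pow_mul {𝕜 : Type*} [NormedField 𝕜] [NormedAlgebra ℝ 𝕜]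
    [NormedSpace 𝕜 F] [IsScalarTower ℝ 𝕜 F] {g : E → 𝕜} {f : E → F} {n : ℕ}
    (hg : ContDiff ℝ n g) (hf : ContDiff ℝ n f) {x : E} {a b : ℝ}
    (ha : ∀ i ≤ n, ‖iteratedFDeriv ℝ i g x‖ ≤ a) (hb : ∀ i ≤ n, ‖iteratedFDeriv ℝ i f x‖ ≤ b) :
    ‖iteratedFDeriv ℝ n (fun y ↦ g y • f y) x‖ ≤ 2 ^ n * (a * b) := by
  have ha₀ : 0 ≤ a := (norm_nonneg _).trans (ha 0 n.zero_le)
  calc ‖iteratedFDeriv ℝ n (fun y ↦ g y • f y) x‖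
      ≤ ∑ i ∈ Finset.range (n + 1), (n.choose i : ℝ) * ‖iteratedFDeriv ℝ i g x‖ *
          ‖iteratedFDeriv ℝ (n - i) f x‖ := norm_iteratedFDeriv_smul_le hg hf x le_rfl
    _ ≤ ∑ i ∈ Finset.range (n + 1), (n.choose i : ℝ) * a * b := by
        gcongr with i hi
        · exact ha i (Finset.mem_range_succ_iff.1 hi)
        · exact hb (n - i) (n.sub_le i)
    _ = 2 ^ n * (a * b) := by
        simp only [mul_assoc, ← Finset.sum_mul]
        exact_mod_cast congrArg (fun m : ℕ ↦ (m : ℝ) * (a * b)) (Nat.sum_range_choose n)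

theorem hasTemperateGrowth_of_bounded_iteratedFDeriv {g : E → F} (hg : ContDiff ℝ ∞ g)
    (hbdd : ∀ n : ℕ, ∃ B : ℝ, ∀ x, ‖iteratedFDeriv ℝ n g x‖ ≤ B) : g.HasTemperateGrowth :=
  ⟨hg, fun n ↦ ⟨0, by simpa using hbdd n⟩⟩

/-- Away from the ball one power of `1 + ‖x‖` is traded for the factor `1 / R`. -/
theorem seminorm_smulLeftCLM_sub_self_le_div {g : E → ℝ} (hg : g.HasTemperateGrowth) {k n : ℕ}
    {B R : ℝ} (hB : ∀ i ≤ n, ∀ x, ‖iteratedFDeriv ℝ i g x‖ ≤ B) (hR : 0 < R)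
    (hg_one : ∀ x ∈ Metric.ball 0 R, g x = 1) (ψ : 𝓢(E, F)) :
    SchwartzMap.seminorm ℝ k n (smulLeftCLM F g ψ - ψ) ≤
      (2 ^ n * B + 1) * (2 ^ (k + 1) *
        (Finset.Iic (k + 1, n)).sup (fun m ↦ SchwartzMap.seminorm ℝ m.1 m.2) ψ) / R := by
  set S : ℝ := 2 ^ (k + 1) *
    (Finset.Iic (k + 1, n)).sup (fun m ↦ SchwartzMap.seminorm ℝ m.1 m.2) ψ
  have : 0 ≤ S := by positivity
  have hB₀ : 0 ≤ B := (norm_nonneg _).trans (hB 0 n.zero_le 0)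
  refine SchwartzMap.seminorm_le_bound ℝ k n _ (by positivity) fun x ↦ ?_
  by_cases hx : x ∈ Metric.ball 0 R
  · have h_zero : ⇑(smulLeftCLM F g ψ - ψ) =ᶠ[𝓝 x] 0 := by
      filter_upwards [Metric.isOpen_ball.mem_nhds hx] with y hy
      simp [smulLeftCLM_apply_apply hg, hg_one y hy]
    rw [(h_zero.iteratedFDeriv ℝ n).eq_of_nhds]
    simp only [iteratedFDeriv_zero, Pi.zero_apply, norm_zero, mul_zero]
    positivity
  · have hRx : R ≤ 1 + ‖x‖ := by
      rw [mem_ball_zero_iff, not_lt] at hx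
      linarith
    have hψ (i : ℕ) (hi : i ≤ n) : ‖iteratedFDeriv ℝ i ψ x‖ ≤ S / (1 + ‖x‖) ^ (k + 1) := by
      rw [le_div_iff₀' (by positivity)]
      exact one_add_le_sup_seminorm_apply (𝕜 := ℝ) (m := (k + 1, n)) le_rfl hi ψ x
    have hgψ : ‖iteratedFDeriv ℝ n (smulLeftCLM F g ψ) x‖ ≤
        2 ^ n * (B * (S / (1 + ‖x‖) ^ (k + 1))) := by
      rw [smulLeftCLM_apply hg]
      exact norm_iteratedFDeriv_smul_le_two_pow_mul (hg.1.of_le (by exact_mod_cast le_top))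
        (ψ.smooth n) (fun i hi ↦ hB i hi x) hψ
    have h_sub : ‖iteratedFDeriv ℝ n (smulLeftCLM F g ψ - ψ) x‖ ≤
        (2 ^ n * B + 1) * S / (1 + ‖x‖) ^ (k + 1) := by
      rw [FunLike.coe_sub, iteratedFDeriv_sub_apply ((smulLeftCLM F g ψ).smooth n).contDiffAt
        (ψ.smooth n).contDiffAt]
      calc _ ≤ 2 ^ n * (B * (S / (1 + ‖x‖) ^ (k + 1))) + S / (1 + ‖x‖) ^ (k + 1) :=
            (norm_sub_le _ _).trans (add_le_add hgψ (hψ n le_rfl))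
        _ = _ := by ring
    calc ‖x‖ ^ k * ‖iteratedFDeriv ℝ n (smulLeftCLM F g ψ - ψ) x‖
        ≤ (1 + ‖x‖) ^ k * ((2 ^ n * B + 1) * S / (1 + ‖x‖) ^ (k + 1)) := by
          gcongr
          linarith
      _ = (2 ^ n * B + 1) * S / (1 + ‖x‖) := by
          field_simp
          ring
      _ ≤ (2 ^ n * B + 1) * S / R := by gcongr

theorem tendsto_smulLeftCLM_of_eqOn_one_ball {ι : Type*} {l : Filter ι} {g : ι → E → ℝ}
    (hg : ∀ i, ContDiff ℝ ∞ (g i))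
    (hbdd : ∀ n : ℕ, ∃ B : ℝ, ∀ j ≤ n, ∀ i x, ‖iteratedFDeriv ℝ j (g i) x‖ ≤ B)
    {R : ι → ℝ} (hR : Tendsto R l atTop) (hg_one : ∀ i, ∀ x ∈ Metric.ball 0 (R i), g i x = 1)
    (ψ : 𝓢(E, F)) : Tendsto (fun i ↦ smulLeftCLM F (g i) ψ) l (𝓝 ψ) := by
  have hg_temp (i : ι) : (g i).HasTemperateGrowth :=
    hasTemperateGrowth_of_bounded_iteratedFDeriv (hg i) fun n ↦
      (hbdd n).imp fun _ hB ↦ hB n le_rfl i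
  rw [(schwartz_withSeminorms ℝ E F).tendsto_nhds]
  rintro ⟨k, n⟩ ε hε
  obtain ⟨B, hB⟩ := hbdd n
  filter_upwards [hR.eventually_gt_atTop 0,
    (hR.const_div_atTop _).eventually_lt_const hε] with i hRi hi
  exact (seminorm_smulLeftCLM_sub_self_le_div (k := k) (hg_temp i) (fun j hj ↦ hB j hj i) hRi
    (hg_one i) ψ).trans_lt hi

end SchwartzCutoff

section SmoothIndicator

theorem exists_norm_iteratedDeriv_le_of_hasCompactSupport_deriv {F : Type*}
    [NormedAddCommGroup F] [NormedSpace ℝ F] {f : ℝ → F} (hf : ContDiff ℝ ∞ f)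
    (hf_bdd : ∃ B, ∀ x, ‖f x‖ ≤ B) (hf' : HasCompactSupport (deriv f)) (n : ℕ) :
    ∃ B, ∀ x, ‖iteratedDeriv n f x‖ ≤ B := by
  cases n with
  | zero => simpa only [iteratedDeriv_zero] using hf_bdd
  | succ n =>
    have h_cont : Continuous (iteratedFDeriv ℝ n (deriv f)) :=
      (contDiff_infty_iff_deriv.1 hf).2.continuous_iteratedFDeriv (by exact_mod_cast le_top)
    obtain ⟨B, hB⟩ := (hf'.iteratedFDeriv (𝕜 := ℝ) n).exists_bound_of_continuous h_cont
    exact ⟨B, fun x ↦ by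
      simpa only [iteratedDeriv_succ', norm_iteratedFDeriv_eq_norm_iteratedDeriv] using hB x⟩

theorem hasCompactSupport_deriv_smoothTransition : HasCompactSupport (deriv smoothTransition) := by
  refine HasCompactSupport.intro (isCompact_Icc (a := (0 : ℝ)) (b := 1)) fun x hx ↦ ?_
  rw [Set.mem_Icc, not_and_or, not_le, not_le] at hx
  rcases hx with hx | hx
  · have h : smoothTransition =ᶠ[𝓝 x] fun _ ↦ 0 := by
      filter_upwards [Iio_mem_nhds hx] with y hy using smoothTransition.zero_of_nonpos hy.le
    simp [h.deriv_eq]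
  · have h : smoothTransition =ᶠ[𝓝 x] fun _ ↦ 1 := by
      filter_upwards [Ioi_mem_nhds hx] with y hy using smoothTransition.one_of_one_le hy.le
    simp [h.deriv_eq]

theorem exists_abs_iteratedDeriv_smoothTransition_le (n : ℕ) :
    ∃ B, ∀ x, |iteratedDeriv n smoothTransition x| ≤ B :=
  exists_norm_iteratedDeriv_le_of_hasCompactSupport_deriv smoothTransition.contDiff
    ⟨1, fun x ↦ abs_le.2 ⟨by linarith [smoothTransition.nonneg x], smoothTransition.le_one x⟩⟩
    hasCompactSupport_deriv_smoothTransition n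

/-- A smooth version of the indicator function of the interval from `a` to `b`, the jump at each
end point being spread over the unit interval to its right. Being a difference of values of one
function, it telescopes over adjacent intervals. -/
def smoothIndicator (a b : ℝ) : ℝ → ℝ :=
  fun x ↦ smoothTransition (x - a) - smoothTransition (x - b)

theorem contDiff_smoothIndicator (a b : ℝ) : ContDiff ℝ ∞ (smoothIndicator a b) :=
  (smoothTransition.contDiff.comp (contDiff_id.sub contDiff_const)).sub
    (smoothTransition.contDiff.comp (contDiff_id.sub contDiff_const))

theorem smoothIndicator_eq_zero_of_notMem {a b x : ℝ} (hab : a ≤ b)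
    (hx : x ∉ Set.Icc a (b + 1)) : smoothIndicator a b x = 0 := by
  rw [Set.mem_Icc, not_and_or, not_le, not_le] at hx
  rcases hx with hx | hx
  · simp [smoothIndicator, smoothTransition.zero_of_nonpos (show x - a ≤ 0 by linarith),
      smoothTransition.zero_of_nonpos (show x - b ≤ 0 by linarith)]
  · simp [smoothIndicator, smoothTransition.one_of_one_le (show 1 ≤ x - a by linarith),
      smoothTransition.one_of_one_le (show 1 ≤ x - b by linarith)]

theorem smoothIndicator_eq_one_of_mem {a b x : ℝ} (hx : x ∈ Set.Icc (a + 1) b) :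
    smoothIndicator a b x = 1 := by
  simp [smoothIndicator, smoothTransition.one_of_one_le (show 1 ≤ x - a by linarith [hx.1]),
    smoothTransition.zero_of_nonpos (show x - b ≤ 0 by linarith [hx.2])]

theorem smoothIndicator_add_right (a b c x : ℝ) :
    smoothIndicator a b (x + c) = smoothIndicator (a - c) (b - c) x := by
  simp only [smoothIndicator, sub_sub_eq_add_sub]

theorem sum_smoothIndicator_Ico (N : ℕ) (x : ℝ) :
    ∑ k ∈ Finset.Ico (-N : ℤ) N, smoothIndicator (k - 1) k x =
      smoothIndicator (-N - 1) (N - 1) x := by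
  simpa [smoothIndicator] using Finset.sum_Ico_int_sub N fun k : ℤ ↦ smoothTransition (x - (k - 1))

theorem exists_abs_iteratedDeriv_smoothIndicator_le (n : ℕ) :
    ∃ B > 0, ∀ j ≤ n, ∀ a b x, |iteratedDeriv j (smoothIndicator a b) x| ≤ B := by
  have h_each (j : ℕ) : ∀ᶠ B in atTop, ∀ a b x, |iteratedDeriv j (smoothIndicator a b) x| ≤ B := by
    obtain ⟨B, hB⟩ := exists_abs_iteratedDeriv_smoothTransition_le j
    filter_upwards [eventually_ge_atTop (B + B)] with B' hB' a b x
    have h_shift (c : ℝ) : ContDiffAt ℝ j (fun y ↦ smoothTransition (y - c)) x :=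
      smoothTransition.contDiffAt.comp x (contDiffAt_id.sub contDiffAt_const)
    calc |iteratedDeriv j (smoothIndicator a b) x|
        = |iteratedDeriv j smoothTransition (x - a) -
            iteratedDeriv j smoothTransition (x - b)| := by
          unfold smoothIndicator
          rw [iteratedDeriv_fun_sub (h_shift a) (h_shift b), iteratedDeriv_comp_sub_const,
            iteratedDeriv_comp_sub_const]
      _ ≤ B + B := (abs_sub _ _).trans (add_le_add (hB _) (hB _))
      _ ≤ B' := hB'
  exact ((eventually_gt_atTop 0).and
    ((Set.finite_Iic n).eventually_all.2 fun j _ ↦ h_each j)).exists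

theorem hasTemperateGrowth_smoothIndicator (a b : ℝ) : (smoothIndicator a b).HasTemperateGrowth :=
  hasTemperateGrowth_of_bounded_iteratedFDeriv (contDiff_smoothIndicator a b) fun n ↦ by
    obtain ⟨B, -, hB⟩ := exists_abs_iteratedDeriv_smoothIndicator_le n
    exact ⟨B, fun x ↦ norm_iteratedFDeriv_eq_norm_iteratedDeriv.trans_le (hB n le_rfl a b x)⟩

end SmoothIndicator

section TestFunction

theorem norm_add_le_of_one_add_norm_rpow_mul_le {E F : Type*} [SeminormedAddCommGroup E]
    [SeminormedAddCommGroup F] {f : E → F} {δ A : ℝ} (hδ : 0 ≤ δ)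
    (hf : ∀ x, (1 + ‖x‖) ^ δ * ‖f x‖ ≤ A) {x y : E} (hy : ‖y‖ ≤ 1) :
    ‖f (y + x)‖ ≤ A * 2 ^ δ * (1 + ‖x‖) ^ (-δ) := by
  have h_dist : 1 + ‖x‖ ≤ 2 * (1 + ‖y + x‖) := by
    linarith [norm_le_norm_add_norm_sub y (y + x), norm_nonneg (y + x),
      norm_sub_le (y + x) y, congrArg norm (add_sub_cancel_left y x)]
  have h_rpow : (1 + ‖x‖) ^ δ ≤ 2 ^ δ * (1 + ‖y + x‖) ^ δ := by
    rw [← Real.mul_rpow zero_le_two (by positivity)]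
    exact Real.rpow_le_rpow (by positivity) h_dist hδ
  rw [Real.rpow_neg (by positivity), ← div_eq_mul_inv, le_div_iff₀' (by positivity)]
  calc (1 + ‖x‖) ^ δ * ‖f (y + x)‖
      ≤ 2 ^ δ * (1 + ‖y + x‖) ^ δ * ‖f (y + x)‖ := by gcongr
    _ = (1 + ‖y + x‖) ^ δ * ‖f (y + x)‖ * 2 ^ δ := by ring
    _ ≤ A * 2 ^ δ := by
        gcongr
        exact hf (y + x)

theorem isTestFunction_inv_mul_mul {r : ℕ} {g f : ℝ → ℝ} {a b : ℝ} (ha : 0 < a) (hb : 0 < b)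
    (hg : ContDiff ℝ ∞ g) (hf : ContDiff ℝ ∞ f) (hg_supp : ∀ y ∉ Set.Icc (-1 : ℝ) 1, g y = 0)
    (hg_le : ∀ j ≤ r, ∀ y ∈ Set.Icc (-1 : ℝ) 1, |iteratedDeriv j g y| ≤ a)
    (hf_le : ∀ j ≤ r, ∀ y ∈ Set.Icc (-1 : ℝ) 1, |iteratedDeriv j f y| ≤ b) :
    IsTestFunction r fun y ↦ (2 ^ r * (a * b))⁻¹ * (g y * f y) := by
  have hM : 0 < 2 ^ r * (a * b) := by positivity
  refine ⟨contDiff_const.mul (hg.mul hf), fun y hy ↦ by simp [hg_supp y hy], fun j hj y ↦ ?_⟩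
  rw [iteratedDeriv_const_mul_field, abs_mul, abs_of_pos (inv_pos.2 hM), inv_mul_le_iff₀ hM,
    mul_one]
  by_cases hy : y ∈ Set.Icc (-1 : ℝ) 1
  · have h_leibniz : |iteratedDeriv j (fun y ↦ g y * f y) y| ≤ 2 ^ j * (a * b) := by
      simpa only [norm_iteratedFDeriv_eq_norm_iteratedDeriv, Real.norm_eq_abs, smul_eq_mul] using
        norm_iteratedFDeriv_smul_le_two_pow_mul (n := j) (hg.of_le (by exact_mod_cast le_top))
          (hf.of_le (by exact_mod_cast le_top))
          (fun i hi ↦ norm_iteratedFDeriv_eq_norm_iteratedDeriv.trans_le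
            (hg_le i (hi.trans hj) y hy))
          (fun i hi ↦ norm_iteratedFDeriv_eq_norm_iteratedDeriv.trans_le
            (hf_le i (hi.trans hj) y hy))
    refine h_leibniz.trans ?_
    gcongr
    exact one_le_two
  · have h_zero : (fun y ↦ g y * f y) =ᶠ[𝓝 y] fun _ ↦ 0 := by
      filter_upwards [isClosed_Icc.isOpen_compl.mem_nhds hy] with z hz
      simp [hg_supp z hz]
    rw [h_zero.iteratedDeriv_eq]
    simpa using hM.le

/-- The localization of `ψ` to the unit scale around the integer `k`. -/
def unitPiece (k : ℤ) : 𝓢(ℝ, ℝ) →L[ℝ] 𝓢(ℝ, ℝ) :=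
  smulLeftCLM ℝ (smoothIndicator (k - 1) k)

theorem unitPiece_apply (k : ℤ) (ψ : 𝓢(ℝ, ℝ)) (y : ℝ) :
    unitPiece k ψ y = smoothIndicator (k - 1) k y * ψ y :=
  smulLeftCLM_apply_apply (hasTemperateGrowth_smoothIndicator _ _) ψ y

theorem tendsto_sum_unitPiece (ψ : 𝓢(ℝ, ℝ)) :
    Tendsto (fun N : ℕ ↦ ∑ k ∈ Finset.Ico (-N : ℤ) N, unitPiece k ψ) atTop (𝓝 ψ) := by
  have h_sum (N : ℕ) : ∑ k ∈ Finset.Ico (-N : ℤ) N, unitPiece k ψ =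
      smulLeftCLM ℝ (smoothIndicator (-N - 1) (N - 1)) ψ := by
    ext y
    simp [unitPiece_apply, smulLeftCLM_apply_apply (hasTemperateGrowth_smoothIndicator _ _),
      ← Finset.sum_mul, sum_smoothIndicator_Ico]
  simp only [h_sum]
  refine tendsto_smulLeftCLM_of_eqOn_one_ball (fun N ↦ contDiff_smoothIndicator _ _) (fun n ↦ ?_)
    (tendsto_atTop_add_const_right _ (-1) tendsto_natCast_atTop_atTop) (fun N x hx ↦ ?_) ψ
  · obtain ⟨B, -, hB⟩ := exists_abs_iteratedDeriv_smoothIndicator_le n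
    exact ⟨B, fun j hj N x ↦
      norm_iteratedFDeriv_eq_norm_iteratedDeriv.trans_le (hB j hj _ _ x)⟩
  · rw [mem_ball_zero_iff, Real.norm_eq_abs, abs_lt] at hx
    exact smoothIndicator_eq_one_of_mem ⟨by linarith, by linarith⟩

theorem isTestFunction_unitPiece {r : ℕ} {δ A B : ℝ} (hδ : 0 ≤ δ) (hA : 0 < A) (hB₀ : 0 < B)
    (hB : ∀ j ≤ r, ∀ a b x, |iteratedDeriv j (smoothIndicator a b) x| ≤ B) {ψ : 𝓢(ℝ, ℝ)}
    (hψ : ∀ j ≤ r, ∀ x, (1 + |x|) ^ δ * |iteratedDeriv j ψ x| ≤ A) (k : ℤ) :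
    IsTestFunction r fun y ↦
      (2 ^ r * (B * (A * 2 ^ δ * (1 + |(k : ℝ)|) ^ (-δ))))⁻¹ * unitPiece k ψ (y + k) := by
  simp only [unitPiece_apply, smoothIndicator_add_right, sub_self, sub_sub_cancel_left]
  refine isTestFunction_inv_mul_mul hB₀ (by positivity) (contDiff_smoothIndicator _ _)
    ((ψ.smooth ⊤).comp (contDiff_id.add contDiff_const))
    (fun y hy ↦ smoothIndicator_eq_zero_of_notMem (by norm_num) (by simpa using hy))
    (fun j hj y _ ↦ hB j hj _ _ y) fun j hj y hy ↦ ?_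
  rw [iteratedDeriv_comp_add_const]
  exact norm_add_le_of_one_add_norm_rpow_mul_le (f := iteratedDeriv j ψ) hδ (hψ j hj)
    (abs_le.2 hy)

/-- The recentered rescaling `ψ ↦ ψ_x^λ`, as a continuous linear map on Schwartz functions. -/
def rescaleCLM (x : ℝ) {lam : ℝ} (hlam : lam ≠ 0) : 𝓢(ℝ, ℝ) →L[ℝ] 𝓢(ℝ, ℝ) :=
  lam⁻¹ • compSubConstCLM ℝ x ∘L compCLMOfContinuousLinearEquiv ℝ
    (ContinuousLinearEquiv.unitsEquivAut ℝ (Units.mk0 lam⁻¹ (inv_ne_zero hlam)))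

theorem rescaleCLM_apply (x : ℝ) {lam : ℝ} (hlam : lam ≠ 0) (ψ : 𝓢(ℝ, ℝ)) (y : ℝ) :
    rescaleCLM x hlam ψ y = lam⁻¹ * ψ (lam⁻¹ * (y - x)) := by
  simp [rescaleCLM, mul_comm]

end TestFunction

theorem summable_one_add_abs_intCast_rpow {s : ℝ} (hs : s < -1) :
    Summable fun k : ℤ ↦ (1 + |(k : ℝ)|) ^ s := by
  have h_nat : Summable fun n : ℕ ↦ (1 + (n : ℝ)) ^ s := by
    simpa [add_comm] using (summable_nat_add_iff 1).2 (Real.summable_nat_rpow.2 hs)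
  exact Summable.of_nat_of_neg (by simpa using h_nat) (by simpa using h_nat)

section CoherentFamily

/-- A family `ζ` of tempered distributions that is homogeneous of order `α` at small scales, and
whose members at `x` and `y` differ by order `α - γ` below the scale `|x - y|`: the two hypotheses
on `ζ` of the reconstruction-type bound. A rescaled test function is represented by any Schwartz
function `Φ` with the same values. -/
structure IsCoherentFamily (r : ℕ) (α γ C : ℝ) (ζ : ℝ → 𝓢(ℝ, ℝ) →L[ℝ] ℝ) : Prop where
  abs_apply_le : ∀ x lam : ℝ, lam ∈ Set.Ioc (0 : ℝ) 1 → ∀ φ : ℝ → ℝ, IsTestFunction r φ →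
    ∀ Φ : 𝓢(ℝ, ℝ), (∀ y, Φ y = lam⁻¹ * φ (lam⁻¹ * (y - x))) → |ζ x Φ| ≤ C * lam ^ α
  abs_apply_sub_le : ∀ x y lam : ℝ, lam ∈ Set.Ioc (0 : ℝ) 1 → lam ≤ |x - y| →
    ∀ φ : ℝ → ℝ, IsTestFunction r φ →
    ∀ Φ : 𝓢(ℝ, ℝ), (∀ z, Φ z = lam⁻¹ * φ (lam⁻¹ * (z - x))) →
      |ζ x Φ - ζ y Φ| ≤ C * lam ^ (α - γ) * |x - y| ^ γ

variable {r : ℕ} {α γ δ C : ℝ} {ζ : ℝ → 𝓢(ℝ, ℝ) →L[ℝ] ℝ}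

theorem IsCoherentFamily.const_nonneg (hζ : IsCoherentFamily r α γ C ζ) : 0 ≤ C := by
  have h_zero : IsTestFunction r fun _ ↦ 0 := ⟨contDiff_const, by simp, by simp⟩
  simpa using hζ.abs_apply_le 0 1 (by simp) _ h_zero 0 (by simp)

theorem IsCoherentFamily.abs_apply_le_of_lattice (hζ : IsCoherentFamily r α γ C ζ) (x : ℝ)
    {lam : ℝ} (hlam : lam ∈ Set.Ioc (0 : ℝ) 1) (k : ℤ) {φ : ℝ → ℝ} (hφ : IsTestFunction r φ)
    {Φ : 𝓢(ℝ, ℝ)} (hΦ : ∀ y, Φ y = lam⁻¹ * φ (lam⁻¹ * (y - (x + lam * k)))) :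
    |ζ x Φ| ≤ (1 + |(k : ℝ)| ^ γ) * (C * lam ^ α) := by
  have hlam₀ : 0 < lam := hlam.1
  have h_center := hζ.abs_apply_le (x + lam * k) lam hlam φ hφ Φ hΦ
  have h_nonneg : 0 ≤ C * lam ^ α := (abs_nonneg _).trans h_center
  rcases eq_or_ne k 0 with rfl | hk
  · rw [Int.cast_zero, mul_zero, add_zero] at h_center
    exact h_center.trans (le_mul_of_one_le_left h_nonneg (le_add_of_nonneg_right (by positivity)))
  · have h_dist : |x + lam * k - x| = lam * |(k : ℝ)| := by
      rw [add_sub_cancel_left, abs_mul, abs_of_pos hlam₀]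
    have hk_abs : 1 ≤ |(k : ℝ)| := by exact_mod_cast Int.one_le_abs hk
    have h_move : |ζ (x + lam * k) Φ - ζ x Φ| ≤ |(k : ℝ)| ^ γ * (C * lam ^ α) := by
      calc |ζ (x + lam * k) Φ - ζ x Φ|
          ≤ C * lam ^ (α - γ) * |x + lam * k - x| ^ γ :=
            hζ.abs_apply_sub_le _ x lam hlam
              (h_dist ▸ le_mul_of_one_le_right hlam₀.le hk_abs) φ hφ Φ hΦ
        _ = |(k : ℝ)| ^ γ * (C * lam ^ α) := by
            rw [h_dist, Real.mul_rpow hlam₀.le (abs_nonneg _), Real.rpow_sub hlam₀]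
            field_simp
    calc |ζ x Φ| = |ζ (x + lam * k) Φ - (ζ (x + lam * k) Φ - ζ x Φ)| := by rw [sub_sub_cancel]
      _ ≤ C * lam ^ α + |(k : ℝ)| ^ γ * (C * lam ^ α) :=
          (abs_sub _ _).trans (add_le_add h_center h_move)
      _ = (1 + |(k : ℝ)| ^ γ) * (C * lam ^ α) := by ring

theorem IsCoherentFamily.abs_apply_rescale_unitPiece_le (hζ : IsCoherentFamily r α γ C ζ)
    (hγ : 0 ≤ γ) (hδ : 0 ≤ δ) {A B : ℝ} (hA : 0 < A) (hB₀ : 0 < B)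
    (hB : ∀ j ≤ r, ∀ a b x, |iteratedDeriv j (smoothIndicator a b) x| ≤ B) {ψ : 𝓢(ℝ, ℝ)}
    (hψ : ∀ j ≤ r, ∀ x, (1 + |x|) ^ δ * |iteratedDeriv j ψ x| ≤ A) (x : ℝ) {lam : ℝ}
    (hlam : lam ∈ Set.Ioc (0 : ℝ) 1) (k : ℤ) :
    |ζ x (rescaleCLM x hlam.1.ne' (unitPiece k ψ))| ≤
      2 ^ (r + 1) * 2 ^ δ * B * A * (C * lam ^ α) * (1 + |(k : ℝ)|) ^ (γ - δ) := by
  have hlam₀ : 0 < lam := hlam.1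
  have hC₀ : 0 ≤ C := hζ.const_nonneg
  set M : ℝ := 2 ^ r * (B * (A * 2 ^ δ * (1 + |(k : ℝ)|) ^ (-δ))) with hM
  have hM₀ : 0 < M := by positivity
  set Φ := rescaleCLM x hlam.1.ne' (unitPiece k ψ) with hΦ
  have hΦ_apply (y : ℝ) : (M⁻¹ • Φ) y =
      lam⁻¹ * (M⁻¹ * unitPiece k ψ (lam⁻¹ * (y - (x + lam * k)) + k)) := by
    have h_arg : lam⁻¹ * (y - (x + lam * k)) + k = lam⁻¹ * (y - x) := by
      field_simp
      ring
    rw [h_arg, smul_apply, hΦ, rescaleCLM_apply, smul_eq_mul, mul_left_comm]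
  have h_pair : M⁻¹ * |ζ x Φ| ≤ (1 + |(k : ℝ)| ^ γ) * (C * lam ^ α) := by
    simpa [abs_mul, abs_of_pos hM₀] using hζ.abs_apply_le_of_lattice x hlam k
      (isTestFunction_unitPiece hδ hA hB₀ hB hψ k) hΦ_apply
  have h_growth : 1 + |(k : ℝ)| ^ γ ≤ 2 * (1 + |(k : ℝ)|) ^ γ := by
    rw [two_mul]
    gcongr
    · exact Real.one_le_rpow (le_add_of_nonneg_right (abs_nonneg _)) hγ
    · exact le_add_of_nonneg_left zero_le_one
  calc |ζ x Φ| ≤ M * ((1 + |(k : ℝ)| ^ γ) * (C * lam ^ α)) := (inv_mul_le_iff₀ hM₀).1 h_pair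
    _ ≤ M * (2 * (1 + |(k : ℝ)|) ^ γ * (C * lam ^ α)) := by gcongr
    _ = _ := by
        rw [hM, sub_eq_neg_add, Real.rpow_add (by positivity)]
        ring

theorem IsCoherentFamily.abs_apply_rescale_le (hζ : IsCoherentFamily r α γ C ζ)
    (hγ : 0 ≤ γ) (hγδ : γ - δ < -1) {A B : ℝ} (hA : 0 < A) (hB₀ : 0 < B)
    (hB : ∀ j ≤ r, ∀ a b x, |iteratedDeriv j (smoothIndicator a b) x| ≤ B) {ψ : 𝓢(ℝ, ℝ)}
    (hψ : ∀ j ≤ r, ∀ x, (1 + |x|) ^ δ * |iteratedDeriv j ψ x| ≤ A) (x : ℝ) {lam : ℝ}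
    (hlam : lam ∈ Set.Ioc (0 : ℝ) 1) :
    |ζ x (rescaleCLM x hlam.1.ne' ψ)| ≤
      2 ^ (r + 1) * 2 ^ δ * B * A * (C * lam ^ α) * ∑' k : ℤ, (1 + |(k : ℝ)|) ^ (γ - δ) := by
  have hC₀ : 0 ≤ C := hζ.const_nonneg
  have hlam₀ : 0 < lam := hlam.1
  have h_tendsto := (((ζ x ∘L rescaleCLM x hlam.1.ne').continuous.tendsto ψ).comp
    (tendsto_sum_unitPiece ψ)).abs
  refine le_of_tendsto' h_tendsto fun N ↦ ?_
  calc |ζ x (rescaleCLM x hlam.1.ne' (∑ k ∈ Finset.Ico (-N : ℤ) N, unitPiece k ψ))|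
      ≤ ∑ k ∈ Finset.Ico (-N : ℤ) N, |ζ x (rescaleCLM x hlam.1.ne' (unitPiece k ψ))| := by
        rw [map_sum, map_sum]
        exact Finset.abs_sum_le_sum_abs _ _
    _ ≤ ∑ k ∈ Finset.Ico (-N : ℤ) N,
          2 ^ (r + 1) * 2 ^ δ * B * A * (C * lam ^ α) * (1 + |(k : ℝ)|) ^ (γ - δ) :=
        Finset.sum_le_sum fun k _ ↦
          hζ.abs_apply_rescale_unitPiece_le hγ (by linarith) hA hB₀ hB hψ x hlam k
    _ ≤ 2 ^ (r + 1) * 2 ^ δ * B * A * (C * lam ^ α) *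
          ∑' k : ℤ, (1 + |(k : ℝ)|) ^ (γ - δ) := by
        rw [← Finset.mul_sum]
        gcongr
        exact (summable_one_add_abs_intCast_rpow hγδ).sum_le_tsum _ fun k _ ↦ by positivity

end CoherentFamily

theorem statement0_general (r : ℕ) {γ δ : ℝ} (hγ : 0 ≤ γ) (hγδ : γ - δ < -1) :
    ∃ K > 0, ∀ (α A : ℝ), 0 < A → ∀ ψ : 𝓢(ℝ, ℝ),
      (∀ j ≤ r, ∀ x, (1 + |x|) ^ δ * |iteratedDeriv j ψ x| ≤ A) →
      ∀ (ζ : ℝ → 𝓢(ℝ, ℝ) →L[ℝ] ℝ) (C : ℝ), IsCoherentFamily r α γ C ζ →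
      ∀ x : ℝ, ∀ lam ∈ Set.Ioc (0 : ℝ) 1,
      ∀ Ψ : 𝓢(ℝ, ℝ), (∀ y, Ψ y = lam⁻¹ * ψ (lam⁻¹ * (y - x))) →
        |ζ x Ψ| ≤ K * A * C * lam ^ α := by
  obtain ⟨B, hB₀, hB⟩ := exists_abs_iteratedDeriv_smoothIndicator_le r
  have h_tsum_pos : 0 < ∑' k : ℤ, (1 + |(k : ℝ)|) ^ (γ - δ) :=
    (summable_one_add_abs_intCast_rpow hγδ).tsum_pos (fun k ↦ by positivity) 0 (by simp)
  refine ⟨2 ^ (r + 1) * 2 ^ δ * B * ∑' k : ℤ, (1 + |(k : ℝ)|) ^ (γ - δ), by positivity, ?_⟩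
  intro α A hA ψ hψ ζ C hζ x lam hlam Ψ hΨ
  obtain rfl : Ψ = rescaleCLM x hlam.1.ne' ψ := by
    ext y
    rw [hΨ, rescaleCLM_apply]
  exact (hζ.abs_apply_rescale_le hγ hγδ hA hB₀ hB hψ x hlam).trans_eq (by ring)

/-- reconstruction-type bound for pairings against rescaled Schwartz
functions, given bounds against rescaled compactly supported test functions. -/
theorem statement0 (α γ δ : ℝ) (r : ℕ) (hγ : 0 ≤ γ) (hδ : 0 < δ)
    (hγδ : γ - δ < -1) (hr : |α| < (r : ℝ)) (A : ℝ) (hA : 0 < A) :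
    ∃ C' : ℝ, 0 < C' ∧
      ∀ ψ : SchwartzMap ℝ ℝ,
        (∀ j ≤ r, ∀ x : ℝ, (1 + |x|) ^ δ * |iteratedDeriv j (fun y => ψ y) x| ≤ A) →
        ∀ (ζ : ℝ → (SchwartzMap ℝ ℝ →L[ℝ] ℝ)) (C : ℝ), 0 < C →
        (∀ x : ℝ, ∀ lam : ℝ, lam ∈ Set.Ioc (0 : ℝ) 1 →
          ∀ φ : ℝ → ℝ, IsTestFunction r φ →
          ∀ Φ : SchwartzMap ℝ ℝ, (∀ y : ℝ, Φ y = lam⁻¹ * φ (lam⁻¹ * (y - x))) →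
          |ζ x Φ| ≤ C * lam ^ α) →
        (∀ x y : ℝ, ∀ lam : ℝ, lam ∈ Set.Ioc (0 : ℝ) 1 → lam ≤ |x - y| →
          ∀ φ : ℝ → ℝ, IsTestFunction r φ →
          ∀ Φ : SchwartzMap ℝ ℝ, (∀ z : ℝ, Φ z = lam⁻¹ * φ (lam⁻¹ * (z - x))) →
          |ζ x Φ - ζ y Φ| ≤ C * lam ^ (α - γ) * |x - y| ^ γ) →
        ∀ x : ℝ, ∀ lam : ℝ, lam ∈ Set.Ioc (0 : ℝ) 1 →
          ∀ Ψ : SchwartzMap ℝ ℝ, (∀ y : ℝ, Ψ y = lam⁻¹ * ψ (lam⁻¹ * (y - x))) →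
          |ζ x Ψ| ≤ C' * C * lam ^ α := by
  obtain ⟨K, hK, h_bound⟩ := statement0_general r hγ hγδ
  exact ⟨K * A, by positivity, fun ψ hψ ζ C _ h₁ h₂ ↦ h_bound α A hA ψ hψ ζ C ⟨h₁, h₂⟩⟩
end
end

section
/- Let T ∈ (0,1], β > −2, ρ ∈ (−2,0], let n ∈ ℕ satisfy β+1 ≤ n < β+2, let r ∈ ℕ satisfy r > |β|, and let C > 0. Let ζ : (0,T] → 𝒮′(ℝ) satisfy |⟨ζ(t), φ_x^λ⟩| ≤ C λ^β |t|₀^ρ for all t ∈ (0,T], x ∈ ℝ, λ ∈ (0,1] and φ ∈ B^r_0, with s ↦ ⟨ζ(s), φ⟩ measurable for each Schwartz φ. Define (P^{(n)} ∗ ζ)(t,x) := ∫₀^{t} ⟨ζ(s), P^{(n)}_{t−s}(x−·)⟩ ds. Then for every θ₁ ∈ (0, β−n+2) and every θ₂ ∈ ℝ with θ := θ₁ − θ₂ > 0, setting β̄ := β+2−n−θ₁ and ρ̄ := ρ+θ₂, there is a constant C′ independent of C, T and ζ such that sup_{(t,x)∈(0,T]×ℝ} |t|₀^{−(ρ̄+β̄)}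 |(P^{(n)} ∗ ζ)(t,x)| + sup_{(t,x)∈(0,T]×ℝ} sup_{(t̄,x̄)∈(0,T]×ℝ, (t̄,x̄)≠(t,x), |t̄−t|≤|t,t̄|₀²} |(P^{(n)} ∗ ζ)(t̄,x̄) − (P^{(n)} ∗ ζ)(t,x)| / (|t,t̄|₀^{ρ̄} ‖(t̄,x̄)−(t,x)‖_s^{β̄}) ≤ C′ C T^{θ/2}. -/
open Real MeasureTheory

noncomputable section

/-- The heat kernel `P_t(x) = (4πt)^{-1/2} e^{-x²/(4t)}` for `t > 0`, and `0`
for `t ≤ 0`. -/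
def heatKernel (t x : ℝ) : ℝ :=
  if 0 < t then (4 * Real.pi * t) ^ (-(1 : ℝ) / 2) * Real.exp (-(x ^ 2) / (4 * t)) else 0

/-- `|t|₀ = |t|^{1/2} ∧ 1`. -/
def tnorm (t : ℝ) : ℝ := min (Real.sqrt |t|) 1

/-- `|t,t̄|₀ = |t|₀ ∧ |t̄|₀`. -/
def tnorm2 (t s : ℝ) : ℝ := min (tnorm t) (tnorm s)

/-- The parabolic distance `‖z̄ - z‖_s = |t̄-t|^{1/2} ∨ |x̄-x|`. -/
def pnormS (z w : ℝ × ℝ) : ℝ := max (Real.sqrt |z.1 - w.1|) |z.2 - w.2|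

/-!
Cutting a rapidly decaying function into recentred pieces by a smooth partition of unity extends
the Hölder bound on `ζ(s)` from compactly supported test functions to Schwartz functions, with a
constant depending only on finitely many weighted derivatives. As `P^{(n)}_τ(x - ·)` is the
parabolic rescaling of a single Schwartz profile, its pairing with `ζ(s)` is of size
`s^{ρ/2} τ^{(β-n)/2}`. When `z` and `z'` are closer than `√τ`, the difference of the two rescaled
profiles is itself a rescaled function of relative size `‖z' - z‖_s / √τ`; when they are further
apart, the triangle inequality suffices. Hence the pairing is `κ`-Hölder in `z = (τ, x)` for every
`κ ∈ [0, 1]`, at the price of a factor `τ^{-κ/2}`. With `κ = β̄` all time singularities remain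
integrable, and the increment over `[t, t']` is the sum of the increment of the kernel integrated
over `(0, t)`, a Beta integral, and of the integral over `[t, t')`, where `s` is comparable to `t`.
-/

open Filter Topology SchwartzMap

lemma tnorm_eq_sqrt {t : ℝ} (ht : t ∈ Set.Icc (0 : ℝ) 1) : tnorm t = √t := by
  rw [tnorm, abs_of_nonneg ht.1, min_eq_left (Real.sqrt_le_one.2 ht.2)]

lemma tnorm_rpow {t : ℝ} (ht : t ∈ Set.Icc (0 : ℝ) 1) (p : ℝ) : tnorm t ^ p = t ^ (p / 2) := by
  rw [tnorm_eq_sqrt ht, Real.sqrt_eq_rpow, ← Real.rpow_mul ht.1, one_div_mul_eq_div]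

lemma tnorm2_comm (t s : ℝ) : tnorm2 t s = tnorm2 s t := min_comm _ _

lemma tnorm2_of_le {s t : ℝ} (hs : 0 ≤ s) (hst : s ≤ t) : tnorm2 s t = tnorm s := by
  refine min_eq_left (min_le_min_right _ (Real.sqrt_le_sqrt ?_))
  rwa [abs_of_nonneg hs, abs_of_nonneg (hs.trans hst)]

lemma le_two_mul_of_abs_sub_le_tnorm2_sq {t t' : ℝ} (ht : t ∈ Set.Icc (0 : ℝ) 1) (htt' : t ≤ t')
    (h : |t' - t| ≤ tnorm2 t t' ^ 2) : t' ≤ 2 * t := by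
  rw [tnorm2_of_le ht.1 htt', tnorm_eq_sqrt ht, Real.sq_sqrt ht.1] at h
  linarith [le_abs_self (t' - t)]

lemma pnormS_nonneg (z w : ℝ × ℝ) : 0 ≤ pnormS z w := le_max_of_le_right (abs_nonneg _)

lemma pnormS_comm (z w : ℝ × ℝ) : pnormS z w = pnormS w z := by
  rw [pnormS, pnormS, abs_sub_comm z.1, abs_sub_comm z.2]

lemma pnormS_pos {z w : ℝ × ℝ} (h : z ≠ w) : 0 < pnormS z w := by
  rw [pnormS, lt_max_iff, Real.sqrt_pos, abs_pos, abs_pos, sub_ne_zero, sub_ne_zero, ← not_and_or]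
  exact fun h' => h (Prod.ext h'.1 h'.2)

lemma sqrt_sub_le_pnormS {t t' : ℝ} (h : t ≤ t') (x x' : ℝ) :
    √(t' - t) ≤ pnormS (t', x') (t, x) := by
  rw [← abs_of_nonneg (sub_nonneg.2 h)]
  exact le_max_left _ _

/-! ### Functions with weighted derivative bounds -/

/-- The weighted `C^r` bound `sup_{j ≤ r} sup_u (1 + |u|)^k |g^{(j)}(u)| ≤ N`: the quantitative
form, with constants tracked, in which the decay of Schwartz functions is used. -/
def DecayBound (k r : ℕ) (N : ℝ) (g : ℝ → ℝ) : Prop :=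
  ∀ j ≤ r, ∀ u, (1 + |u|) ^ k * |iteratedDeriv j g u| ≤ N

lemma one_add_abs_le_mul (u v : ℝ) : 1 + |u| ≤ (1 + |u + v|) * (1 + |v|) := by
  have h : |u| ≤ |u + v| + |v| := by simpa using abs_sub (u + v) v
  nlinarith [mul_nonneg (abs_nonneg (u + v)) (abs_nonneg v)]

lemma abs_iteratedDeriv_mul_le {f g : ℝ → ℝ} {l : ℕ} {y A B : ℝ} (hf : ContDiff ℝ l f)
    (hg : ContDiff ℝ l g) (hA : ∀ i ≤ l, |iteratedDeriv i f y| ≤ A)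
    (hB : ∀ i ≤ l, |iteratedDeriv i g y| ≤ B) :
    |iteratedDeriv l (fun z => f z * g z) y| ≤ 2 ^ l * (A * B) := by
  have hA₀ : 0 ≤ A := (abs_nonneg _).trans (hA 0 l.zero_le)
  have leibniz := norm_iteratedFDeriv_mul_le (𝕜 := ℝ) hf hg y le_rfl
  simp only [norm_iteratedFDeriv_eq_norm_iteratedDeriv, Real.norm_eq_abs] at leibniz
  calc _ ≤ _ := leibniz
    _ ≤ ∑ i ∈ Finset.range (l + 1), (l.choose i : ℝ) * (A * B) := by
        refine Finset.sum_le_sum fun i hi => ?_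
        rw [mul_assoc]
        gcongr
        · exact hA i (Finset.mem_range_succ_iff.1 hi)
        · exact hB (l - i) (l.sub_le i)
    _ = 2 ^ l * (A * B) := by
        rw [← Finset.sum_mul]
        exact_mod_cast congrArg (fun m : ℕ => (m : ℝ) * (A * B)) (Nat.sum_range_choose l)

namespace DecayBound

variable {k l r : ℕ} {M N : ℝ} {f g : ℝ → ℝ}

lemma nonneg (hf : DecayBound k r N f) : 0 ≤ N :=
  (by positivity : (0 : ℝ) ≤ (1 + |0|) ^ k * |iteratedDeriv 0 f 0|).trans (hf 0 r.zero_le 0)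

lemma mono_const (hf : DecayBound k r M f) (hMN : M ≤ N) : DecayBound k r N f :=
  fun j hj u => (hf j hj u).trans hMN

lemma abs_le (hf : DecayBound k r N f) {j : ℕ} (hj : j ≤ r) (u : ℝ) :
    |iteratedDeriv j f u| ≤ N / (1 + |u|) ^ k := by
  rw [le_div_iff₀' (by positivity)]
  exact hf j hj u

lemma of_le {k' r' : ℕ} (hf : DecayBound k r N f) (hk : k' ≤ k) (hr : r' ≤ r) :
    DecayBound k' r' N f := fun j hj u =>
  le_trans (by gcongr; linarith [abs_nonneg u]) (hf j (hj.trans hr) u)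

lemma sub (hf : DecayBound k r M f) (hg : DecayBound k r N g) (hfc : ContDiff ℝ r f)
    (hgc : ContDiff ℝ r g) : DecayBound k r (M + N) (fun u => f u - g u) := fun j hj u => by
  have hj' : (j : WithTop ℕ∞) ≤ r := by exact_mod_cast hj
  rw [iteratedDeriv_fun_sub (hfc.of_le hj').contDiffAt (hgc.of_le hj').contDiffAt]
  calc _ ≤ (1 + |u|) ^ k * (|iteratedDeriv j f u| + |iteratedDeriv j g u|) := by
        gcongr
        exact abs_sub _ _
    _ ≤ M + N := by rw [mul_add]; exact add_le_add (hf j hj u) (hg j hj u)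

lemma mul (hf : DecayBound k r M f) (hg : DecayBound l r N g) (hfc : ContDiff ℝ r f)
    (hgc : ContDiff ℝ r g) : DecayBound (k + l) r (2 ^ r * (M * N)) (fun u => f u * g u) :=
  fun j hj u => by
  have hj' : (j : WithTop ℕ∞) ≤ r := by exact_mod_cast hj
  have hM := hf.nonneg
  have hN := hg.nonneg
  have h := abs_iteratedDeriv_mul_le (hfc.of_le hj') (hgc.of_le hj')
    (fun i hi => hf.abs_le (hi.trans hj) u) (fun i hi => hg.abs_le (hi.trans hj) u)
  calc _ ≤ (1 + |u|) ^ (k + l) * (2 ^ j * (M / (1 + |u|) ^ k * (N / (1 + |u|) ^ l))) := by gcongr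
    _ = 2 ^ j * (M * N) := by rw [pow_add]; field_simp
    _ ≤ 2 ^ r * (M * N) := by gcongr; norm_num

lemma shift (hf : DecayBound 0 r N f) (a : ℝ) : DecayBound 0 r N (fun u => f (u + a)) :=
  fun j hj u => by
  rw [iteratedDeriv_comp_add_const]
  simpa using hf j hj (u + a)

lemma shift_mul (hf : DecayBound k r M f) (hg : DecayBound k r N g) (hfc : ContDiff ℝ r f)
    (hgc : ContDiff ℝ r g) (a : ℝ) :
    DecayBound 0 r (2 ^ r * (M * N) / (1 + |a|) ^ k) (fun u => f (u + a) * g u) := fun j hj u => by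
  have hj' : (j : WithTop ℕ∞) ≤ r := by exact_mod_cast hj
  have hM := hf.nonneg
  have hN := hg.nonneg
  have hfa : ∀ i ≤ j, |iteratedDeriv i (fun u => f (u + a)) u| ≤ M / (1 + |u + a|) ^ k :=
    fun i hi => by
      rw [iteratedDeriv_comp_add_const]
      exact hf.abs_le (hi.trans hj) (u + a)
  have h := abs_iteratedDeriv_mul_le ((hfc.comp (contDiff_id.add contDiff_const)).of_le hj')
    (hgc.of_le hj') hfa (fun i hi => hg.abs_le (hi.trans hj) u)
  rw [pow_zero, one_mul]
  calc _ ≤ 2 ^ j * (M / (1 + |u + a|) ^ k * (N / (1 + |u|) ^ k)) := h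
    _ = 2 ^ j * (M * N) / ((1 + |u + a|) * (1 + |u|)) ^ k := by rw [mul_pow]; field_simp
    _ ≤ 2 ^ r * (M * N) / (1 + |a|) ^ k := by
        gcongr
        · norm_num
        · rw [add_comm u a]
          exact one_add_abs_le_mul a u

end DecayBound

lemma exists_decayBound_schwartz (F : 𝓢(ℝ, ℝ)) (k r : ℕ) : ∃ N, 0 < N ∧ DecayBound k r N F := by
  let C : ℝ := 2 ^ k * (Finset.Iic (k, r)).sup (fun m => SchwartzMap.seminorm ℝ m.1 m.2) F
  have hC : 0 ≤ C := by positivity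
  refine ⟨C + 1, add_pos_of_nonneg_of_pos hC one_pos, fun j hj u => ?_⟩
  have := SchwartzMap.one_add_le_sup_seminorm_apply (𝕜 := ℝ) (m := (k, r)) le_rfl hj F u
  rw [norm_iteratedFDeriv_eq_norm_iteratedDeriv] at this
  simp only [Real.norm_eq_abs] at this
  linarith

lemma hasDerivAt_iteratedDeriv {f : ℝ → ℝ} {j : ℕ} (hf : ContDiff ℝ (j + 1) f) (u : ℝ) :
    HasDerivAt (iteratedDeriv j f) (iteratedDeriv (j + 1) f u) u := by
  rw [iteratedDeriv_succ]
  exact (hf.differentiable_iteratedDeriv j (by exact_mod_cast j.lt_succ_self) u).hasDerivAt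

lemma hasDerivAt_dilation {f : ℝ → ℝ} {j : ℕ} (hf : ContDiff ℝ (j + 1) f) (m : ℕ) (u v : ℝ) :
    HasDerivAt (fun v => v ^ m * iteratedDeriv j f (v * u))
      (m * v ^ (m - 1) * iteratedDeriv j f (v * u) +
        v ^ m * (iteratedDeriv (j + 1) f (v * u) * u)) v :=
  (hasDerivAt_pow m v).fun_mul
    (HasDerivAt.comp (h₂ := iteratedDeriv j f) v (hasDerivAt_iteratedDeriv hf (v * u))
      (hasDerivAt_mul_const u))

namespace DecayBound

variable {k r : ℕ} {N : ℝ} {f : ℝ → ℝ}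

lemma translate_sub (hf : DecayBound k (r + 1) N f) (hfc : ContDiff ℝ (r + 1) f) {a : ℝ}
    (ha : |a| ≤ 1) : DecayBound k r (2 ^ k * N * |a|) (fun u => f (u - a) - f u) :=
  fun j hj u => by
  have hjr : (j : WithTop ℕ∞) + 1 ≤ (r : WithTop ℕ∞) + 1 := by gcongr
  have hj' : (j : WithTop ℕ∞) ≤ (r : WithTop ℕ∞) + 1 := le_self_add.trans hjr
  have deriv_le : ∀ v ∈ Set.Icc (u - 1) (u + 1),
      ‖iteratedDeriv (j + 1) f v‖ ≤ 2 ^ k * N / (1 + |u|) ^ k := fun v hv => by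
    have hv' : |v - u| ≤ 1 := by rw [_root_.abs_le]; constructor <;> linarith [hv.1, hv.2]
    have hu : 1 + |u| ≤ 2 * (1 + |v|) := by
      have := abs_sub_abs_le_abs_sub u v
      rw [abs_sub_comm] at this
      linarith [abs_nonneg v]
    rw [le_div_iff₀' (by positivity), Real.norm_eq_abs]
    calc _ ≤ (2 * (1 + |v|)) ^ k * |iteratedDeriv (j + 1) f v| := by gcongr
      _ = 2 ^ k * ((1 + |v|) ^ k * |iteratedDeriv (j + 1) f v|) := by rw [mul_pow, mul_assoc]
      _ ≤ 2 ^ k * N := by gcongr; exact hf (j + 1) (by omega) v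
  have mvt := (convex_Icc (u - 1) (u + 1)).norm_image_sub_le_of_norm_hasDerivWithin_le
    (fun v _ => (hasDerivAt_iteratedDeriv (hfc.of_le hjr) v).hasDerivWithinAt) deriv_le
    (x := u) (y := u - a) (by constructor <;> linarith)
    (by rw [_root_.abs_le] at ha; constructor <;> linarith [ha.1, ha.2])
  rw [Real.norm_eq_abs, Real.norm_eq_abs, sub_sub_cancel_left, abs_neg, div_mul_eq_mul_div,
    le_div_iff₀' (by positivity)] at mvt
  have hfa : ContDiff ℝ (r + 1) (fun u => f (u - a)) := hfc.comp (contDiff_id.sub contDiff_const)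
  rw [iteratedDeriv_fun_sub (hfa.contDiffAt.of_le hj') (hfc.contDiffAt.of_le hj'),
    iteratedDeriv_comp_sub_const]
  exact mvt

lemma dilation_deriv_le (hf : DecayBound (k + 1) r N f) {j : ℕ} (hj : j + 1 ≤ r) (m : ℕ)
    {v : ℝ} (hv : v ∈ Set.Icc (1 / 2 : ℝ) 1) (u : ℝ) :
    (1 + |u|) ^ k * |m * v ^ (m - 1) * iteratedDeriv j f (v * u) +
        v ^ m * (iteratedDeriv (j + 1) f (v * u) * u)| ≤ 2 ^ (k + 1) * (m + 1) * N := by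
  obtain ⟨hv₁, hv₂⟩ := hv
  have hv₀ : 0 < v := by linarith
  have hu : 1 + |u| ≤ 2 * (1 + |v * u|) := by
    rw [abs_mul, abs_of_pos hv₀]
    nlinarith [abs_nonneg u]
  have weight : ∀ i ≤ r, (1 + |u|) ^ (k + 1) * |iteratedDeriv i f (v * u)| ≤ 2 ^ (k + 1) * N :=
    fun i hi => calc
      _ ≤ (2 * (1 + |v * u|)) ^ (k + 1) * |iteratedDeriv i f (v * u)| := by gcongr
      _ = 2 ^ (k + 1) * ((1 + |v * u|) ^ (k + 1) * |iteratedDeriv i f (v * u)|) := by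
          rw [mul_pow, mul_assoc]
      _ ≤ 2 ^ (k + 1) * N := by gcongr; exact hf i hi (v * u)
  have term₁ : |m * v ^ (m - 1) * iteratedDeriv j f (v * u)| ≤
      m * ((1 + |u|) * |iteratedDeriv j f (v * u)|) := by
    rw [abs_mul, abs_mul, abs_of_nonneg (Nat.cast_nonneg m), abs_of_pos (pow_pos hv₀ _), mul_assoc]
    gcongr
    exact (pow_le_one₀ hv₀.le hv₂).trans (by linarith [abs_nonneg u])
  have term₂ : |v ^ m * (iteratedDeriv (j + 1) f (v * u) * u)| ≤
      (1 + |u|) * |iteratedDeriv (j + 1) f (v * u)| := by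
    rw [abs_mul, abs_mul, abs_of_pos (pow_pos hv₀ _), mul_comm |iteratedDeriv _ _ _|, ← mul_assoc]
    gcongr
    nlinarith [pow_le_one₀ (n := m) hv₀.le hv₂, abs_nonneg u]
  calc _ ≤ (1 + |u|) ^ k * (m * ((1 + |u|) * |iteratedDeriv j f (v * u)|) +
          (1 + |u|) * |iteratedDeriv (j + 1) f (v * u)|) := by
        gcongr
        exact (abs_add_le _ _).trans (add_le_add term₁ term₂)
    _ = m * ((1 + |u|) ^ (k + 1) * |iteratedDeriv j f (v * u)|) +
          (1 + |u|) ^ (k + 1) * |iteratedDeriv (j + 1) f (v * u)| := by ring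
    _ ≤ m * (2 ^ (k + 1) * N) + 2 ^ (k + 1) * N := by
        exact add_le_add
          (mul_le_mul_of_nonneg_left (weight j (by omega)) m.cast_nonneg) (weight (j + 1) hj)
    _ = 2 ^ (k + 1) * (m + 1) * N := by ring

lemma dilate_sub (hf : DecayBound (k + 1) (r + 1) N f) (hfc : ContDiff ℝ (r + 1) f) (m : ℕ) {c : ℝ}
    (hc : c ∈ Set.Icc (1 / 2 : ℝ) 1) :
    DecayBound k r (2 ^ (k + 1) * (m + r + 1) * N * (1 - c))
      (fun u => c ^ m * f (c * u) - f u) := fun j hj u => by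
  have hjr : (j : WithTop ℕ∞) + 1 ≤ (r : WithTop ℕ∞) + 1 := by gcongr
  have hfj : ContDiff ℝ j f := hfc.of_le (le_self_add.trans hjr)
  have hN := hf.nonneg
  have deriv_le : ∀ v ∈ Set.Icc (1 / 2 : ℝ) 1, ‖((m + j : ℕ) : ℝ) * v ^ (m + j - 1) *
      iteratedDeriv j f (v * u) + v ^ (m + j) * (iteratedDeriv (j + 1) f (v * u) * u)‖ ≤
      2 ^ (k + 1) * (m + r + 1) * N / (1 + |u|) ^ k := fun v hv => by
    rw [le_div_iff₀' (by positivity)]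
    refine (hf.dilation_deriv_le (by omega) (m + j) hv u).trans ?_
    push_cast
    gcongr
  have mvt := (convex_Icc (1 / 2 : ℝ) 1).norm_image_sub_le_of_norm_hasDerivWithin_le
    (fun v _ => (hasDerivAt_dilation (hfc.of_le hjr) (m + j) u v).hasDerivWithinAt) deriv_le
    (x := 1) (y := c) (by norm_num) hc
  rw [Real.norm_eq_abs, Real.norm_eq_abs, abs_sub_comm c 1, abs_of_nonneg (sub_nonneg.2 hc.2),
    div_mul_eq_mul_div, le_div_iff₀' (by positivity), one_pow, one_mul, one_mul] at mvt
  have hfcu : ContDiff ℝ j (fun u => f (c * u)) := hfj.comp (contDiff_const.mul contDiff_id)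
  rw [iteratedDeriv_fun_sub (contDiff_const.mul hfcu).contDiffAt hfj.contDiffAt,
    iteratedDeriv_const_mul_field, iteratedDeriv_comp_const_mul hfj, ← mul_assoc, ← pow_add]
  exact mvt

end DecayBound

/-! ### A partition of unity by integer translates -/

lemma exists_decayBound_smoothTransition (r : ℕ) :
    ∃ B, DecayBound 0 r B Real.smoothTransition := by
  have bound (l : ℕ) : ∃ B, ∀ u, |iteratedDeriv l Real.smoothTransition u| ≤ B := by
    have hcont : Continuous (iteratedDeriv l Real.smoothTransition) :=
      Real.smoothTransition.contDiff.continuous_iteratedDeriv l le_rfl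
    cases l with
    | zero =>
      refine ⟨1, fun u => ?_⟩
      rw [iteratedDeriv_zero, abs_of_nonneg (Real.smoothTransition.nonneg u)]
      exact Real.smoothTransition.le_one u
    | succ l =>
      refine hcont.bounded_above_of_compact_support (HasCompactSupport.intro
        (isCompact_Icc (a := (0 : ℝ)) (b := 1)) fun u hu => ?_)
      obtain ⟨c, hc⟩ : ∃ c : ℝ, Real.smoothTransition =ᶠ[𝓝 u] fun _ => c := by
        rcases not_and_or.1 hu with hu | hu <;> rw [not_le] at hu
        · refine ⟨0, ?_⟩
          filter_upwards [gt_mem_nhds hu] with z hz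
          exact Real.smoothTransition.zero_of_nonpos hz.le
        · refine ⟨1, ?_⟩
          filter_upwards [lt_mem_nhds hu] with z hz
          exact Real.smoothTransition.one_of_one_le hz.le
      rw [hc.iteratedDeriv_eq, iteratedDeriv_const, if_neg l.succ_ne_zero]
  choose B hB using bound
  refine ⟨∑ l ∈ Finset.range (r + 1), |B l|, fun j hj u => ?_⟩
  rw [pow_zero, one_mul]
  exact (hB j u).trans <| (le_abs_self _).trans <| Finset.single_le_sum (f := fun l => |B l|)
    (fun _ _ => abs_nonneg _) (Finset.mem_range_succ_iff.2 hj)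

/-- A smooth bump supported in `[-1, 1]` whose integer translates form a partition of unity. -/
def unitBump (u : ℝ) : ℝ := Real.smoothTransition (u + 1) - Real.smoothTransition u

lemma contDiff_unitBump {n : ℕ∞} : ContDiff ℝ n unitBump :=
  (Real.smoothTransition.contDiff.comp (contDiff_id.add contDiff_const)).sub
    Real.smoothTransition.contDiff

lemma unitBump_eq_zero {u : ℝ} (hu : u ∉ Set.Icc (-1 : ℝ) 1) : unitBump u = 0 := by
  unfold unitBump
  rcases not_and_or.1 hu with hu | hu <;> rw [not_le] at hu
  · rw [Real.smoothTransition.zero_of_nonpos (by linarith),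
      Real.smoothTransition.zero_of_nonpos (by linarith), sub_zero]
  · rw [Real.smoothTransition.one_of_one_le (by linarith),
      Real.smoothTransition.one_of_one_le hu.le, sub_self]

lemma hasCompactSupport_unitBump : HasCompactSupport unitBump :=
  HasCompactSupport.intro isCompact_Icc fun _ => unitBump_eq_zero

lemma exists_decayBound_unitBump (k r : ℕ) : ∃ B, 0 < B ∧ DecayBound k r B unitBump :=
  exists_decayBound_schwartz (hasCompactSupport_unitBump.toSchwartzMap contDiff_unitBump) k r

lemma sum_unitBump (m : ℕ) (u : ℝ) :
    ∑ i ∈ Finset.range (2 * m + 1), unitBump (u - ((i : ℝ) - m)) =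
      Real.smoothTransition (u + (m + 1)) - Real.smoothTransition (u - m) := by
  have telescope := Finset.sum_range_sub'
    (fun i : ℕ => Real.smoothTransition (u + (m + 1) - i)) (2 * m + 1)
  convert telescope using 2
  · unfold unitBump
    push_cast
    congr 2 <;> ring
  · simp
  · push_cast
    congr 1
    ring

lemma tendsto_zero_of_decayBound {f : ℕ → 𝓢(ℝ, ℝ)}
    (hbound : ∀ k r, ∃ N, ∀ m, DecayBound k r N (f m))
    (hzero : ∀ (m : ℕ) (u : ℝ), |u| < m → f m u = 0) : Tendsto f atTop (𝓝 0) := by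
  rw [(schwartz_withSeminorms ℝ ℝ ℝ).tendsto_nhds]
  rintro ⟨k, l⟩ ε hε
  obtain ⟨N, hN⟩ := hbound (k + 1) l
  have hN₀ : 0 ≤ N := (hN 0).nonneg
  have seminorm_le (m : ℕ) : SchwartzMap.seminorm ℝ k l (f m) ≤ N / (1 + m) := by
    refine SchwartzMap.seminorm_le_bound' ℝ k l _ (by positivity) fun u => ?_
    rw [Real.norm_eq_abs]
    rcases lt_or_ge |u| m with hu | hu
    · have hev : ⇑(f m) =ᶠ[𝓝 u] fun _ => 0 := by
        filter_upwards [continuous_abs.continuousAt.eventually_lt continuousAt_const hu] with z hz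
        exact hzero m z hz
      rw [hev.iteratedDeriv_eq, iteratedDeriv_const, ite_self, abs_zero, mul_zero]
      positivity
    · rw [le_div_iff₀' (by positivity)]
      calc _ ≤ (1 + |u|) * ((1 + |u|) ^ k * |iteratedDeriv l (f m) u|) := by
            gcongr
            linarith [abs_nonneg u]
        _ = (1 + |u|) ^ (k + 1) * |iteratedDeriv l (f m) u| := by ring
        _ ≤ N := hN m l le_rfl u
  have hlim : Tendsto (fun m : ℕ => N / (1 + (m : ℝ))) atTop (𝓝 0) :=
    tendsto_const_nhds.div_atTop (tendsto_atTop_add_const_left _ _ tendsto_natCast_atTop_atTop)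
  filter_upwards [hlim.eventually_lt_const hε] with m hm
  rw [sub_zero]
  exact (seminorm_le m).trans_lt hm

/-- The part `u ↦ g (u + a) χ(u)` of `g` near `a`, recentred at the origin, where `χ` is
`unitBump`. -/
def localPiece (g : 𝓢(ℝ, ℝ)) (a : ℝ) : 𝓢(ℝ, ℝ) :=
  (hasCompactSupport_unitBump.mul_left (f := fun u => g (u + a))).toSchwartzMap
    (((g.smooth ⊤).comp (contDiff_id.add contDiff_const)).mul contDiff_unitBump)

lemma localPiece_apply (g : 𝓢(ℝ, ℝ)) (a u : ℝ) : localPiece g a u = g (u + a) * unitBump u :=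
  rfl

lemma tendsto_sum_localPiece (g : 𝓢(ℝ, ℝ)) :
    Tendsto (fun m : ℕ => ∑ i ∈ Finset.range (2 * m + 1),
      (localPiece g ((i : ℝ) - m)).compSubConstCLM ℝ ((i : ℝ) - m)) atTop (𝓝 g) := by
  rw [← tendsto_sub_nhds_zero_iff]
  let w (m : ℕ) (u : ℝ) : ℝ :=
    Real.smoothTransition (u + (m + 1)) - Real.smoothTransition (u + -m) - 1
  have error_apply (m : ℕ) : ⇑(∑ i ∈ Finset.range (2 * m + 1),
      (localPiece g ((i : ℝ) - m)).compSubConstCLM ℝ ((i : ℝ) - m) - g) = fun u => g u * w m u := by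
    funext u
    simp only [sub_apply, sum_apply, SchwartzMap.compSubConstCLM_apply,
      localPiece_apply, sub_add_cancel, ← Finset.mul_sum, sum_unitBump, w]
    ring_nf
  refine tendsto_zero_of_decayBound (fun k r => ?_) fun m u hu => ?_
  · obtain ⟨N, -, hN⟩ := exists_decayBound_schwartz g k r
    obtain ⟨B, hB⟩ := exists_decayBound_smoothTransition r
    have hS (a : ℝ) : ContDiff ℝ r fun u => Real.smoothTransition (u + a) :=
      Real.smoothTransition.contDiff.comp (contDiff_id.add contDiff_const)
    have hone : DecayBound 0 r 1 fun _ => 1 := fun j _ u => by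
      rw [iteratedDeriv_const]
      split_ifs <;> simp
    refine ⟨2 ^ r * (N * (B + B + 1)), fun m => ?_⟩
    rw [error_apply m]
    exact hN.mul
      (((hB.shift _).sub (hB.shift _) (hS _) (hS _)).sub hone ((hS _).sub (hS _)) contDiff_const)
      (g.smooth r) (((hS _).sub (hS _)).sub contDiff_const)
  · rw [_root_.abs_lt] at hu
    rw [error_apply m]
    simp only [w]
    rw [Real.smoothTransition.one_of_one_le (by linarith),
      Real.smoothTransition.zero_of_nonpos (by linarith), sub_zero, sub_self, mul_zero]

/-! ### Testing a distribution against Schwartz functions -/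

lemma decayBound_localPiece {g : 𝓢(ℝ, ℝ)} {k r : ℕ} {N B : ℝ} (hg : DecayBound k r N g)
    (hB : DecayBound k r B unitBump) (a : ℝ) :
    DecayBound 0 r (2 ^ r * (N * B) / (1 + |a|) ^ k) (localPiece g a) :=
  hg.shift_mul hB (g.smooth r) contDiff_unitBump a

lemma isTestFunction_inv_smul_localPiece {g : 𝓢(ℝ, ℝ)} {r : ℕ} {a c : ℝ} (hc : 0 < c)
    (h : DecayBound 0 r c (localPiece g a)) :
    IsTestFunction r (c⁻¹ • localPiece g a : 𝓢(ℝ, ℝ)) := by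
  refine ⟨SchwartzMap.smooth _ ⊤, fun u hu => ?_, fun j hj u => ?_⟩
  · rw [smul_apply, localPiece_apply, unitBump_eq_zero hu, mul_zero, smul_zero]
  · have hbound := h j hj u
    rw [pow_zero, one_mul] at hbound
    change |iteratedDeriv j (fun u => c⁻¹ * localPiece g a u) u| ≤ 1
    rw [iteratedDeriv_const_mul_field, abs_mul, abs_of_pos (inv_pos.2 hc), inv_mul_le_iff₀ hc,
      mul_one]
    exact hbound

lemma summable_one_add_abs_int_inv_sq : Summable fun k : ℤ => ((1 + |(k : ℝ)|) ^ 2)⁻¹ := by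
  refine Summable.of_norm_bounded_eventually (Real.summable_one_div_int_pow.2 one_lt_two) ?_
  filter_upwards [(Set.finite_singleton (0 : ℤ)).compl_mem_cofinite] with k hk
  have hk' : (0 : ℝ) < |(k : ℝ)| := abs_pos.2 (Int.cast_ne_zero.2 hk)
  rw [Real.norm_of_nonneg (by positivity), one_div, ← sq_abs (k : ℝ)]
  gcongr
  linarith

lemma sum_le_tsum_int {f : ℤ → ℝ} (hf : Summable f) (hf₀ : ∀ k, 0 ≤ f k) (m n : ℕ) :
    ∑ i ∈ Finset.range n, f ((i : ℤ) - m) ≤ ∑' k, f k := by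
  have hinj : Function.Injective fun i : ℕ => (i : ℤ) - (m : ℤ) := fun i j h => by simpa using h
  rw [← Finset.sum_image (f := f) (g := fun i : ℕ => (i : ℤ) - (m : ℤ)) hinj.injOn]
  exact hf.sum_le_tsum _ fun k _ => hf₀ k

lemma abs_translate_localPiece_le {r : ℕ} {L : 𝓢(ℝ, ℝ) →L[ℝ] ℝ} {M : ℝ}
    (hL : ∀ x, ∀ φ : 𝓢(ℝ, ℝ), IsTestFunction r φ → |L (φ.compSubConstCLM ℝ x)| ≤ M)
    {g : 𝓢(ℝ, ℝ)} {a c : ℝ} (h : DecayBound 0 r c (localPiece g a)) (x : ℝ) :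
    |L ((localPiece g a).compSubConstCLM ℝ x)| ≤ c * M := by
  rcases h.nonneg.eq_or_lt with rfl | hc
  · have hzero : localPiece g a = 0 := by
      ext u
      simpa using h 0 r.zero_le u
    simp [hzero]
  have htest := hL x _ (isTestFunction_inv_smul_localPiece hc h)
  rwa [map_smul, map_smul, smul_eq_mul, abs_mul, abs_of_pos (inv_pos.2 hc),
    inv_mul_le_iff₀ hc] at htest

lemma exists_abs_apply_le_of_decayBound (r : ℕ) : ∃ K, 0 < K ∧
    ∀ (L : 𝓢(ℝ, ℝ) →L[ℝ] ℝ) (M : ℝ),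
      (∀ x, ∀ φ : 𝓢(ℝ, ℝ), IsTestFunction r φ → |L (φ.compSubConstCLM ℝ x)| ≤ M) →
      ∀ (g : 𝓢(ℝ, ℝ)) (N : ℝ), DecayBound 2 r N g → |L g| ≤ K * N * M := by
  obtain ⟨B, hB₀, hB⟩ := exists_decayBound_unitBump 2 r
  let Z := ∑' k : ℤ, ((1 + |(k : ℝ)|) ^ 2)⁻¹
  have hZ : 0 < Z := summable_one_add_abs_int_inv_sq.tsum_pos (fun k => by positivity) 0 (by simp)
  refine ⟨2 ^ r * B * Z, by positivity, fun L M hL g N hg => ?_⟩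
  have hN := hg.nonneg
  have hM : 0 ≤ M := (abs_nonneg _).trans <| hL 0 _ <| isTestFunction_inv_smul_localPiece
    (by positivity) ((decayBound_localPiece hg hB 0).mono_const (lt_add_one _).le)
  refine le_of_tendsto ((L.continuous.tendsto g).comp (tendsto_sum_localPiece g)).abs
    (Eventually.of_forall fun m => ?_)
  rw [Function.comp_apply, map_sum]
  calc _ ≤ ∑ i ∈ Finset.range (2 * m + 1),
          2 ^ r * (N * B) / (1 + |(i : ℝ) - m|) ^ 2 * M :=
        (Finset.abs_sum_le_sum_abs _ _).trans <| Finset.sum_le_sum fun i _ =>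
          abs_translate_localPiece_le hL (decayBound_localPiece hg hB _) _
    _ = 2 ^ r * B * N * M *
          ∑ i ∈ Finset.range (2 * m + 1), ((1 + |(((i : ℤ) - m : ℤ) : ℝ)|) ^ 2)⁻¹ := by
        rw [Finset.mul_sum]
        push_cast
        exact Finset.sum_congr rfl fun i _ => by ring
    _ ≤ 2 ^ r * B * N * M * Z := by
        gcongr
        exact sum_le_tsum_int summable_one_add_abs_int_inv_sq (fun k => by positivity) m _
    _ = 2 ^ r * B * Z * N * M := by ring

/-- The rescaling `F ↦ F_x^λ`, `F_x^λ(y) = λ⁻¹ F(λ⁻¹ (y - x))`, as an operator on Schwartz space. -/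
def rescale (x lam : ℝ) (hlam : lam ≠ 0) : 𝓢(ℝ, ℝ) →L[ℝ] 𝓢(ℝ, ℝ) :=
  lam⁻¹ • (SchwartzMap.compSubConstCLM ℝ x ∘L SchwartzMap.compCLMOfContinuousLinearEquiv ℝ
    (ContinuousLinearEquiv.unitsEquivAut ℝ (Units.mk0 lam⁻¹ (inv_ne_zero hlam))))

lemma rescale_apply (x : ℝ) {lam : ℝ} (hlam : lam ≠ 0) (F : 𝓢(ℝ, ℝ)) (y : ℝ) :
    rescale x lam hlam F y = lam⁻¹ * F (lam⁻¹ * (y - x)) := by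
  simp [rescale, mul_comm (y - x)]

lemma rescale_compSubConstCLM (x z : ℝ) {lam : ℝ} (hlam : lam ≠ 0) (F : 𝓢(ℝ, ℝ)) :
    rescale x lam hlam (F.compSubConstCLM ℝ z) = rescale (x + lam * z) lam hlam F := by
  ext y
  rw [rescale_apply, rescale_apply, SchwartzMap.compSubConstCLM_apply]
  congr 2
  field_simp
  ring

/-- `|⟨L, φ_x^λ⟩| ≤ M λ^β` for all `φ ∈ B^r_0`, `x ∈ ℝ` and `λ ∈ (0, 1]`: the tempered
distribution `L` lies in the Hölder space of (possibly negative) exponent `β`, with norm at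
most `M`. -/
def HolderBound (r : ℕ) (β M : ℝ) (L : 𝓢(ℝ, ℝ) →L[ℝ] ℝ) : Prop :=
  ∀ (x lam : ℝ) (hlam : 0 < lam), lam ≤ 1 → ∀ φ : 𝓢(ℝ, ℝ), IsTestFunction r φ →
    |L (rescale x lam hlam.ne' φ)| ≤ M * lam ^ β

lemma HolderBound.exists_abs_rescale_le (r : ℕ) : ∃ K, 0 < K ∧
    ∀ {L : 𝓢(ℝ, ℝ) →L[ℝ] ℝ} {β M : ℝ}, HolderBound r β M L →
      ∀ {g : 𝓢(ℝ, ℝ)} {N : ℝ}, DecayBound 2 r N g →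
      ∀ (x : ℝ) {lam : ℝ} (hlam : 0 < lam), lam ≤ 1 →
        |L (rescale x lam hlam.ne' g)| ≤ K * N * M * lam ^ β := by
  obtain ⟨K, hK, hbound⟩ := exists_abs_apply_le_of_decayBound r
  refine ⟨K, hK, fun {L β M} hL g N hg x lam hlam hlam₁ => ?_⟩
  rw [mul_assoc (K * N)]
  refine hbound (L ∘L rescale x lam hlam.ne') _ (fun z φ hφ => ?_) g N hg
  rw [ContinuousLinearMap.comp_apply, rescale_compSubConstCLM]
  exact hL _ lam hlam hlam₁ φ hφ

/-! ### Parabolic rescaling -/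

/-- The parabolic rescaling `F ↦ (y ↦ τ^{-(n+1)/2} F(τ^{-1/2} (y - x)))`, the scaling law of the
`n`-th spatial derivative of the heat kernel at time `τ`. -/
def parabolicRescale (n : ℕ) (τ x : ℝ) (hτ : 0 < τ) : 𝓢(ℝ, ℝ) →L[ℝ] 𝓢(ℝ, ℝ) :=
  (√τ)⁻¹ ^ n • rescale x √τ (Real.sqrt_pos.2 hτ).ne'

lemma parabolicRescale_apply (n : ℕ) {τ : ℝ} (x : ℝ) (hτ : 0 < τ) (F : 𝓢(ℝ, ℝ)) (y : ℝ) :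
    parabolicRescale n τ x hτ F y = (√τ)⁻¹ ^ (n + 1) * F ((√τ)⁻¹ * (y - x)) := by
  change (√τ)⁻¹ ^ n * rescale x √τ (Real.sqrt_pos.2 hτ).ne' F y = _
  rw [rescale_apply, pow_succ, mul_assoc]

lemma parabolicRescale_space (n : ℕ) {τ : ℝ} (x x' : ℝ) (hτ : 0 < τ) (F : 𝓢(ℝ, ℝ)) :
    parabolicRescale n τ x' hτ F =
      parabolicRescale n τ x hτ (F.compSubConstCLM ℝ ((√τ)⁻¹ * (x' - x))) := by
  ext y
  rw [parabolicRescale_apply, parabolicRescale_apply, SchwartzMap.compSubConstCLM_apply, ← mul_sub,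
    sub_sub_sub_cancel_right]

lemma parabolicRescale_time (n : ℕ) {τ τ' c : ℝ} (x : ℝ) (hτ : 0 < τ) (hτ' : 0 < τ')
    (hc : c ≠ 0) (hcτ : c * √τ' = √τ) (F : 𝓢(ℝ, ℝ)) :
    parabolicRescale n τ' x hτ' F =
      parabolicRescale n τ x hτ (c ^ n • rescale 0 c⁻¹ (inv_ne_zero hc) F) := by
  ext y
  rw [parabolicRescale_apply, parabolicRescale_apply, smul_apply, rescale_apply, smul_eq_mul,
    inv_inv, sub_zero, ← hcτ, mul_inv, mul_pow, inv_pow c]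
  have : c * (c⁻¹ * (√τ')⁻¹ * (y - x)) = (√τ')⁻¹ * (y - x) := by field_simp
  rw [this, pow_succ c]
  field_simp

lemma sqrt_div_sqrt_gap {τ τ' : ℝ} (hτ : 0 < τ) (hττ' : τ ≤ τ') (h : √(τ' - τ) ≤ √τ) :
    √τ / √τ' ∈ Set.Icc (1 / 2 : ℝ) 1 ∧ 1 - √τ / √τ' ≤ √(τ' - τ) / √τ := by
  have hs : 0 < √τ := Real.sqrt_pos.2 hτ
  have hss' : √τ ≤ √τ' := Real.sqrt_le_sqrt hττ'
  have hs' : 0 < √τ' := hs.trans_le hss'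
  have subadd : √τ' ≤ √τ + √(τ' - τ) := by
    refine (Real.sqrt_le_left (by positivity)).2 ?_
    nlinarith [Real.sq_sqrt hτ.le, Real.sq_sqrt (sub_nonneg.2 hττ'), Real.sqrt_nonneg (τ' - τ)]
  refine ⟨⟨?_, (div_le_one hs').2 hss'⟩, ?_⟩
  · rw [le_div_iff₀ hs']
    linarith
  · rw [one_sub_div hs'.ne']
    gcongr
    linarith

lemma decayBound_smul_rescale_sub {F : 𝓢(ℝ, ℝ)} {k r : ℕ} {N c : ℝ}
    (hF : DecayBound (k + 1) (r + 1) N F) (n : ℕ) (hc : c ∈ Set.Icc (1 / 2 : ℝ) 1) (hc₀ : c ≠ 0) :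
    DecayBound k r (2 ^ (k + 1) * ((n + 1 : ℕ) + r + 1) * N * (1 - c))
      (c ^ n • rescale 0 c⁻¹ (inv_ne_zero hc₀) F - F : 𝓢(ℝ, ℝ)) := by
  have heq : ⇑(c ^ n • rescale 0 c⁻¹ (inv_ne_zero hc₀) F - F) =
      fun u => c ^ (n + 1) * F (c * u) - F u := by
    funext u
    rw [sub_apply, smul_apply, rescale_apply, smul_eq_mul, inv_inv, sub_zero, pow_succ, mul_assoc]
  rw [heq]
  exact hF.dilate_sub (F.smooth _) (n + 1) hc

lemma exists_decayBound_parabolicRescale_sub (F : 𝓢(ℝ, ℝ)) (n r : ℕ) : ∃ D, 0 < D ∧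
    DecayBound 2 r D F ∧ ∀ {τ τ' x x' : ℝ} (hτ : 0 < τ) (hττ' : τ ≤ τ'),
      pnormS (τ', x') (τ, x) ≤ √τ → ∃ G₁ G₂ : 𝓢(ℝ, ℝ),
        DecayBound 2 r (D * (pnormS (τ', x') (τ, x) / √τ)) G₁ ∧
        DecayBound 2 r (D * (pnormS (τ', x') (τ, x) / √τ)) G₂ ∧
        parabolicRescale n τ' x' (hτ.trans_le hττ') F - parabolicRescale n τ x hτ F =
          parabolicRescale n τ x' hτ G₁ + parabolicRescale n τ x hτ G₂ := by
  obtain ⟨N, hN₀, hN⟩ := exists_decayBound_schwartz F 3 (r + 1)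
  have hconst : (2 : ℝ) ^ 2 ≤ 2 ^ 3 * ((n + 1 : ℕ) + r + 1) := by
    push_cast
    nlinarith [n.cast_nonneg (α := ℝ), r.cast_nonneg (α := ℝ)]
  refine ⟨2 ^ 3 * ((n + 1 : ℕ) + r + 1) * N, by positivity, ?_, ?_⟩
  · exact (hN.of_le (by norm_num) r.le_succ).mono_const
      (le_mul_of_one_le_left hN₀.le (by linarith))
  intro τ τ' x x' hτ hττ' hp
  have hs : 0 < √τ := Real.sqrt_pos.2 hτ
  have hpt := sqrt_sub_le_pnormS hττ' x x'
  obtain ⟨hc, hcgap⟩ := sqrt_div_sqrt_gap hτ hττ' (hpt.trans hp)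
  set c := √τ / √τ'
  have hc₀ : c ≠ 0 := by linarith [hc.1]
  have hcτ : c * √τ' = √τ := div_mul_cancel₀ _ (Real.sqrt_pos.2 (hτ.trans_le hττ')).ne'
  set a := (√τ)⁻¹ * (x' - x) with ha
  have hap : |a| ≤ pnormS (τ', x') (τ, x) / √τ := by
    rw [ha, abs_mul, abs_of_pos (inv_pos.2 hs), inv_mul_eq_div]
    gcongr
    exact le_max_right _ _
  refine ⟨c ^ n • rescale 0 c⁻¹ (inv_ne_zero hc₀) F - F, F.compSubConstCLM ℝ a - F, ?_, ?_, ?_⟩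
  · refine (decayBound_smul_rescale_sub hN n hc hc₀).mono_const ?_
    gcongr
    exact hcgap.trans (by gcongr)
  · refine ((hN.of_le (by norm_num) le_rfl).translate_sub (F.smooth _)
      (hap.trans ((div_le_one hs).2 hp))).mono_const ?_
    gcongr
  · rw [map_sub, map_sub, ← parabolicRescale_time n x' hτ (hτ.trans_le hττ') hc₀ hcτ F, ha,
      ← parabolicRescale_space, sub_add_sub_cancel]

namespace HolderBound

variable {β κ : ℝ} {n : ℕ}

lemma exists_abs_parabolicRescale_le (n r : ℕ) : ∃ K, 0 < K ∧
    ∀ {L : 𝓢(ℝ, ℝ) →L[ℝ] ℝ} {β M : ℝ}, HolderBound r β M L →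
      ∀ {g : 𝓢(ℝ, ℝ)} {N : ℝ}, DecayBound 2 r N g → ∀ (x : ℝ) {τ : ℝ} (hτ : 0 < τ), τ ≤ 1 →
        |L (parabolicRescale n τ x hτ g)| ≤ K * N * M * τ ^ ((β - n) / 2) := by
  obtain ⟨K, hK, hbound⟩ := exists_abs_rescale_le r
  refine ⟨K, hK, fun {L β M} hL g N hg x τ hτ hτ₁ => ?_⟩
  have hs : 0 < √τ := Real.sqrt_pos.2 hτ
  have hpow : τ ^ ((β - n) / 2) = (√τ)⁻¹ ^ n * √τ ^ β := by
    rw [inv_pow, ← Real.rpow_natCast, ← Real.rpow_neg hs.le, ← Real.rpow_add hs,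
      Real.sqrt_eq_rpow, ← Real.rpow_mul hτ.le]
    congr 1
    ring
  change |L ((√τ)⁻¹ ^ n • rescale x √τ hs.ne' g)| ≤ _
  rw [map_smul, smul_eq_mul, abs_mul, abs_of_pos (by positivity), hpow]
  calc _ ≤ (√τ)⁻¹ ^ n * (K * N * M * √τ ^ β) := by
        gcongr
        exact hbound hL hg x hs (Real.sqrt_le_one.2 hτ₁)
    _ = _ := by ring

lemma exists_abs_parabolicRescale_sub_le_div (F : 𝓢(ℝ, ℝ)) (n r : ℕ) : ∃ A, 0 < A ∧
    ∀ {L : 𝓢(ℝ, ℝ) →L[ℝ] ℝ} {β M : ℝ}, HolderBound r β M L →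
      (∀ (x : ℝ) {τ : ℝ} (hτ : 0 < τ), τ ≤ 1 →
        |L (parabolicRescale n τ x hτ F)| ≤ A * M * τ ^ ((β - n) / 2)) ∧
      ∀ (x x' : ℝ) {τ τ' : ℝ} (hτ : 0 < τ) (hττ' : τ ≤ τ'), τ ≤ 1 →
        pnormS (τ', x') (τ, x) ≤ √τ →
        |L (parabolicRescale n τ' x' (hτ.trans_le hττ') F) - L (parabolicRescale n τ x hτ F)| ≤
          2 * (A * M * τ ^ ((β - n) / 2)) * (pnormS (τ', x') (τ, x) / √τ) := by
  obtain ⟨K, hK, hbound⟩ := exists_abs_parabolicRescale_le n r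
  obtain ⟨D, hD, hF, hsub⟩ := exists_decayBound_parabolicRescale_sub F n r
  refine ⟨K * D, by positivity, fun {L β M} hL => ⟨fun x τ hτ hτ₁ => hbound hL hF x hτ hτ₁, ?_⟩⟩
  intro x x' τ τ' hτ hττ' hτ₁ hp
  obtain ⟨G₁, G₂, hG₁, hG₂, heq⟩ := hsub hτ hττ' hp
  rw [← map_sub, heq, map_add]
  calc _ ≤ _ := abs_add_le _ _
    _ ≤ _ := add_le_add (hbound hL hG₁ x' hτ hτ₁) (hbound hL hG₂ x hτ hτ₁)
    _ = _ := by ring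

lemma exists_abs_parabolicRescale_sub_le (F : 𝓢(ℝ, ℝ)) (r : ℕ) (hβ : β ≤ n)
    (hκ : κ ∈ Set.Icc (0 : ℝ) 1) : ∃ A, 0 < A ∧
    ∀ {L : 𝓢(ℝ, ℝ) →L[ℝ] ℝ} {M : ℝ}, HolderBound r β M L →
      (∀ (x : ℝ) {τ : ℝ} (hτ : 0 < τ), τ ≤ 1 →
        |L (parabolicRescale n τ x hτ F)| ≤ A * M * τ ^ ((β - n) / 2)) ∧
      ∀ (x x' : ℝ) {τ τ' : ℝ} (hτ : 0 < τ) (hττ' : τ ≤ τ'), τ' ≤ 1 →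
        |L (parabolicRescale n τ' x' (hτ.trans_le hττ') F) - L (parabolicRescale n τ x hτ F)| ≤
          A * M * τ ^ ((β - n - κ) / 2) * pnormS (τ', x') (τ, x) ^ κ := by
  obtain ⟨A, hA, hbound⟩ := exists_abs_parabolicRescale_sub_le_div F n r
  refine ⟨2 * A, by positivity, fun {L M} hL => ?_⟩
  obtain ⟨size, near⟩ := hbound hL
  have hM : 0 ≤ A * M := by simpa using (abs_nonneg _).trans (size 0 one_pos le_rfl)
  refine ⟨fun x τ hτ hτ₁ => (size x hτ hτ₁).trans ?_, fun x x' τ τ' hτ hττ' hτ'₁ => ?_⟩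
  · gcongr ?_ * _
    linarith
  have hs : 0 < √τ := Real.sqrt_pos.2 hτ
  have hτ₁ := hττ'.trans hτ'₁
  have hp := pnormS_nonneg (τ', x') (τ, x)
  have target : 2 * A * M * τ ^ ((β - n - κ) / 2) * pnormS (τ', x') (τ, x) ^ κ =
      2 * (A * M * τ ^ ((β - n) / 2)) * (pnormS (τ', x') (τ, x) / √τ) ^ κ := by
    rw [Real.div_rpow hp hs.le, sub_div _ κ, Real.rpow_sub hτ, Real.sqrt_eq_rpow,
      ← Real.rpow_mul hτ.le, one_div_mul_eq_div]
    ring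
  rw [target]
  rcases le_total (pnormS (τ', x') (τ, x)) √τ with hnear | hfar
  · refine (near x x' hτ hττ' hτ₁ hnear).trans ?_
    gcongr
    simpa using Real.rpow_le_rpow_of_exponent_ge' (by positivity) ((div_le_one hs).2 hnear)
      hκ.1 hκ.2
  · have size' : |L (parabolicRescale n τ' x' (hτ.trans_le hττ') F)| ≤
        A * M * τ ^ ((β - n) / 2) := (size x' _ hτ'₁).trans <|
      mul_le_mul_of_nonneg_left (Real.rpow_le_rpow_of_nonpos hτ hττ' (by linarith)) hM
    refine (abs_sub _ _).trans ((add_le_add size' (size x hτ hτ₁)).trans ?_)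
    rw [← two_mul]
    exact le_mul_of_one_le_right (by positivity)
      (Real.one_le_rpow ((one_le_div hs).2 hfar) hκ.1)

end HolderBound

/-! ### The heat kernel as a parabolic rescaling -/

open Polynomial in
lemma exists_abs_eval_mul_exp_neg_sq_le (p : ℝ[X]) :
    ∃ C, ∀ x : ℝ, |p.eval x * Real.exp (-(x ^ 2 / 2))| ≤ C := by
  induction p using Polynomial.induction_on' with
  | add p q hp hq =>
    obtain ⟨C, hC⟩ := hp
    obtain ⟨D, hD⟩ := hq
    refine ⟨C + D, fun x => ?_⟩
    rw [eval_add, add_mul]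
    exact (abs_add_le _ _).trans (add_le_add (hC x) (hD x))
  | monomial m a =>
    refine ⟨|a| * (1 + 2 ^ m * m.factorial), fun x => ?_⟩
    have hpow : (x ^ 2 / 2) ^ m ≤ m.factorial * Real.exp (x ^ 2 / 2) := by
      rw [← div_le_iff₀' (by positivity)]
      exact Real.pow_div_factorial_le_exp _ (by positivity) m
    have hx : |x ^ m| ≤ 1 + (x ^ 2) ^ m := by
      rw [abs_pow, ← sq_abs x, ← pow_mul, mul_comm, pow_mul]
      nlinarith [sq_nonneg (|x| ^ m - 1)]
    have hone : 1 ≤ Real.exp (x ^ 2 / 2) := Real.one_le_exp (by positivity)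
    rw [eval_monomial, abs_mul, abs_mul, Real.abs_exp, mul_assoc, Real.exp_neg]
    gcongr
    rw [← div_eq_mul_inv, div_le_iff₀ (Real.exp_pos _)]
    calc |x ^ m| ≤ 1 + 2 ^ m * (x ^ 2 / 2) ^ m := by rwa [← mul_pow, mul_div_cancel₀ _ two_ne_zero]
      _ ≤ Real.exp (x ^ 2 / 2) + 2 ^ m * (m.factorial * Real.exp (x ^ 2 / 2)) := by gcongr
      _ = _ := by ring

/-- The Gaussian `x ↦ exp (-x² / 2)` as a Schwartz function. -/
def gaussianSchwartz : 𝓢(ℝ, ℝ) where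
  toFun x := Real.exp (-(x ^ 2 / 2))
  smooth' := by fun_prop
  decay' k m := by
    obtain ⟨C, hC⟩ := exists_abs_eval_mul_exp_neg_sq_le
      (Polynomial.X ^ k * ((Polynomial.hermite m).map (Int.castRingHom ℝ)))
    refine ⟨C, fun x => (le_of_eq ?_).trans (hC x)⟩
    rw [norm_iteratedFDeriv_eq_norm_iteratedDeriv, iteratedDeriv_eq_iterate,
      Polynomial.deriv_gaussian_eq_hermite_mul_gaussian]
    simp [Polynomial.aeval_def, Polynomial.eval_map, abs_mul, mul_assoc]

lemma exists_schwartz_eq_iteratedDeriv (g : 𝓢(ℝ, ℝ)) (n : ℕ) :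
    ∃ F : 𝓢(ℝ, ℝ), ∀ u, F u = iteratedDeriv n g u := by
  induction n with
  | zero => exact ⟨g, fun u => by rw [iteratedDeriv_zero]⟩
  | succ n ih =>
    obtain ⟨F, hF⟩ := ih
    refine ⟨SchwartzMap.derivCLM ℝ ℝ F, fun u => ?_⟩
    rw [SchwartzMap.derivCLM_apply, iteratedDeriv_succ, funext hF]

lemma contDiff_heatKernel (t : ℝ) : ContDiff ℝ (⊤ : ℕ∞) (heatKernel t) := by
  unfold heatKernel
  split_ifs <;> fun_prop

lemma exists_schwartz_eq_iteratedDeriv_heatKernel (n : ℕ) :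
    ∃ F : 𝓢(ℝ, ℝ), ∀ u, F u = iteratedDeriv n (heatKernel 1) (-u) := by
  let G : 𝓢(ℝ, ℝ) := (4 * Real.pi * 1) ^ (-(1 : ℝ) / 2) • √2 •
    rescale 0 √2 (by positivity) gaussianSchwartz
  have hG : heatKernel 1 = G := by
    funext u
    simp only [G, heatKernel, zero_lt_one, if_true, smul_apply, smul_eq_mul, rescale_apply]
    rw [mul_inv_cancel_left₀ (by positivity)]
    congr 1
    change _ = Real.exp _
    rw [mul_pow, inv_pow, Real.sq_sqrt zero_le_two]
    ring_nf
  obtain ⟨F, hF⟩ := exists_schwartz_eq_iteratedDeriv G n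
  refine ⟨SchwartzMap.compCLMOfContinuousLinearEquiv ℝ (ContinuousLinearEquiv.neg ℝ) F,
    fun u => ?_⟩
  rw [hG]
  exact hF (-u)

lemma heatKernel_eq_mul_heatKernel_one {t : ℝ} (ht : 0 < t) (u : ℝ) :
    heatKernel t u = (√t)⁻¹ * heatKernel 1 ((√t)⁻¹ * u) := by
  have hpow : t ^ (-(1 : ℝ) / 2) = (√t)⁻¹ := by
    rw [Real.sqrt_eq_rpow, ← Real.rpow_neg ht.le, neg_div]
  have hexp : -(((√t)⁻¹ * u) ^ 2) / (4 * 1) = -u ^ 2 / (4 * t) := by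
    rw [mul_pow, inv_pow, Real.sq_sqrt ht.le]
    field_simp
  simp only [heatKernel, ht, zero_lt_one, if_true]
  rw [Real.mul_rpow (by positivity) ht.le, hpow, hexp, mul_one]
  ring

lemma iteratedDeriv_heatKernel (n : ℕ) {t : ℝ} (ht : 0 < t) (u : ℝ) :
    iteratedDeriv n (heatKernel t) u =
      (√t)⁻¹ ^ (n + 1) * iteratedDeriv n (heatKernel 1) ((√t)⁻¹ * u) := by
  rw [funext (heatKernel_eq_mul_heatKernel_one ht), iteratedDeriv_const_mul_field,
    iteratedDeriv_comp_const_mul ((contDiff_heatKernel 1).of_le (by exact_mod_cast le_top))]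
  ring

lemma eq_parabolicRescale_of_eq_iteratedDeriv_heatKernel {n : ℕ} {F K : 𝓢(ℝ, ℝ)} {t x : ℝ}
    (hF : ∀ u, F u = iteratedDeriv n (heatKernel 1) (-u)) (ht : 0 < t)
    (hK : ∀ y, K y = iteratedDeriv n (heatKernel t) (x - y)) :
    K = parabolicRescale n t x ht F := by
  ext y
  rw [hK, iteratedDeriv_heatKernel n ht, parabolicRescale_apply, hF, ← mul_neg, neg_sub]

/-! ### Convolution in time -/

lemma integral_rpow_mul_sub_rpow {a b t : ℝ} (ha : -1 < a) (hb : -1 < b) (ht : 0 < t) :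
    ∫ s in Set.Ioo 0 t, s ^ a * (t - s) ^ b =
      ProbabilityTheory.beta (a + 1) (b + 1) * t ^ (a + b + 1) := by
  rw [← integral_Ioc_eq_integral_Ioo, ← intervalIntegral.integral_of_le ht.le,
    ProbabilityTheory.beta_eq_betaIntegralReal _ _ (by linarith) (by linarith)]
  have h := Complex.betaIntegral_scaled ((a + 1 : ℝ) : ℂ) ((b + 1 : ℝ) : ℂ) ht
  have hpow : (t : ℂ) ^ (((a + 1 : ℝ) : ℂ) + ((b + 1 : ℝ) : ℂ) - 1) =
      ((t ^ (a + b + 1) : ℝ) : ℂ) := by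
    rw [Complex.ofReal_cpow ht.le]
    congr 1
    push_cast
    ring
  have hint : ∫ s in 0..t, (s : ℂ) ^ (((a + 1 : ℝ) : ℂ) - 1) *
      ((t : ℂ) - s) ^ (((b + 1 : ℝ) : ℂ) - 1) = ((∫ s in 0..t, s ^ a * (t - s) ^ b : ℝ) : ℂ) := by
    rw [← intervalIntegral.integral_ofReal]
    refine intervalIntegral.integral_congr fun s hs => ?_
    rw [Set.uIcc_of_le ht.le] at hs
    simp [Complex.ofReal_cpow hs.1, Complex.ofReal_cpow (sub_nonneg.2 hs.2)]
  rw [hint, hpow] at h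
  have hre := congrArg Complex.re h
  rwa [Complex.ofReal_re, Complex.re_ofReal_mul, mul_comm] at hre

lemma integrableOn_rpow_mul_sub_rpow {a b t : ℝ} (ha : -1 < a) (hb : -1 < b) (ht : 0 < t) :
    IntegrableOn (fun s => s ^ a * (t - s) ^ b) (Set.Ioo 0 t) := by
  refine Integrable.of_integral_ne_zero ?_
  have := ProbabilityTheory.beta_pos (α := a + 1) (β := b + 1) (by linarith) (by linarith)
  rw [integral_rpow_mul_sub_rpow ha hb ht]
  positivity

lemma integral_sub_rpow {b t₀ t : ℝ} (hb : -1 < b) (ht : t₀ ≤ t) :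
    ∫ s in Set.Ico t₀ t, (t - s) ^ b = (t - t₀) ^ (b + 1) / (b + 1) := by
  rw [integral_Ico_eq_integral_Ioc, ← intervalIntegral.integral_of_le ht,
    intervalIntegral.integral_comp_sub_left (fun s => s ^ b), integral_rpow (Or.inl hb), sub_self,
    Real.zero_rpow (by linarith), sub_zero]

lemma integrableOn_sub_rpow {b t₀ t : ℝ} (hb : -1 < b) (ht : t₀ ≤ t) :
    IntegrableOn (fun s => (t - s) ^ b) (Set.Ico t₀ t) := by
  have h := (intervalIntegral.intervalIntegrable_rpow' (a := t - t₀) (b := 0) hb).comp_sub_left t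
  rwa [sub_sub_cancel, sub_zero, intervalIntegrable_iff_integrableOn_Ico_of_le ht] at h

lemma rpow_le_two_rpow_abs_mul_rpow {s t : ℝ} (a : ℝ) (ht : 0 < t) (hs : s ∈ Set.Icc t (2 * t)) :
    s ^ a ≤ 2 ^ |a| * t ^ a := by
  have hone : 1 ≤ s / t := (one_le_div ht).2 hs.1
  calc s ^ a = (s / t) ^ a * t ^ a := by
        rw [← Real.mul_rpow (by positivity) ht.le, div_mul_cancel₀ _ ht.ne']
    _ ≤ (s / t) ^ |a| * t ^ a := by
        gcongr
        exact le_abs_self a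
    _ ≤ 2 ^ |a| * t ^ a := by
        gcongr
        exact (div_le_iff₀ ht).2 hs.2

lemma sub_rpow_le_rpow_mul_pnormS {c κ t t' : ℝ} (hκ : 0 ≤ κ) (hc : 0 ≤ c - κ / 2)
    (htt' : t ≤ t') (h2 : t' ≤ 2 * t) (x x' : ℝ) :
    (t' - t) ^ c ≤ t ^ (c - κ / 2) * pnormS (t', x') (t, x) ^ κ := by
  have ht : 0 ≤ t := by linarith
  have hgap : 0 ≤ t' - t := sub_nonneg.2 htt'
  have hsqrt := sqrt_sub_le_pnormS htt' x x'
  calc (t' - t) ^ c = (t' - t) ^ (c - κ / 2) * √(t' - t) ^ κ := by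
        rw [Real.sqrt_eq_rpow, ← Real.rpow_mul hgap, one_div_mul_eq_div,
          ← Real.rpow_add_of_nonneg hgap hc (by linarith), sub_add_cancel]
    _ ≤ t ^ (c - κ / 2) * pnormS (t', x') (t, x) ^ κ := by
        gcongr
        linarith

/-- The convolution in time `∫₀ᵗ k(s, t - s, x) ds` of a kernel which has already been paired in
space. -/
def timeConv (k : ℝ → ℝ → ℝ → ℝ) (t x : ℝ) : ℝ := ∫ s in Set.Ioo 0 t, k s (t - s) x

/-- A kernel `k(s, τ, x)` on `(0, T] × (0, T] × ℝ` of size `s^a τ^b`, parabolically `κ`-Hölder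
in `(τ, x)` at the cost of a factor `τ^(-κ/2)`. -/
structure IsHolderKernel (T A a b κ : ℝ) (k : ℝ → ℝ → ℝ → ℝ) : Prop where
  measurable : ∀ τ x, Measurable fun s => k s τ x
  abs_le : ∀ {s τ : ℝ} (x : ℝ), s ∈ Set.Ioc 0 T → τ ∈ Set.Ioc 0 T → |k s τ x| ≤ A * s ^ a * τ ^ b
  abs_sub_le : ∀ {s τ τ' : ℝ} (x x' : ℝ), s ∈ Set.Ioc 0 T → 0 < τ → τ ≤ τ' → τ' ≤ T →
    |k s τ' x' - k s τ x| ≤ A * s ^ a * τ ^ (b - κ / 2) * pnormS (τ', x') (τ, x) ^ κ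

namespace IsHolderKernel

variable {T A a b κ t : ℝ} {k : ℝ → ℝ → ℝ → ℝ}

lemma nonneg (hk : IsHolderKernel T A a b κ k) (hT : 0 < T) : 0 ≤ A := by
  have h := (abs_nonneg _).trans (hk.abs_le 0 (Set.right_mem_Ioc.2 hT) (Set.right_mem_Ioc.2 hT))
  rw [mul_assoc] at h
  exact nonneg_of_mul_nonneg_left h (by positivity)

lemma continuousOn (hk : IsHolderKernel T A a b κ k) (hκ : 0 < κ) {s : ℝ} (hs : s ∈ Set.Ioc 0 T)
    (x : ℝ) : ContinuousOn (fun τ => k s τ x) (Set.Ioc 0 T) := by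
  intro τ hτ
  have bound : ∀ τ' ∈ Set.Ioc 0 T,
      |k s τ' x - k s τ x| ≤ A * s ^ a * min τ' τ ^ (b - κ / 2) * √|τ' - τ| ^ κ := by
    intro τ' hτ'
    rcases le_total τ τ' with h | h
    · simpa [pnormS, min_eq_right h] using hk.abs_sub_le x x hs hτ.1 h hτ'.2
    · simpa [pnormS, min_eq_left h, abs_sub_comm] using hk.abs_sub_le x x hs hτ'.1 h hτ.2
  have hlim : ContinuousAt
      (fun τ' => A * s ^ a * min τ' τ ^ (b - κ / 2) * √|τ' - τ| ^ κ) τ := by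
    refine (continuousAt_const.mul (ContinuousAt.rpow_const (by fun_prop) (Or.inl ?_))).mul
      (ContinuousAt.rpow_const (by fun_prop) (Or.inr hκ.le))
    rw [min_self]
    exact hτ.1.ne'
  have hzero : Tendsto (fun τ' => A * s ^ a * min τ' τ ^ (b - κ / 2) * √|τ' - τ| ^ κ)
      (𝓝[Set.Ioc 0 T] τ) (𝓝 0) := by
    simpa [Real.zero_rpow hκ.ne'] using hlim.tendsto.mono_left nhdsWithin_le_nhds
  rw [ContinuousWithinAt, tendsto_iff_norm_sub_tendsto_zero]
  refine squeeze_zero' (Eventually.of_forall fun _ => norm_nonneg _) ?_ hzero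
  exact eventually_nhdsWithin_of_forall bound

lemma aestronglyMeasurable (hk : IsHolderKernel T A a b κ k) (hκ : 0 < κ) (ht : t ≤ T) (x : ℝ) :
    AEStronglyMeasurable (fun s => k s (t - s) x) (volume.restrict (Set.Ioo 0 t)) := by
  have sub_mem (s : Set.Ioo 0 t) : t - s ∈ Set.Ioo 0 t :=
    ⟨sub_pos.2 s.2.2, sub_lt_self t s.2.1⟩
  have Ioo_subset : Set.Ioo 0 t ⊆ Set.Ioc 0 T := fun s hs => ⟨hs.1, hs.2.le.trans ht⟩
  have joint : Measurable (Function.uncurry fun (τ s : Set.Ioo 0 t) => k s τ x) :=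
    measurable_uncurry_of_continuous_of_measurable
      (fun s => ((hk.continuousOn hκ (Ioo_subset s.2) x).mono Ioo_subset).domRestrict)
      fun τ => (hk.measurable τ x).comp measurable_subtype_coe
  have diag : Measurable fun s : Set.Ioo 0 t =>
      ((⟨t - s, sub_mem s⟩, s) : Set.Ioo 0 t × Set.Ioo 0 t) :=
    ((measurable_const.sub measurable_subtype_coe).subtype_mk (h := sub_mem)).prodMk measurable_id
  have hmeas : Measurable fun s : Set.Ioo 0 t => k s (t - s) x := joint.comp diag
  exact (aemeasurable_restrict_of_measurable_subtype (f := fun s => k s (t - s) x)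
    measurableSet_Ioo hmeas).aestronglyMeasurable

lemma abs_le_on_Ioo (hk : IsHolderKernel T A a b κ k) (ht : t ≤ T) (x : ℝ) :
    ∀ᵐ s ∂volume.restrict (Set.Ioo 0 t), ‖k s (t - s) x‖ ≤ A * (s ^ a * (t - s) ^ b) := by
  refine (ae_restrict_iff' measurableSet_Ioo).2 (Eventually.of_forall fun s hs => ?_)
  rw [← mul_assoc]
  exact hk.abs_le x ⟨hs.1, hs.2.le.trans ht⟩ ⟨sub_pos.2 hs.2, (sub_le_self t hs.1.le).trans ht⟩

lemma integrableOn (hk : IsHolderKernel T A a b κ k) (hκ : 0 < κ) (ha : -1 < a) (hb : -1 < b)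
    (ht : t ∈ Set.Ioc 0 T) (x : ℝ) : IntegrableOn (fun s => k s (t - s) x) (Set.Ioo 0 t) :=
  ((integrableOn_rpow_mul_sub_rpow ha hb ht.1).const_mul A).mono'
    (hk.aestronglyMeasurable hκ ht.2 x) (hk.abs_le_on_Ioo ht.2 x)

lemma abs_timeConv_le (hk : IsHolderKernel T A a b κ k) (ha : -1 < a) (hb : -1 < b)
    (ht : t ∈ Set.Ioc 0 T) (x : ℝ) :
    |timeConv k t x| ≤ A * ProbabilityTheory.beta (a + 1) (b + 1) * t ^ (a + b + 1) := by
  rw [mul_assoc, ← integral_rpow_mul_sub_rpow ha hb ht.1, ← integral_const_mul]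
  exact norm_integral_le_of_norm_le ((integrableOn_rpow_mul_sub_rpow ha hb ht.1).const_mul A)
    (hk.abs_le_on_Ioo ht.2 x)

variable {t' : ℝ}

lemma abs_integral_sub_le (hk : IsHolderKernel T A a b κ k) (ha : -1 < a) (hb : -1 < b - κ / 2)
    (ht : 0 < t) (htt' : t ≤ t') (ht' : t' ≤ T) (x x' : ℝ) :
    |∫ s in Set.Ioo 0 t, (k s (t' - s) x' - k s (t - s) x)| ≤
      A * ProbabilityTheory.beta (a + 1) (b - κ / 2 + 1) * t ^ (a + b - κ / 2 + 1) *
        pnormS (t', x') (t, x) ^ κ := by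
  have hint := (integrableOn_rpow_mul_sub_rpow ha hb ht).const_mul
    (A * pnormS (t', x') (t, x) ^ κ)
  have hle : ∀ s ∈ Set.Ioo 0 t, ‖k s (t' - s) x' - k s (t - s) x‖ ≤
      A * pnormS (t', x') (t, x) ^ κ * (s ^ a * (t - s) ^ (b - κ / 2)) := fun s hs => by
    have hshift : pnormS (t' - s, x') (t - s, x) = pnormS (t', x') (t, x) := by
      simp only [pnormS, sub_sub_sub_cancel_right]
    rw [Real.norm_eq_abs, ← hshift]
    calc _ ≤ _ := hk.abs_sub_le x x' ⟨hs.1, by linarith [hs.2]⟩ (sub_pos.2 hs.2)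
          (by linarith) (by linarith [hs.1])
      _ = _ := by ring
  refine (norm_integral_le_of_norm_le hint
    ((ae_restrict_iff' measurableSet_Ioo).2 (Eventually.of_forall hle))).trans_eq ?_
  rw [integral_const_mul, integral_rpow_mul_sub_rpow ha hb ht, ← add_sub_assoc]
  ring

lemma abs_integral_Ico_le (hk : IsHolderKernel T A a b κ k) (hb : -1 < b - κ / 2) (hκ : 0 ≤ κ)
    (ht : 0 < t) (htt' : t ≤ t') (ht' : t' ≤ T) (h2 : t' ≤ 2 * t) (x x' : ℝ) :
    |∫ s in Set.Ico t t', k s (t' - s) x'| ≤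
      A * (2 ^ |a| / (b + 1)) * t ^ (a + b - κ / 2 + 1) * pnormS (t', x') (t, x) ^ κ := by
  have hA := hk.nonneg (ht.trans_le (htt'.trans ht'))
  have hb' : -1 < b := by linarith
  have hb₁ : 0 < b + 1 := by linarith
  have hle : ∀ s ∈ Set.Ico t t', ‖k s (t' - s) x'‖ ≤ A * (2 ^ |a| * t ^ a) * (t' - s) ^ b := by
    intro s hs
    have hs₀ : 0 ≤ t' - s := sub_nonneg.2 hs.2.le
    refine (hk.abs_le x' ⟨ht.trans_le hs.1, hs.2.le.trans ht'⟩
      ⟨sub_pos.2 hs.2, by linarith [hs.1]⟩).trans ?_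
    gcongr
    exact rpow_le_two_rpow_abs_mul_rpow a ht ⟨hs.1, hs.2.le.trans h2⟩
  calc _ ≤ ∫ s in Set.Ico t t', A * (2 ^ |a| * t ^ a) * (t' - s) ^ b :=
        norm_integral_le_of_norm_le (f := fun s => k s (t' - s) x')
          ((integrableOn_sub_rpow hb' htt').const_mul _)
          ((ae_restrict_iff' measurableSet_Ico).2 (Eventually.of_forall hle))
    _ = A * (2 ^ |a| / (b + 1)) * t ^ a * (t' - t) ^ (b + 1) := by
        rw [integral_const_mul, integral_sub_rpow hb' htt']
        ring
    _ ≤ A * (2 ^ |a| / (b + 1)) * t ^ a *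
          (t ^ (b + 1 - κ / 2) * pnormS (t', x') (t, x) ^ κ) := by
        gcongr
        exact sub_rpow_le_rpow_mul_pnormS hκ (by linarith) htt' h2 x x'
    _ = _ := by
        rw [show a + b - κ / 2 + 1 = a + (b + 1 - κ / 2) by ring, Real.rpow_add ht a]
        ring

lemma abs_timeConv_sub_le (hk : IsHolderKernel T A a b κ k) (ha : -1 < a) (hb : -1 < b - κ / 2)
    (hκ : 0 < κ) (ht : 0 < t) (htt' : t ≤ t') (ht' : t' ≤ T) (h2 : t' ≤ 2 * t) (x x' : ℝ) :
    |timeConv k t' x' - timeConv k t x| ≤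
      A * (ProbabilityTheory.beta (a + 1) (b - κ / 2 + 1) + 2 ^ |a| / (b + 1)) *
        t ^ (a + b - κ / 2 + 1) * pnormS (t', x') (t, x) ^ κ := by
  have hint := hk.integrableOn hκ ha (by linarith) ⟨ht, htt'.trans ht'⟩ x
  have hint' := hk.integrableOn hκ ha (by linarith) ⟨ht.trans_le htt', ht'⟩ x'
  rw [← Set.Ioo_union_Ico_eq_Ioo ht htt', integrableOn_union] at hint'
  have split : timeConv k t' x' - timeConv k t x =
      (∫ s in Set.Ioo 0 t, (k s (t' - s) x' - k s (t - s) x)) +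
        ∫ s in Set.Ico t t', k s (t' - s) x' := by
    rw [timeConv, timeConv, ← Set.Ioo_union_Ico_eq_Ioo ht htt', setIntegral_union
      (Set.disjoint_left.2 fun s hs hs' => hs.2.not_ge hs'.1) measurableSet_Ico hint'.1 hint'.2,
      integral_sub hint'.1 hint]
    ring
  rw [split]
  calc _ ≤ _ := abs_add_le _ _
    _ ≤ _ := add_le_add (hk.abs_integral_sub_le ha hb ht htt' ht' x x')
      (hk.abs_integral_Ico_le hb hκ.le ht htt' ht' h2 x x')
    _ = _ := by ring

end IsHolderKernel

namespace IsHolderKernel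

variable {T A a b κ p : ℝ} {k : ℝ → ℝ → ℝ → ℝ}

lemma tnorm_rpow_neg_mul_abs_timeConv_le (hk : IsHolderKernel T A a b κ k) (hT : T ≤ 1)
    (ha : -1 < a) (hb : -1 < b) (hp : 0 ≤ a + b + 1 - p / 2) {t : ℝ} (ht : t ∈ Set.Ioc 0 T)
    (x : ℝ) : tnorm t ^ (-p) * |timeConv k t x| ≤
      A * ProbabilityTheory.beta (a + 1) (b + 1) * T ^ (a + b + 1 - p / 2) := by
  have hA := hk.nonneg (ht.1.trans_le ht.2)
  have hB := ProbabilityTheory.beta_pos (α := a + 1) (β := b + 1) (by linarith) (by linarith)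
  have ht₀ := ht.1
  rw [tnorm_rpow ⟨ht.1.le, ht.2.trans hT⟩]
  calc _ ≤ t ^ (-p / 2) * (A * ProbabilityTheory.beta (a + 1) (b + 1) * t ^ (a + b + 1)) := by
        gcongr
        exact hk.abs_timeConv_le ha hb ht x
    _ = A * ProbabilityTheory.beta (a + 1) (b + 1) * t ^ (a + b + 1 - p / 2) := by
        rw [sub_eq_add_neg, ← neg_div, Real.rpow_add ht₀ (a + b + 1)]
        ring
    _ ≤ _ := by
        gcongr
        exact ht.2

lemma abs_timeConv_sub_div_le_of_le (hk : IsHolderKernel T A a b κ k) (hT : T ≤ 1) (ha : -1 < a)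
    (hb : -1 < b - κ / 2) (hκ : 0 < κ) (hp : 0 ≤ a + b - κ / 2 + 1 - p / 2) {t t' x x' : ℝ}
    (ht : 0 < t) (htt' : t ≤ t') (ht' : t' ≤ T) (hne : (t', x') ≠ (t, x))
    (h : |t' - t| ≤ tnorm2 t t' ^ 2) :
    |timeConv k t' x' - timeConv k t x| / (tnorm2 t t' ^ p * pnormS (t', x') (t, x) ^ κ) ≤
      A * (ProbabilityTheory.beta (a + 1) (b - κ / 2 + 1) + 2 ^ |a| / (b + 1)) *
        T ^ (a + b - κ / 2 + 1 - p / 2) := by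
  have htT := htt'.trans ht'
  have ht₁ : t ∈ Set.Icc (0 : ℝ) 1 := ⟨ht.le, htT.trans hT⟩
  have hA := hk.nonneg (ht.trans_le htT)
  have hB := ProbabilityTheory.beta_pos (α := a + 1) (β := b - κ / 2 + 1) (by linarith)
    (by linarith)
  have hb₁ : 0 < b + 1 := by linarith
  have hdist := pnormS_pos hne
  rw [tnorm2_of_le ht.le htt', tnorm_rpow ht₁, div_le_iff₀ (by positivity)]
  calc _ ≤ _ := hk.abs_timeConv_sub_le ha hb hκ ht htt' ht'
        (le_two_mul_of_abs_sub_le_tnorm2_sq ht₁ htt' h) x x'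
    _ = A * (ProbabilityTheory.beta (a + 1) (b - κ / 2 + 1) + 2 ^ |a| / (b + 1)) *
          t ^ (a + b - κ / 2 + 1 - p / 2) * (t ^ (p / 2) * pnormS (t', x') (t, x) ^ κ) := by
        rw [Real.rpow_sub ht _ (p / 2)]
        field_simp
    _ ≤ _ := by gcongr

lemma abs_timeConv_sub_div_le (hk : IsHolderKernel T A a b κ k) (hT : T ≤ 1) (ha : -1 < a)
    (hb : -1 < b - κ / 2) (hκ : 0 < κ) (hp : 0 ≤ a + b - κ / 2 + 1 - p / 2) {t t' x x' : ℝ}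
    (ht : t ∈ Set.Ioc 0 T) (ht' : t' ∈ Set.Ioc 0 T) (hne : (t', x') ≠ (t, x))
    (h : |t' - t| ≤ tnorm2 t t' ^ 2) :
    |timeConv k t' x' - timeConv k t x| / (tnorm2 t t' ^ p * pnormS (t', x') (t, x) ^ κ) ≤
      A * (ProbabilityTheory.beta (a + 1) (b - κ / 2 + 1) + 2 ^ |a| / (b + 1)) *
        T ^ (a + b - κ / 2 + 1 - p / 2) := by
  rcases le_total t t' with htt' | htt'
  · exact hk.abs_timeConv_sub_div_le_of_le hT ha hb hκ hp ht.1 htt' ht'.2 hne h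
  · rw [abs_sub_comm, tnorm2_comm] at h ⊢
    rw [pnormS_comm]
    exact hk.abs_timeConv_sub_div_le_of_le hT ha hb hκ hp ht'.1 htt' ht.2 hne.symm h

end IsHolderKernel

lemma exists_isHolderKernel_heatKernel {β κ : ℝ} {n : ℕ} (r : ℕ) (hβ : β ≤ n)
    (hκ : κ ∈ Set.Icc (0 : ℝ) 1) : ∃ A, 0 < A ∧
    ∀ {T C a : ℝ} {ζ : ℝ → 𝓢(ℝ, ℝ) →L[ℝ] ℝ} {PK : ℝ → ℝ → 𝓢(ℝ, ℝ)}, T ≤ 1 →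
      (∀ φ, Measurable fun s => ζ s φ) →
      (∀ t x y, PK t x y = iteratedDeriv n (heatKernel t) (x - y)) →
      (∀ s ∈ Set.Ioc 0 T, HolderBound r β (C * s ^ a) (ζ s)) →
      IsHolderKernel T (A * C) a ((β - n) / 2) κ fun s τ x => ζ s (PK τ x) := by
  obtain ⟨F, hF⟩ := exists_schwartz_eq_iteratedDeriv_heatKernel n
  obtain ⟨A, hA, hbound⟩ := HolderBound.exists_abs_parabolicRescale_sub_le F r hβ hκ
  refine ⟨A, hA, fun {T C a ζ PK} hT hζ hPK hC => ?_⟩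
  have hscale {τ : ℝ} (hτ : 0 < τ) (x : ℝ) : PK τ x = parabolicRescale n τ x hτ F :=
    eq_parabolicRescale_of_eq_iteratedDeriv_heatKernel hF hτ (hPK τ x)
  refine ⟨fun τ x => hζ _, fun {s τ} x hs hτ => ?_, fun {s τ τ'} x x' hs hτ hττ' hτ' => ?_⟩
  · rw [hscale hτ.1, mul_assoc A]
    exact (hbound (hC s hs)).1 x hτ.1 (hτ.2.trans hT)
  · rw [hscale hτ, hscale (hτ.trans_le hττ'), mul_assoc A, ← sub_div]
    exact (hbound (hC s hs)).2 x x' hτ hττ' (hτ'.trans hT)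

theorem statement2_general (β ρ : ℝ) (n r : ℕ) (hρ : -2 < ρ) (hβ : β ≤ n) (θ₁ θ₂ : ℝ)
    (hθ₁ : θ₁ ∈ Set.Ioo 0 (β - (n : ℝ) + 2)) (hθ₁' : β + 1 - n ≤ θ₁) (hθ : 0 ≤ θ₁ - θ₂) :
    ∃ C' : ℝ, 0 < C' ∧
      ∀ T : ℝ, T ∈ Set.Ioc (0 : ℝ) 1 → ∀ C : ℝ, 0 < C →
      ∀ ζ : ℝ → (SchwartzMap ℝ ℝ →L[ℝ] ℝ),
        (∀ φ : SchwartzMap ℝ ℝ, Measurable fun s => ζ s φ) →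
        ∀ PK : ℝ → ℝ → SchwartzMap ℝ ℝ,
        (∀ t x y : ℝ, PK t x y = iteratedDeriv n (fun u => heatKernel t u) (x - y)) →
        (∀ t : ℝ, t ∈ Set.Ioc (0 : ℝ) T → ∀ x : ℝ, ∀ lam : ℝ, lam ∈ Set.Ioc (0 : ℝ) 1 →
          ∀ φ : ℝ → ℝ, IsTestFunction r φ →
          ∀ Φ : SchwartzMap ℝ ℝ, (∀ y : ℝ, Φ y = lam⁻¹ * φ (lam⁻¹ * (y - x))) →
          |ζ t Φ| ≤ C * lam ^ β * tnorm t ^ ρ) →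
        (∀ t x : ℝ, t ∈ Set.Ioc (0 : ℝ) T →
          tnorm t ^ (-((ρ + θ₂) + (β + 2 - (n : ℝ) - θ₁))) *
            |∫ s in Set.Ioo (0 : ℝ) t, ζ s (PK (t - s) x)| ≤
            C' * C * T ^ ((θ₁ - θ₂) / 2)) ∧
        (∀ t x tb xb : ℝ, t ∈ Set.Ioc (0 : ℝ) T → tb ∈ Set.Ioc (0 : ℝ) T →
          (tb, xb) ≠ (t, x) → |tb - t| ≤ tnorm2 t tb ^ 2 →
          |(∫ s in Set.Ioo (0 : ℝ) tb, ζ s (PK (tb - s) xb)) -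
              ∫ s in Set.Ioo (0 : ℝ) t, ζ s (PK (t - s) x)| /
            (tnorm2 t tb ^ (ρ + θ₂) * pnormS (tb, xb) (t, x) ^ (β + 2 - (n : ℝ) - θ₁)) ≤
            C' * C * T ^ ((θ₁ - θ₂) / 2)) := by
  set κ := β + 2 - (n : ℝ) - θ₁ with hκ
  have hκ₀ : 0 < κ := by linarith [hθ₁.2]
  have hb : -1 < (β - n) / 2 - κ / 2 := by linarith [hθ₁.1]
  obtain ⟨A, hA, hkernel⟩ := exists_isHolderKernel_heatKernel (κ := κ) r hβ ⟨hκ₀.le, by linarith⟩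
  let B := ProbabilityTheory.beta (ρ / 2 + 1) ((β - n) / 2 + 1)
  let D := ProbabilityTheory.beta (ρ / 2 + 1) ((β - n) / 2 - κ / 2 + 1) +
    2 ^ |ρ / 2| / ((β - n) / 2 + 1)
  have hB : 0 < B := ProbabilityTheory.beta_pos (by linarith) (by linarith)
  refine ⟨A * max B D, by positivity, fun T hT C hC ζ hζ PK hPK hbound => ?_⟩
  have hk := hkernel hT.2 hζ hPK (C := C) (a := ρ / 2) fun s hs x lam hlam hlam₁ φ hφ => by
    rw [mul_right_comm, ← tnorm_rpow ⟨hs.1.le, hs.2.trans hT.2⟩]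
    exact hbound s hs x lam ⟨hlam, hlam₁⟩ φ hφ _ (rescale_apply x hlam.ne' φ)
  have hT₀ := hT.1
  constructor
  · intro t x ht
    refine (hk.tnorm_rpow_neg_mul_abs_timeConv_le hT.2 (by linarith) (by linarith)
      (by linarith) ht x).trans ?_
    rw [show ρ / 2 + (β - n) / 2 + 1 - (ρ + θ₂ + κ) / 2 = (θ₁ - θ₂) / 2 by rw [hκ]; ring,
      mul_right_comm A]
    gcongr
    exact le_max_left B D
  · intro t x t' x' ht ht' hne h
    refine (hk.abs_timeConv_sub_div_le hT.2 (by linarith) hb hκ₀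
      (by linarith) ht ht' hne h).trans ?_
    rw [show ρ / 2 + (β - n) / 2 - κ / 2 + 1 - (ρ + θ₂) / 2 = (θ₁ - θ₂) / 2 by rw [hκ]; ring,
      mul_right_comm A]
    gcongr
    exact le_max_right B D

/-- Schauder-type estimate for the space-time convolution of the
`n`-th spatial derivative of the heat kernel with a distribution-valued
function of time.  Here `PK t x` is the Schwartz function `y ↦ P^{(n)}_t(x-y)`,
supplied as a hypothesis. -/
theorem statement2 (β ρ : ℝ) (n r : ℕ)
    (hβ : -2 < β) (hρ : ρ ∈ Set.Ioc (-2 : ℝ) 0)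
    (hn1 : β + 1 ≤ (n : ℝ)) (hn2 : (n : ℝ) < β + 2) (hr : |β| < (r : ℝ))
    (θ₁ θ₂ : ℝ) (hθ₁ : θ₁ ∈ Set.Ioo 0 (β - (n : ℝ) + 2)) (hθ : 0 < θ₁ - θ₂) :
    ∃ C' : ℝ, 0 < C' ∧
      ∀ T : ℝ, T ∈ Set.Ioc (0 : ℝ) 1 → ∀ C : ℝ, 0 < C →
      ∀ ζ : ℝ → (SchwartzMap ℝ ℝ →L[ℝ] ℝ),
        (∀ φ : SchwartzMap ℝ ℝ, Measurable fun s => ζ s φ) →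
        ∀ PK : ℝ → ℝ → SchwartzMap ℝ ℝ,
        (∀ t x y : ℝ, PK t x y = iteratedDeriv n (fun u => heatKernel t u) (x - y)) →
        (∀ t : ℝ, t ∈ Set.Ioc (0 : ℝ) T → ∀ x : ℝ, ∀ lam : ℝ, lam ∈ Set.Ioc (0 : ℝ) 1 →
          ∀ φ : ℝ → ℝ, IsTestFunction r φ →
          ∀ Φ : SchwartzMap ℝ ℝ, (∀ y : ℝ, Φ y = lam⁻¹ * φ (lam⁻¹ * (y - x))) →
          |ζ t Φ| ≤ C * lam ^ β * tnorm t ^ ρ) →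
        (∀ t x : ℝ, t ∈ Set.Ioc (0 : ℝ) T →
          tnorm t ^ (-((ρ + θ₂) + (β + 2 - (n : ℝ) - θ₁))) *
            |∫ s in Set.Ioo (0 : ℝ) t, ζ s (PK (t - s) x)| ≤
            C' * C * T ^ ((θ₁ - θ₂) / 2)) ∧
        (∀ t x tb xb : ℝ, t ∈ Set.Ioc (0 : ℝ) T → tb ∈ Set.Ioc (0 : ℝ) T →
          (tb, xb) ≠ (t, x) → |tb - t| ≤ tnorm2 t tb ^ 2 →
          |(∫ s in Set.Ioo (0 : ℝ) tb, ζ s (PK (tb - s) xb)) -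
              ∫ s in Set.Ioo (0 : ℝ) t, ζ s (PK (t - s) x)| /
            (tnorm2 t tb ^ (ρ + θ₂) * pnormS (tb, xb) (t, x) ^ (β + 2 - (n : ℝ) - θ₁)) ≤
            C' * C * T ^ ((θ₁ - θ₂) / 2)) := by
  exact statement2_general β ρ n r hρ.1 (by linarith) θ₁ θ₂ hθ₁ (by linarith [hθ₁.1]) hθ.le
end
end

section
/- Let a : ℤ → ℝ be finitely supported with a(−k) = a(k) for all k, Σ_k a(k) = 0, Σ_k k² a(k) = 2, and such that ν̂(θ) := Σ_k a(k) e^{−2πikθ} vanishes only for θ ∈ ℤ; set ν̄ := Σ_k |a(k)|. Let b : ℤ → ℝ be finitely supported with Σ_k b(k) = 0 and Σ_k k b(k) = 1. Let ψ ∈ 𝒮(ℝ) be a Schwartz function whose Fourier transform is supported in {ξ : |ξ| ≤ 3/4}, and for ε = 2^{−N} define P^ε_t(x) := ((Id + ε²Δ_ε)^{⌊t ε^{−2}⌋} ψ^ε)(x) for t ≥ 0 and x ∈ ℝ, and P^ε_t := 0 for t < 0, where ψ^ε(x) := ε^{−1} ψ(x/ε), Δ_ε φ(x) := (2ν̄ε²)^{−1}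 Σ_k a(k) φ(x+εk) and D_{x,ε} φ(x) := ε^{−1} Σ_k b(k) φ(x+εk). Then for any c > 0 and any j, k, m ∈ ℕ with m < ⌊c⌋ ∨ ⌊c^{−1}⌋ there exists a constant C, depending only on j, k and m (and on a, b, ψ, but not on ε), such that for all ε = 2^{−N}: |∂_x^k (D_{x,ε}^j P^ε_t)(x)| ≤ C |t|_ε^{−1−j−k+m} |x|^{−m} for all (t,x) ∈ ℝ² with |t|^{1/2} ∨ |x| ≥ cε, and |∂_x^k (D_{x,ε}^j P^ε_t)(x)| ≤ C |t|_ε^{−1−j−k} for all (t,x) ∈ ℝ² with |t|^{1/2} ∨ |x| < cε, where |t|_ε := |t|^{1/2} ∨ ε. -/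
open Real

noncomputable section

/-- The operator `Id + ε²Δ_ε` acting on functions on `ℝ`, where
`Δ_ε φ(x) = (2ν̄ε²)⁻¹ Σ_k a(k) φ(x+εk)` and `ν̄ = Σ_k |a(k)|`. -/
def stepOpR (a : ℤ →₀ ℝ) (ε : ℝ) (f : ℝ → ℝ) : ℝ → ℝ :=
  fun x => f x + (2 * ∑ k ∈ a.support, |a k|)⁻¹ * ∑ k ∈ a.support, a k * f (x + ε * k)

/-- The discrete derivative `D_{x,ε} φ(x) = ε⁻¹ Σ_k b(k) φ(x+εk)` acting on
functions on `ℝ`. -/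
def dDerivR (b : ℤ →₀ ℝ) (ε : ℝ) (f : ℝ → ℝ) : ℝ → ℝ :=
  fun x => ε⁻¹ * ∑ k ∈ b.support, b k * f (x + ε * k)

/-- The off-grid extension `P^ε_t = (Id + ε²Δ_ε)^{⌊tε⁻²⌋} ψ^ε` of the discrete
heat kernel, with `ψ^ε(x) = ε⁻¹ ψ(x/ε)`, and `P^ε_t = 0` for `t < 0`. -/
def PeKer (a : ℤ →₀ ℝ) (ε : ℝ) (ψ : ℝ → ℝ) (t : ℝ) : ℝ → ℝ :=
  if 0 ≤ t then (stepOpR a ε)^[Nat.floor (t / ε ^ 2)] (fun y => ε⁻¹ * ψ (y / ε))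
  else fun _ => 0

/-!
On the Fourier side one step is multiplication by a symbol `M(εξ)`, a discrete derivative is
multiplication by `ε⁻¹` times a symbol vanishing at the origin, and after rescaling to `ε = 1` the
kernel becomes the Fourier transform of `B(ξ)^j M(ξ)^n G(ξ)` with `G` supported in `|ξ| ≤ ρ < 1`.
There the only zero of the symbol of `a` is the nondegenerate one at the origin, so
`|M(ξ)| ≤ e^{-cξ²}`. Since `M` has no zeros and `M'(0) = 0`, the logarithmic derivative `n M' / M`
of `M ^ n` is `O(n|ξ|)`. Hence, with `R = √(n + 1)` and `y = Rξ`, each frequency derivative costs a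
factor `R (1 + |y|)`, while each factor vanishing at the origin gains `(1 + |y|) / R`; the Gaussian
in `y` absorbs the powers of `1 + |y|`. The integral in `ξ` contributes one more `R⁻¹`, and
integrating by parts `m` times gives the decay in `x`. Finally `εR` is comparable to `|t|_ε`.
-/

open Set MeasureTheory
open scoped ContDiff FourierTransform SchwartzMap

/-- Uniform symbol classes: the smooth functions `f n` are of size `W n` on `s`, and each derivative
costs at most a factor `L n`, with constants that do not depend on `n`. -/
structure IsUniformSymbol {ι : Type*} (s : Set ℝ) (L W : ι → ℝ → ℝ) (f : ι → ℝ → ℂ) : Prop where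
  contDiff : ∀ n, ContDiff ℝ ∞ (f n)
  bound : ∀ i : ℕ, ∃ C : ℝ, 0 ≤ C ∧
    ∀ n, ∀ ξ ∈ s, ‖iteratedDeriv i (f n) ξ‖ ≤ C * L n ξ ^ i * W n ξ

lemma norm_iteratedDeriv_mul_le_of_le {f g : ℝ → ℂ} (hf : ContDiff ℝ ∞ f) (hg : ContDiff ℝ ∞ g)
    {C D : ℕ → ℝ} {L v w ξ : ℝ} (i : ℕ)
    (hfC : ∀ l ≤ i, ‖iteratedDeriv l f ξ‖ ≤ C l * L ^ l * v)
    (hgD : ∀ l ≤ i, ‖iteratedDeriv l g ξ‖ ≤ D l * L ^ l * w) :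
    ‖iteratedDeriv i (fun x => f x * g x) ξ‖ ≤
      (∑ l ∈ Finset.range (i + 1), i.choose l * (C l * D (i - l))) * L ^ i * (v * w) := by
  rw [← norm_iteratedFDeriv_eq_norm_iteratedDeriv, Finset.sum_mul, Finset.sum_mul]
  refine (norm_iteratedFDeriv_mul_le hf hg ξ (mod_cast le_top)).trans
    (Finset.sum_le_sum fun l hl => ?_)
  simp only [norm_iteratedFDeriv_eq_norm_iteratedDeriv]
  have hli : l ≤ i := Finset.mem_range_succ_iff.1 hl
  have hmul := mul_le_mul (hfC l hli) (hgD (i - l) (i.sub_le l)) (norm_nonneg _)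
    ((norm_nonneg _).trans (hfC l hli))
  calc (i.choose l : ℝ) * ‖iteratedDeriv l f ξ‖ * ‖iteratedDeriv (i - l) g ξ‖
      ≤ i.choose l * (C l * L ^ l * v * (D (i - l) * L ^ (i - l) * w)) := by
        rw [mul_assoc]; gcongr
    _ = i.choose l * (C l * D (i - l)) * (L ^ l * L ^ (i - l)) * (v * w) := by ring
    _ = i.choose l * (C l * D (i - l)) * L ^ i * (v * w) := by
        rw [← pow_add, Nat.add_sub_cancel' hli]

lemma exists_norm_iteratedDeriv_le_of_isCompact {g : ℝ → ℂ} (hg : ContDiff ℝ ∞ g) {s : Set ℝ}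
    (hs : IsCompact s) (i : ℕ) : ∃ C : ℝ, 0 ≤ C ∧ ∀ ξ ∈ s, ‖iteratedDeriv i g ξ‖ ≤ C := by
  obtain ⟨C, hC⟩ := hs.exists_bound_of_continuousOn
    (hg.continuous_iteratedDeriv i (mod_cast le_top)).continuousOn
  exact ⟨max C 0, le_max_right _ _, fun ξ hξ => (hC ξ hξ).trans (le_max_left _ _)⟩

namespace IsUniformSymbol

variable {ι : Type*} {s : Set ℝ} {L V W : ι → ℝ → ℝ} {f g : ι → ℝ → ℂ}

lemma mul (hf : IsUniformSymbol s L V f) (hg : IsUniformSymbol s L W g) :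
    IsUniformSymbol s L (fun n ξ => V n ξ * W n ξ) (fun n ξ => f n ξ * g n ξ) where
  contDiff n := (hf.contDiff n).mul (hg.contDiff n)
  bound i := by
    choose C hC hfC using hf.bound
    choose D hD hgD using hg.bound
    exact ⟨_, Finset.sum_nonneg fun l _ => by have := hC l; have := hD (i - l); positivity,
      fun n ξ hξ => norm_iteratedDeriv_mul_le_of_le (hf.contDiff n) (hg.contDiff n) i
        (fun l _ => hfC l n ξ hξ) (fun l _ => hgD l n ξ hξ)⟩

lemma mono (hf : IsUniformSymbol s L V f) (hL : ∀ n, ∀ ξ ∈ s, 0 ≤ L n ξ)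
    (hVW : ∀ n, ∀ ξ ∈ s, V n ξ ≤ W n ξ) : IsUniformSymbol s L W f where
  contDiff := hf.contDiff
  bound i := by
    obtain ⟨C, hC, hfC⟩ := hf.bound i
    exact ⟨C, hC, fun n ξ hξ => (hfC n ξ hξ).trans <|
      mul_le_mul_of_nonneg_left (hVW n ξ hξ) (mul_nonneg hC (pow_nonneg (hL n ξ hξ) i))⟩

lemma const {g : ℝ → ℂ} (hg : ContDiff ℝ ∞ g) (hs : IsCompact s)
    (hL : ∀ n, ∀ ξ ∈ s, 1 ≤ L n ξ) : IsUniformSymbol s L (fun _ _ => 1) (fun _ => g) where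
  contDiff _ := hg
  bound i := by
    obtain ⟨C, hC, hgC⟩ := exists_norm_iteratedDeriv_le_of_isCompact hg hs i
    refine ⟨C, hC, fun n ξ hξ => (hgC ξ hξ).trans ?_⟩
    rw [mul_one]
    exact le_mul_of_one_le_right hC (one_le_pow₀ (hL n ξ hξ))

lemma pow (hf : IsUniformSymbol s L V f) (hs : IsCompact s)
    (hL : ∀ n, ∀ ξ ∈ s, 1 ≤ L n ξ) (k : ℕ) :
    IsUniformSymbol s L (fun n ξ => V n ξ ^ k) (fun n ξ => f n ξ ^ k) := by
  induction k with
  | zero => simpa only [pow_zero] using const contDiff_const hs hL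
  | succ k ih => simpa only [pow_succ] using ih.mul hf

lemma const_of_eq_zero {g : ℝ → ℂ} (hg : ContDiff ℝ ∞ g) (hg0 : g 0 = 0) {ρ : ℝ}
    (hL : ∀ n, ∀ ξ ∈ Icc (-ρ) ρ, 1 ≤ L n ξ)
    (hV : ∀ n, ∀ ξ ∈ Icc (-ρ) ρ, |ξ| ≤ V n ξ)
    (hLV : ∀ n, ∀ ξ ∈ Icc (-ρ) ρ, 1 ≤ L n ξ * V n ξ) :
    IsUniformSymbol (Icc (-ρ) ρ) L V (fun _ => g) where
  contDiff _ := hg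
  bound i := by
    rcases i with _ | i
    · obtain ⟨C, hC, hgC⟩ := exists_norm_iteratedDeriv_le_of_isCompact hg isCompact_Icc 1
      refine ⟨C, hC, fun n ξ hξ => ?_⟩
      have hmean : ‖g ξ - g 0‖ ≤ C * ‖ξ - 0‖ :=
        (convex_Icc (-ρ) ρ).norm_image_sub_le_of_norm_deriv_le
          (fun x _ => (hg.differentiable (by simp)).differentiableAt)
          (fun x hx => iteratedDeriv_one (f := g) ▸ hgC x hx)
          (by constructor <;> linarith [hξ.1, hξ.2]) hξ
      rw [hg0, sub_zero, sub_zero, norm_eq_abs] at hmean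
      simpa using hmean.trans (mul_le_mul_of_nonneg_left (hV n ξ hξ) hC)
    · obtain ⟨C, hC, hgC⟩ := exists_norm_iteratedDeriv_le_of_isCompact hg isCompact_Icc (i + 1)
      refine ⟨C, hC, fun n ξ hξ => (hgC ξ hξ).trans ?_⟩
      calc C ≤ C * (L n ξ ^ i * (L n ξ * V n ξ)) :=
            le_mul_of_one_le_right hC
              (one_le_mul_of_one_le_of_one_le (one_le_pow₀ (hL n ξ hξ)) (hLV n ξ hξ))
        _ = C * L n ξ ^ (i + 1) * V n ξ := by ring

lemma const_mul (hf : IsUniformSymbol s L V f) (c : ι → ℂ) :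
    IsUniformSymbol s L (fun n ξ => ‖c n‖ * V n ξ) (fun n ξ => c n * f n ξ) where
  contDiff n := contDiff_const.mul (hf.contDiff n)
  bound i := by
    obtain ⟨C, hC, hfC⟩ := hf.bound i
    refine ⟨C, hC, fun n ξ hξ => ?_⟩
    rw [iteratedDeriv_const_mul_field, norm_mul]
    exact (mul_le_mul_of_nonneg_left (hfC n ξ hξ) (norm_nonneg _)).trans_eq (by ring)

lemma of_deriv_eq_mul {Q : ι → ℝ → ℂ} (hf : ∀ n, ContDiff ℝ ∞ (f n))
    (hQ : IsUniformSymbol s L L Q) (hfQ : ∀ n, deriv (f n) = fun ξ => Q n ξ * f n ξ) :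
    IsUniformSymbol s L (fun n ξ => ‖f n ξ‖) f where
  contDiff := hf
  bound i := by
    induction i using Nat.strong_induction_on with
    | _ i ih =>
      rcases i with _ | i
      · exact ⟨1, zero_le_one, fun n ξ _ => by simp⟩
      choose C hC hQC using hQ.bound
      choose! D hD hfD using ih
      refine ⟨∑ l ∈ Finset.range (i + 1), i.choose l * (C l * D (i - l)),
        Finset.sum_nonneg fun l _ => ?_, fun n ξ hξ => ?_⟩
      · have := hC l
        have := hD (i - l) (by omega)
        positivity
      · rw [iteratedDeriv_succ', hfQ]
        refine (norm_iteratedDeriv_mul_le_of_le (hQ.contDiff n) (hf n) i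
          (fun l _ => hQC l n ξ hξ) (fun l hl => hfD l (by omega) n ξ hξ)).trans_eq ?_
        ring

lemma pow_index {M : ℝ → ℂ} (hM : ContDiff ℝ ∞ M) (hM0 : ∀ ξ, M ξ ≠ 0) {L V : ℕ → ℝ → ℝ}
    (hlog : IsUniformSymbol s L V fun _ ξ => deriv M ξ / M ξ) (hL : ∀ n, ∀ ξ ∈ s, 0 ≤ L n ξ)
    (hVL : ∀ n : ℕ, ∀ ξ ∈ s, n * V n ξ ≤ L n ξ) :
    IsUniformSymbol s L (fun n ξ => ‖M ξ‖ ^ n) (fun n ξ => M ξ ^ n) := by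
  have hQ : IsUniformSymbol s L L fun n ξ => (n : ℂ) * (deriv M ξ / M ξ) :=
    (hlog.const_mul fun n => (n : ℂ)).mono hL (by simpa using hVL)
  have hderiv (n : ℕ) :
      deriv (fun ξ => M ξ ^ n) = fun ξ => (n : ℂ) * (deriv M ξ / M ξ) * M ξ ^ n := by
    ext ξ
    rw [((hM.differentiable (by simp)) ξ).hasDerivAt.fun_pow n |>.deriv]
    rcases n with _ | n
    · simp
    · have := hM0 ξ
      simp only [Nat.add_sub_cancel]
      field_simp
      ring
  simpa only [norm_pow] using of_deriv_eq_mul (fun n => hM.pow n) hQ hderiv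

end IsUniformSymbol

/-- The diffusive length scale `√(n + 1)` after `n` steps; the shift by one keeps it positive. -/
def diffusiveScale (n : ℕ) : ℝ := √(n + 1)

lemma diffusiveScale_sq (n : ℕ) : diffusiveScale n ^ 2 = n + 1 := sq_sqrt (by positivity)

lemma one_le_diffusiveScale (n : ℕ) : 1 ≤ diffusiveScale n :=
  one_le_sqrt.2 (le_add_of_nonneg_left n.cast_nonneg)

lemma diffusiveScale_pos (n : ℕ) : 0 < diffusiveScale n :=
  zero_lt_one.trans_le (one_le_diffusiveScale n)

/-- The frequency size `1/√(n + 1) + |ξ|`: up to a constant, `|ξ|` cut off from below at the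
frequency dual to the diffusive scale. -/
def parabolicWeight (n : ℕ) (ξ : ℝ) : ℝ := (diffusiveScale n)⁻¹ + |ξ|

/-- The factor `√(n + 1) + (n + 1)|ξ|` which a frequency derivative of the symbol of `n` steps
costs. -/
def parabolicRate (n : ℕ) (ξ : ℝ) : ℝ := diffusiveScale n ^ 2 * parabolicWeight n ξ

lemma parabolicWeight_eq (n : ℕ) (ξ : ℝ) :
    parabolicWeight n ξ = (diffusiveScale n)⁻¹ * (1 + |diffusiveScale n * ξ|) := by
  have hR := diffusiveScale_pos n
  rw [parabolicWeight, abs_mul, abs_of_pos hR]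
  field_simp

lemma parabolicRate_eq (n : ℕ) (ξ : ℝ) :
    parabolicRate n ξ = diffusiveScale n * (1 + |diffusiveScale n * ξ|) := by
  have hR := diffusiveScale_pos n
  rw [parabolicRate, parabolicWeight_eq]
  field_simp

lemma one_le_parabolicRate (n : ℕ) (ξ : ℝ) : 1 ≤ parabolicRate n ξ := by
  rw [parabolicRate_eq]
  exact one_le_mul_of_one_le_of_one_le (one_le_diffusiveScale n)
    (le_add_of_nonneg_right (abs_nonneg _))

lemma abs_le_parabolicWeight (n : ℕ) (ξ : ℝ) : |ξ| ≤ parabolicWeight n ξ :=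
  le_add_of_nonneg_left (inv_nonneg.2 (diffusiveScale_pos n).le)

lemma parabolicRate_mul_parabolicWeight (n : ℕ) (ξ : ℝ) :
    parabolicRate n ξ * parabolicWeight n ξ = (1 + |diffusiveScale n * ξ|) ^ 2 := by
  have hR := diffusiveScale_pos n
  rw [parabolicRate_eq, parabolicWeight_eq]
  field_simp

lemma one_le_parabolicRate_mul_parabolicWeight (n : ℕ) (ξ : ℝ) :
    1 ≤ parabolicRate n ξ * parabolicWeight n ξ := by
  rw [parabolicRate_mul_parabolicWeight]
  exact one_le_pow₀ (le_add_of_nonneg_right (abs_nonneg _))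

lemma natCast_mul_parabolicWeight_le (n : ℕ) (ξ : ℝ) :
    n * parabolicWeight n ξ ≤ parabolicRate n ξ := by
  rw [parabolicRate, diffusiveScale_sq]
  have := (abs_nonneg ξ).trans (abs_le_parabolicWeight n ξ)
  gcongr
  exact le_add_of_nonneg_right zero_le_one

/-- A Gaussian with a polynomial factor: the integrable profile, in the frequency rescaled by
`diffusiveScale n`, that dominates the symbols of `n` steps uniformly in `n`. -/
def gaussianProfile (c : ℝ) (p : ℕ) (y : ℝ) : ℝ := (1 + |y|) ^ p * exp (-c * y ^ 2)

lemma gaussianProfile_nonneg (c : ℝ) (p : ℕ) (y : ℝ) : 0 ≤ gaussianProfile c p y := by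
  unfold gaussianProfile; positivity

lemma integrable_gaussianProfile {c : ℝ} (hc : 0 < c) (p : ℕ) :
    Integrable (gaussianProfile c p) := by
  have hterm (i : ℕ) : Integrable fun y : ℝ => p.choose i * |y| ^ i * exp (-c * y ^ 2) := by
    have hi : (-1 : ℝ) < i := by linarith [i.cast_nonneg (α := ℝ)]
    refine ((integrable_rpow_mul_exp_neg_mul_sq hc hi).norm.const_mul (p.choose i : ℝ)).congr
      (.of_forall fun y => ?_)
    simp [rpow_natCast, mul_assoc]
  refine (integrable_finsetSum (Finset.range (p + 1)) fun i _ => hterm i).congr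
    (.of_forall fun y => ?_)
  simp only [gaussianProfile, add_comm (1 : ℝ), add_pow, one_pow, mul_one, Finset.sum_mul]
  exact Finset.sum_congr rfl fun i _ => by ring

lemma pow_le_exp_mul_exp_diffusiveScale {c ρ v ξ : ℝ} (hc : 0 ≤ c) (hξ : |ξ| ≤ ρ) (hv : 0 ≤ v)
    (hvξ : v ≤ exp (-c * ξ ^ 2)) (n : ℕ) :
    v ^ n ≤ exp (c * ρ ^ 2) * exp (-c * (diffusiveScale n * ξ) ^ 2) := by
  have hξρ : ξ ^ 2 ≤ ρ ^ 2 := sq_le_sq.2 (hξ.trans (le_abs_self ρ))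
  calc v ^ n ≤ exp (-c * ξ ^ 2) ^ n := pow_le_pow_left₀ hv hvξ n
    _ ≤ exp (c * ρ ^ 2) * exp (-c * (diffusiveScale n * ξ) ^ 2) := by
      rw [← exp_nat_mul, ← exp_add, exp_le_exp, mul_pow, diffusiveScale_sq]
      nlinarith [mul_le_mul_of_nonneg_left hξρ hc]

lemma iteratedDeriv_eq_zero_of_lt_abs {f : ℝ → ℂ} {ρ : ℝ} (hf : ∀ ξ, ρ < |ξ| → f ξ = 0) {ξ : ℝ}
    (hξ : ρ < |ξ|) (i : ℕ) : iteratedDeriv i f ξ = 0 := by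
  have hzero : f =ᶠ[nhds ξ] fun _ => 0 := by
    filter_upwards [(isOpen_lt continuous_const continuous_abs).mem_nhds hξ] with x hx using hf x hx
  rw [hzero.iteratedDeriv_eq, iteratedDeriv_const]
  simp

lemma IsUniformSymbol.exists_norm_iteratedDeriv_le_gaussianProfile {f : ℕ → ℝ → ℂ} {M : ℝ → ℂ}
    {c ρ : ℝ} (hc : 0 ≤ c) {r : ℕ}
    (hf : IsUniformSymbol (Icc (-ρ) ρ) parabolicRate
      (fun n ξ => parabolicWeight n ξ ^ r * ‖M ξ‖ ^ n) f)
    (hM : ∀ ξ, |ξ| ≤ ρ → ‖M ξ‖ ≤ exp (-c * ξ ^ 2))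
    (hsupp : ∀ n ξ, ρ < |ξ| → f n ξ = 0) (m : ℕ) :
    ∃ C : ℝ, 0 ≤ C ∧ ∀ n ξ, diffusiveScale n ^ r * ‖iteratedDeriv m (f n) ξ‖ ≤
      C * diffusiveScale n ^ m * gaussianProfile c (m + r) (diffusiveScale n * ξ) := by
  obtain ⟨C, hC, hfC⟩ := hf.bound m
  refine ⟨C * exp (c * ρ ^ 2), by positivity, fun n ξ => ?_⟩
  have hR := diffusiveScale_pos n
  rcases lt_or_ge ρ |ξ| with hξ | hξ
  · rw [iteratedDeriv_eq_zero_of_lt_abs (hsupp n) hξ, norm_zero, mul_zero]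
    have := gaussianProfile_nonneg c (m + r) (diffusiveScale n * ξ)
    positivity
  calc diffusiveScale n ^ r * ‖iteratedDeriv m (f n) ξ‖
      ≤ diffusiveScale n ^ r *
          (C * parabolicRate n ξ ^ m * (parabolicWeight n ξ ^ r * ‖M ξ‖ ^ n)) := by
        gcongr
        exact hfC n ξ (abs_le.1 hξ)
    _ = C * diffusiveScale n ^ m * (1 + |diffusiveScale n * ξ|) ^ (m + r) * ‖M ξ‖ ^ n := by
        rw [parabolicRate_eq, parabolicWeight_eq, mul_pow, mul_pow, inv_pow, pow_add]
        field_simp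
    _ ≤ C * diffusiveScale n ^ m * (1 + |diffusiveScale n * ξ|) ^ (m + r) *
          (exp (c * ρ ^ 2) * exp (-c * (diffusiveScale n * ξ) ^ 2)) := by
        gcongr
        exact pow_le_exp_mul_exp_diffusiveScale hc hξ (norm_nonneg _) (hM ξ hξ) n
    _ = C * exp (c * ρ ^ 2) * diffusiveScale n ^ m *
          gaussianProfile c (m + r) (diffusiveScale n * ξ) := by
        rw [gaussianProfile]; ring

lemma IsUniformSymbol.exists_integral_norm_iteratedDeriv_le {f : ℕ → ℝ → ℂ} {M : ℝ → ℂ}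
    {c ρ : ℝ} (hc : 0 < c) {r : ℕ}
    (hf : IsUniformSymbol (Icc (-ρ) ρ) parabolicRate
      (fun n ξ => parabolicWeight n ξ ^ r * ‖M ξ‖ ^ n) f)
    (hM : ∀ ξ, |ξ| ≤ ρ → ‖M ξ‖ ≤ exp (-c * ξ ^ 2))
    (hsupp : ∀ n ξ, ρ < |ξ| → f n ξ = 0) (m : ℕ) :
    ∃ C : ℝ, 0 ≤ C ∧ ∀ n, diffusiveScale n ^ (r + 1) * ∫ ξ, ‖iteratedDeriv m (f n) ξ‖ ≤
      C * diffusiveScale n ^ m := by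
  obtain ⟨C, hC, hfC⟩ := hf.exists_norm_iteratedDeriv_le_gaussianProfile hc.le hM hsupp m
  have hint := integrable_gaussianProfile hc (m + r)
  refine ⟨C * ∫ y, gaussianProfile c (m + r) y,
    mul_nonneg hC (integral_nonneg (gaussianProfile_nonneg c _)), fun n => ?_⟩
  have hR := diffusiveScale_pos n
  have hle : diffusiveScale n ^ r * ∫ ξ, ‖iteratedDeriv m (f n) ξ‖ ≤
      C * diffusiveScale n ^ m * ∫ ξ, gaussianProfile c (m + r) (diffusiveScale n * ξ) := by
    rw [← integral_const_mul, ← integral_const_mul]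
    exact integral_mono_of_nonneg (.of_forall fun ξ => by positivity)
      ((hint.comp_mul_left' hR.ne').const_mul _) (.of_forall (hfC n))
  rw [Measure.integral_comp_mul_left, abs_of_pos (inv_pos.2 hR), smul_eq_mul] at hle
  calc diffusiveScale n ^ (r + 1) * ∫ ξ, ‖iteratedDeriv m (f n) ξ‖
      = diffusiveScale n * (diffusiveScale n ^ r * ∫ ξ, ‖iteratedDeriv m (f n) ξ‖) := by ring
    _ ≤ diffusiveScale n * (C * diffusiveScale n ^ m *
          ((diffusiveScale n)⁻¹ * ∫ y, gaussianProfile c (m + r) y)) := by gcongr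
    _ = (C * ∫ y, gaussianProfile c (m + r) y) * diffusiveScale n ^ m := by field_simp

/-- The symbol `Σ_k a(k) e^{-2πikξ}` of the operator `f ↦ Σ_k a(k) f(· + k)`. -/
def latticeSymbol (a : ℤ →₀ ℝ) (ξ : ℝ) : ℂ :=
  ∑ k ∈ a.support, (a k : ℂ) * Complex.exp (-(2 * π * k * ξ) * Complex.I)

/-- The symbol of one step `Id + ε²Δ_ε` at `ε = 1`. -/
def stepSymbol (a : ℤ →₀ ℝ) (ξ : ℝ) : ℂ :=
  1 + ((2 * ∑ k ∈ a.support, |a k|)⁻¹ : ℝ) * latticeSymbol a ξ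

/-- The function with `latticeSymbol a ξ = -ξ² * symbolQuotient a ξ` for symmetric `a` of mass
zero; through `sinc` it is defined and continuous at `ξ = 0` too. -/
def symbolQuotient (a : ℤ →₀ ℝ) (ξ : ℝ) : ℝ :=
  2 * π ^ 2 * ∑ k ∈ a.support, (k : ℝ) ^ 2 * a k * sinc (π * k * ξ) ^ 2

section Symbol

variable {a : ℤ →₀ ℝ}

@[fun_prop]
lemma contDiff_latticeSymbol (a : ℤ →₀ ℝ) : ContDiff ℝ ∞ (latticeSymbol a) := by
  unfold latticeSymbol
  have : ContDiff ℝ ∞ Complex.ofReal := Complex.ofRealCLM.contDiff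
  fun_prop

@[fun_prop]
lemma contDiff_stepSymbol (a : ℤ →₀ ℝ) : ContDiff ℝ ∞ (stepSymbol a) := by
  unfold stepSymbol
  fun_prop

@[fun_prop]
lemma continuous_symbolQuotient (a : ℤ →₀ ℝ) : Continuous (symbolQuotient a) := by
  unfold symbolQuotient
  fun_prop

lemma latticeSymbol_zero (ha0 : ∑ k ∈ a.support, a k = 0) : latticeSymbol a 0 = 0 := by
  simp [latticeSymbol, ← Complex.ofReal_sum, ha0]

lemma norm_latticeSymbol_le (a : ℤ →₀ ℝ) (ξ : ℝ) :
    ‖latticeSymbol a ξ‖ ≤ ∑ k ∈ a.support, |a k| := by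
  refine (norm_sum_le _ _).trans_eq (Finset.sum_congr rfl fun k _ => ?_)
  rw [norm_mul, Complex.norm_real, norm_eq_abs, ← Complex.ofReal_ofNat, ← Complex.ofReal_intCast]
  rw [← Complex.ofReal_mul, ← Complex.ofReal_mul, ← Complex.ofReal_mul, ← Complex.ofReal_neg,
    Complex.norm_exp_ofReal_mul_I, mul_one]

lemma sum_support_comp_neg {A : Type*} [AddCommMonoid A] (ha_symm : ∀ k, a (-k) = a k)
    (f : ℤ → A) : ∑ k ∈ a.support, f (-k) = ∑ k ∈ a.support, f k :=
  Finset.sum_nbij' (- ·) (- ·) (by simp [ha_symm]) (by simp [ha_symm]) (by simp) (by simp)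
    (by simp)

lemma latticeSymbol_neg (ha_symm : ∀ k, a (-k) = a k) (ξ : ℝ) :
    latticeSymbol a (-ξ) = latticeSymbol a ξ := by
  rw [latticeSymbol, latticeSymbol, ← sum_support_comp_neg ha_symm]
  exact Finset.sum_congr rfl fun k _ => by rw [ha_symm]; push_cast; ring_nf

lemma latticeSymbol_eq_sum_cos (ha_symm : ∀ k, a (-k) = a k) (ξ : ℝ) :
    latticeSymbol a ξ = ∑ k ∈ a.support, a k * cos (2 * π * k * ξ) := by
  have htwo : latticeSymbol a ξ + latticeSymbol a (-ξ) =
      2 * ((∑ k ∈ a.support, a k * cos (2 * π * k * ξ) : ℝ) : ℂ) := by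
    rw [latticeSymbol, latticeSymbol, ← Finset.sum_add_distrib, Complex.ofReal_sum, Finset.mul_sum]
    refine Finset.sum_congr rfl fun k _ => ?_
    rw [Complex.ofReal_mul, Complex.ofReal_cos, mul_left_comm, Complex.two_cos]
    push_cast
    ring_nf
  rw [latticeSymbol_neg ha_symm, ← two_mul] at htwo
  exact mul_left_cancel₀ two_ne_zero htwo

lemma mul_sinc (x : ℝ) : x * sinc x = sin x := by
  rcases eq_or_ne x 0 with rfl | hx
  · simp
  · rw [sinc_of_ne_zero hx, mul_div_cancel₀ _ hx]

lemma latticeSymbol_eq_neg_sq_mul (ha_symm : ∀ k, a (-k) = a k)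
    (ha0 : ∑ k ∈ a.support, a k = 0) (ξ : ℝ) :
    latticeSymbol a ξ = ((-(ξ ^ 2 * symbolQuotient a ξ) : ℝ) : ℂ) := by
  have hterm (k : ℤ) : a k * cos (2 * π * k * ξ) =
      a k - ξ ^ 2 * (2 * π ^ 2 * (k ^ 2 * a k * sinc (π * k * ξ) ^ 2)) := by
    rw [show 2 * π * k * ξ = 2 * (π * k * ξ) by ring, cos_two_mul, cos_sq', ← mul_sinc]
    ring
  rw [latticeSymbol_eq_sum_cos ha_symm, Finset.sum_congr rfl fun k _ => hterm k,
    Finset.sum_sub_distrib, ha0, symbolQuotient, Finset.mul_sum, Finset.mul_sum, zero_sub]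

lemma symbolQuotient_zero (a : ℤ →₀ ℝ) :
    symbolQuotient a 0 = 2 * π ^ 2 * ∑ k ∈ a.support, (k : ℝ) ^ 2 * a k := by
  simp [symbolQuotient]

lemma symbolQuotient_pos (ha_symm : ∀ k, a (-k) = a k) (ha0 : ∑ k ∈ a.support, a k = 0)
    (ha2 : 0 < ∑ k ∈ a.support, (k : ℝ) ^ 2 * a k)
    (ha_zero : ∀ θ, latticeSymbol a θ = 0 → ∃ z : ℤ, θ = z) {ξ : ℝ} (hξ : |ξ| < 1) :
    0 < symbolQuotient a ξ := by
  have hzero : 0 < symbolQuotient a 0 := by rw [symbolQuotient_zero]; positivity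
  have hne : ∀ θ, |θ| < 1 → symbolQuotient a θ ≠ 0 := fun θ hθ hq => by
    obtain ⟨z, rfl⟩ := ha_zero θ (by simp [latticeSymbol_eq_neg_sq_mul ha_symm ha0, hq])
    obtain rfl : z = 0 := Int.abs_lt_one_iff.1 (mod_cast hθ)
    exact hzero.ne' (mod_cast hq)
  by_contra! hneg
  obtain ⟨θ, hθ, hqθ⟩ := intermediate_value_uIcc (a := ξ) (b := 0)
    (continuous_symbolQuotient a).continuousOn (Icc_subset_uIcc ⟨hneg, hzero.le⟩)
  have hθξ : |θ| ≤ |ξ| := by simpa using abs_sub_right_of_mem_uIcc hθ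
  exact hne θ (hθξ.trans_lt hξ) hqθ

lemma exists_pos_le_symbolQuotient (ha_symm : ∀ k, a (-k) = a k)
    (ha0 : ∑ k ∈ a.support, a k = 0) (ha2 : 0 < ∑ k ∈ a.support, (k : ℝ) ^ 2 * a k)
    (ha_zero : ∀ θ, latticeSymbol a θ = 0 → ∃ z : ℤ, θ = z) {ρ : ℝ} (hρ : ρ < 1) :
    ∃ c, 0 < c ∧ ∀ ξ, |ξ| ≤ ρ → c ≤ symbolQuotient a ξ := by
  obtain ⟨c, hc, hcq⟩ := isCompact_Icc.exists_forall_le' (continuous_symbolQuotient a).continuousOn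
    fun ξ hξ => symbolQuotient_pos ha_symm ha0 ha2 ha_zero ((abs_le.2 hξ).trans_lt hρ)
  exact ⟨c, hc, fun ξ hξ => hcq ξ (abs_le.1 hξ)⟩

lemma sum_abs_pos (ha2 : 0 < ∑ k ∈ a.support, (k : ℝ) ^ 2 * a k) :
    0 < ∑ k ∈ a.support, |a k| :=
  Finset.sum_pos (fun _ hk => abs_pos.2 (Finsupp.mem_support_iff.1 hk)) <|
    Finset.nonempty_iff_ne_empty.2 fun h => by simp [h] at ha2

lemma norm_stepSymbol_sub_one_le (a : ℤ →₀ ℝ) (ξ : ℝ) : ‖stepSymbol a ξ - 1‖ ≤ 1 / 2 := by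
  have hν : 0 ≤ ∑ k ∈ a.support, |a k| := Finset.sum_nonneg fun _ _ => abs_nonneg _
  rw [stepSymbol, add_sub_cancel_left, norm_mul, Complex.norm_real, norm_eq_abs,
    abs_of_nonneg (by positivity), mul_inv, mul_assoc, one_div]
  refine mul_le_of_le_one_right (by positivity) ?_
  rw [inv_mul_eq_div]
  exact div_le_one_of_le₀ (norm_latticeSymbol_le a ξ) hν

lemma stepSymbol_ne_zero (a : ℤ →₀ ℝ) (ξ : ℝ) : stepSymbol a ξ ≠ 0 := fun h => by
  have := norm_stepSymbol_sub_one_le a ξ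
  norm_num [h] at this

lemma deriv_stepSymbol_zero (ha_symm : ∀ k, a (-k) = a k) : deriv (stepSymbol a) 0 = 0 := by
  have heven : (fun ξ => stepSymbol a (-ξ)) = stepSymbol a := by
    ext ξ; simp only [stepSymbol, latticeSymbol_neg ha_symm]
  have := deriv_comp_neg (stepSymbol a) 0
  rw [heven, neg_zero] at this
  exact self_eq_neg.1 this

lemma exists_norm_stepSymbol_le_exp (ha_symm : ∀ k, a (-k) = a k)
    (ha0 : ∑ k ∈ a.support, a k = 0) (ha2 : 0 < ∑ k ∈ a.support, (k : ℝ) ^ 2 * a k)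
    (ha_zero : ∀ θ, latticeSymbol a θ = 0 → ∃ z : ℤ, θ = z) {ρ : ℝ} (hρ : ρ < 1) :
    ∃ c, 0 < c ∧ ∀ ξ, |ξ| ≤ ρ → ‖stepSymbol a ξ‖ ≤ exp (-c * ξ ^ 2) := by
  obtain ⟨c, hc, hcq⟩ := exists_pos_le_symbolQuotient ha_symm ha0 ha2 ha_zero hρ
  have hν := sum_abs_pos ha2
  refine ⟨(2 * ∑ k ∈ a.support, |a k|)⁻¹ * c, by positivity, fun ξ hξ => ?_⟩
  set r := (2 * ∑ k ∈ a.support, |a k|)⁻¹ * (ξ ^ 2 * symbolQuotient a ξ) with hr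
  have hstep : stepSymbol a ξ = ((1 - r : ℝ) : ℂ) := by
    rw [stepSymbol, latticeSymbol_eq_neg_sq_mul ha_symm ha0, hr]
    push_cast
    ring
  have hr_le : r ≤ 1 / 2 := by
    have := norm_stepSymbol_sub_one_le a ξ
    rw [hstep, ← Complex.ofReal_one, ← Complex.ofReal_sub, Complex.norm_real] at this
    linarith [neg_le_of_abs_le this]
  have hcr : (2 * ∑ k ∈ a.support, |a k|)⁻¹ * c * ξ ^ 2 ≤ r := by
    rw [hr, mul_assoc, mul_comm c]
    gcongr
    exact hcq ξ hξ
  rw [hstep, Complex.norm_real, norm_eq_abs, abs_of_nonneg (by linarith)]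
  calc 1 - r ≤ exp (-r) := one_sub_le_exp_neg r
    _ ≤ exp (-((2 * ∑ k ∈ a.support, |a k|)⁻¹ * c) * ξ ^ 2) := by
      rw [exp_le_exp]; linarith

end Symbol

/-- `T` acts as the Fourier multiplier `μ` on the real functions that are the Fourier transform of
an integrable function; integrability is preserved so that multipliers can be composed. -/
def IsFourierMultiplier (T : (ℝ → ℝ) → ℝ → ℝ) (μ : ℝ → ℂ) : Prop :=
  ∀ (F : ℝ → ℝ) (H : ℝ → ℂ), Integrable H → (∀ x, (F x : ℂ) = 𝓕 H x) →
    Integrable (fun ξ => μ ξ * H ξ) ∧ ∀ x, (T F x : ℂ) = 𝓕 (fun ξ => μ ξ * H ξ) x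

namespace IsFourierMultiplier

variable {T S : (ℝ → ℝ) → ℝ → ℝ} {μ ν : ℝ → ℂ}

lemma id : IsFourierMultiplier (fun F => F) fun _ => 1 :=
  fun F H hH hF => by simpa only [one_mul] using ⟨hH, hF⟩

lemma zero : IsFourierMultiplier (fun _ _ => 0) fun _ => 0 := fun F H _ _ => by
  simp [fourier_eq]

lemma add (hT : IsFourierMultiplier T μ) (hS : IsFourierMultiplier S ν) :
    IsFourierMultiplier (fun F x => T F x + S F x) fun ξ => μ ξ + ν ξ := fun F H hH hF => by
  obtain ⟨hTi, hTF⟩ := hT F H hH hF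
  obtain ⟨hSi, hSF⟩ := hS F H hH hF
  simp only [add_mul]
  refine ⟨hTi.add hSi, fun x => ?_⟩
  rw [Complex.ofReal_add, hTF, hSF]
  exact congrFun (VectorFourier.fourierIntegral_add continuous_fourierChar continuous_inner
    hTi hSi).symm x

lemma const_mul (hT : IsFourierMultiplier T μ) (c : ℝ) :
    IsFourierMultiplier (fun F x => c * T F x) fun ξ => c * μ ξ := fun F H hH hF => by
  obtain ⟨hTi, hTF⟩ := hT F H hH hF
  simp only [mul_assoc]
  refine ⟨hTi.const_mul _, fun x => ?_⟩
  rw [Complex.ofReal_mul, hTF]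
  exact congrFun (VectorFourier.fourierIntegral_const_smul 𝐞 volume (innerₗ ℝ) _ (c : ℂ)).symm x

lemma sum {ι : Type*} (s : Finset ι) {T : ι → (ℝ → ℝ) → ℝ → ℝ} {μ : ι → ℝ → ℂ}
    (hT : ∀ k ∈ s, IsFourierMultiplier (T k) (μ k)) :
    IsFourierMultiplier (fun F x => ∑ k ∈ s, T k F x) fun ξ => ∑ k ∈ s, μ k ξ := by
  classical
  induction s using Finset.induction_on with
  | empty => simpa only [Finset.sum_empty] using zero
  | insert k s hk ih =>
    simp only [Finset.sum_insert hk]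
    exact (hT k (Finset.mem_insert_self k s)).add
      (ih fun l hl => hT l (Finset.mem_insert_of_mem hl))

lemma iterate (hT : IsFourierMultiplier T μ) (n : ℕ) :
    IsFourierMultiplier T^[n] fun ξ => μ ξ ^ n := by
  induction n with
  | zero => simp only [pow_zero]; exact id
  | succ n ih =>
    intro F H hH hF
    obtain ⟨hi, hiF⟩ := ih F H hH hF
    simpa only [Function.iterate_succ_apply', pow_succ', mul_assoc] using hT _ _ hi hiF

lemma translate (y : ℝ) : IsFourierMultiplier (fun F x => F (x + y))
    fun ξ => Complex.exp (-(2 * π * y * ξ) * Complex.I) := fun F H hH hF => by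
  refine ⟨hH.bdd_mul (c := 1) (by fun_prop) (.of_forall fun ξ => ?_), fun x => ?_⟩
  · simp [Complex.norm_exp]
  · rw [hF, fourier_real_eq_integral_exp_smul, fourier_real_eq_integral_exp_smul]
    refine integral_congr_ae (.of_forall fun ξ => ?_)
    simp only [smul_eq_mul, ← mul_assoc, ← Complex.exp_add]
    push_cast
    ring_nf

end IsFourierMultiplier

lemma isFourierMultiplier_sum_mul_translate (a : ℤ →₀ ℝ) (ε : ℝ) :
    IsFourierMultiplier (fun F x => ∑ k ∈ a.support, a k * F (x + ε * k))
      fun ξ => latticeSymbol a (ε * ξ) := by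
  convert IsFourierMultiplier.sum a.support
    (fun k _ => (IsFourierMultiplier.translate (ε * k)).const_mul (a k)) using 2
  rw [latticeSymbol]
  refine Finset.sum_congr rfl fun k _ => ?_
  push_cast
  ring_nf

lemma isFourierMultiplier_dDerivR (b : ℤ →₀ ℝ) (ε : ℝ) :
    IsFourierMultiplier (dDerivR b ε) fun ξ => (ε⁻¹ : ℝ) * latticeSymbol b (ε * ξ) :=
  (isFourierMultiplier_sum_mul_translate b ε).const_mul ε⁻¹

lemma isFourierMultiplier_stepOpR (a : ℤ →₀ ℝ) (ε : ℝ) :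
    IsFourierMultiplier (stepOpR a ε) fun ξ => stepSymbol a (ε * ξ) :=
  IsFourierMultiplier.id.add ((isFourierMultiplier_sum_mul_translate a ε).const_mul _)

lemma fourier_comp_mul_left (H : ℝ → ℂ) {ε : ℝ} (hε : 0 < ε) (x : ℝ) :
    𝓕 (fun ξ => H (ε * ξ)) x = (ε⁻¹ : ℝ) * 𝓕 H (ε⁻¹ * x) := by
  rw [fourier_real_eq_integral_exp_smul, fourier_real_eq_integral_exp_smul]
  have hscale := Measure.integral_comp_mul_left
    (fun ξ : ℝ => Complex.exp (↑(-2 * π * ξ * (ε⁻¹ * x)) * Complex.I) • H ξ) ε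
  rw [abs_of_pos (inv_pos.2 hε), Complex.real_smul] at hscale
  rw [← hscale]
  refine integral_congr_ae (.of_forall fun ξ => ?_)
  have : -2 * π * (ε * ξ) * (ε⁻¹ * x) = -2 * π * ξ * x := by field_simp
  simp only [this]

lemma exists_schwartz_fourier_eq (ψ : 𝓢(ℝ, ℝ)) {ρ : ℝ}
    (hψFT : ∀ ξ : ℝ, ρ < |ξ| →
      (∫ x : ℝ, Complex.exp (-(2 * π * ξ * x) * Complex.I) * (ψ x : ℂ)) = 0) :
    ∃ G : 𝓢(ℝ, ℂ), (∀ ξ, ρ < |ξ| → G ξ = 0) ∧ ∀ x, (ψ x : ℂ) = 𝓕 (G : ℝ → ℂ) x := by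
  let Ψ : 𝓢(ℝ, ℂ) := SchwartzMap.postcompCLM Complex.ofRealCLM ψ
  refine ⟨𝓕⁻ Ψ, fun ξ hξ => ?_, fun x => ?_⟩
  · rw [SchwartzMap.fourierInv_coe, fourierInv_eq_fourier_neg, fourier_real_eq_integral_exp_smul,
      ← hψFT (-ξ) (by rwa [abs_neg])]
    refine integral_congr_ae (.of_forall fun x => ?_)
    simp only [Ψ, SchwartzMap.postcompCLM_apply, Complex.ofRealCLM_apply, smul_eq_mul]
    push_cast
    ring_nf
  · rw [← SchwartzMap.fourier_coe, FourierTransform.fourier_fourierInv_eq]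
    rfl

lemma integrable_iteratedDeriv_of_hasCompactSupport {f : ℝ → ℂ} (hf : ContDiff ℝ ∞ f)
    (hfs : HasCompactSupport f) (n : ℕ) : Integrable (iteratedDeriv n f) := by
  have hcont := hf.continuous_iteratedDeriv n (mod_cast le_top)
  rw [← integrable_norm_iff hcont.aestronglyMeasurable]
  simp only [← norm_iteratedFDeriv_eq_norm_iteratedDeriv]
  exact ((hf.continuous_iteratedFDeriv (mod_cast le_top)).integrable_of_hasCompactSupport
    (hfs.iteratedFDeriv n)).norm

lemma contDiff_fourier_of_hasCompactSupport {H : ℝ → ℂ} (hH : ContDiff ℝ ∞ H)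
    (hHs : HasCompactSupport H) : ContDiff ℝ ∞ (𝓕 H) :=
  SchwartzMap.fourier_coe (hHs.toSchwartzMap hH) ▸ (𝓕 (hHs.toSchwartzMap hH)).smooth ⊤

lemma abs_pow_mul_norm_iteratedDeriv_fourier_le {H : ℝ → ℂ} (hH : ContDiff ℝ ∞ H)
    (hHs : HasCompactSupport H) (k m : ℕ) (x : ℝ) :
    |x| ^ m * ‖iteratedDeriv k (𝓕 H) x‖ ≤
      ∫ ξ, ‖iteratedDeriv m (fun ξ : ℝ => (-2 * π * Complex.I * ξ) ^ k * H ξ) ξ‖ := by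
  have hpow (n : ℕ) : Integrable fun ξ : ℝ => ξ ^ n • H ξ :=
    (((continuous_pow n).smul hH.continuous).integrable_of_hasCompactSupport hHs.smul_left)
  have hofReal : ContDiff ℝ ∞ Complex.ofReal := Complex.ofRealCLM.contDiff
  have hK : ContDiff ℝ ∞ fun ξ : ℝ => (-2 * π * Complex.I * ξ) ^ k * H ξ := by fun_prop
  have hKi := integrable_iteratedDeriv_of_hasCompactSupport hK hHs.mul_left
  have hfourier := congrFun (fourier_iteratedDeriv (N := ⊤) (n := m) hK (fun n _ => hKi n)
    (mod_cast le_top)) x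
  have hx : |x| ≤ ‖2 * π * Complex.I * (x : ℂ)‖ := by
    simp only [norm_mul, Complex.norm_I, Complex.norm_real, norm_eq_abs, abs_of_pos pi_pos,
      RCLike.norm_ofNat, mul_one]
    exact le_mul_of_one_le_left (abs_nonneg x) (by linarith [pi_gt_three])
  calc |x| ^ m * ‖iteratedDeriv k (𝓕 H) x‖
      ≤ ‖2 * π * Complex.I * (x : ℂ)‖ ^ m * ‖iteratedDeriv k (𝓕 H) x‖ := by gcongr
    _ = ‖𝓕 (iteratedDeriv m fun ξ : ℝ => (-2 * π * Complex.I * ξ) ^ k * H ξ) x‖ := by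
        rw [hfourier, norm_smul, norm_pow,
          iteratedDeriv_fourier (N := ⊤) (fun n _ => hpow n) (mod_cast le_top)]
        rfl
    _ ≤ _ := VectorFourier.norm_fourierIntegral_le_integral_norm _ _ _ _ _

lemma abs_iteratedDeriv_eq_norm_iteratedDeriv_ofReal {F : ℝ → ℝ} {k : ℕ}
    (hF : ContDiff ℝ k fun x => (F x : ℂ)) (x : ℝ) :
    |iteratedDeriv k F x| = ‖iteratedDeriv k (fun x => (F x : ℂ)) x‖ := by
  have hF' : ContDiff ℝ k F := Complex.reCLM.contDiff.comp hF
  rw [← norm_eq_abs, ← norm_iteratedFDeriv_eq_norm_iteratedDeriv,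
    ← norm_iteratedFDeriv_eq_norm_iteratedDeriv]
  exact (Complex.ofRealLI.norm_iteratedFDeriv_comp_left hF'.contDiffAt le_rfl).symm

/-- The symbol, at `ε = 1`, of `j` discrete derivatives and `n` steps applied to the function with
Fourier transform `G`. -/
def kernelSymbol (a b : ℤ →₀ ℝ) (G : ℝ → ℂ) (j n : ℕ) (ξ : ℝ) : ℂ :=
  latticeSymbol b ξ ^ j * (stepSymbol a ξ ^ n * G ξ)

section Kernel

variable {a b : ℤ →₀ ℝ} {ψ : ℝ → ℝ} {G : 𝓢(ℝ, ℂ)} {ε ρ t : ℝ}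

lemma contDiff_kernelSymbol (a b : ℤ →₀ ℝ) (G : 𝓢(ℝ, ℂ)) (j n : ℕ) :
    ContDiff ℝ ∞ (kernelSymbol a b G j n) :=
  ((contDiff_latticeSymbol b).pow j).mul (((contDiff_stepSymbol a).pow n).mul (G.smooth ⊤))

lemma kernelSymbol_eq_zero {G : ℝ → ℂ} {ξ : ℝ} (hξ : G ξ = 0) (j n : ℕ) :
    kernelSymbol a b G j n ξ = 0 := by
  simp [kernelSymbol, hξ]

lemma hasCompactSupport_kernelSymbol {G : ℝ → ℂ} (hG : ∀ ξ, ρ < |ξ| → G ξ = 0) (j n : ℕ) :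
    HasCompactSupport (kernelSymbol a b G j n) :=
  .intro (isCompact_Icc (a := -ρ) (b := ρ)) fun ξ hξ =>
    kernelSymbol_eq_zero (hG ξ (lt_of_not_ge fun h => hξ (abs_le.1 h))) j n

lemma ofReal_dDerivR_PeKer (hψ : ∀ x, (ψ x : ℂ) = 𝓕 (G : ℝ → ℂ) x) (hε : 0 < ε) (ht : 0 ≤ t)
    (j : ℕ) (x : ℝ) :
    ((dDerivR b ε)^[j] (PeKer a ε ψ t) x : ℂ) =
      (ε⁻¹ ^ (j + 1) : ℝ) * 𝓕 (kernelSymbol a b G j ⌊t / ε ^ 2⌋₊) (ε⁻¹ * x) := by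
  have hψε (y : ℝ) : ((ε⁻¹ * ψ (y / ε) : ℝ) : ℂ) = 𝓕 (fun ξ => G (ε * ξ)) y := by
    rw [fourier_comp_mul_left _ hε, Complex.ofReal_mul, hψ, div_eq_inv_mul]
  obtain ⟨hPi, hP⟩ := (isFourierMultiplier_stepOpR a ε).iterate ⌊t / ε ^ 2⌋₊ _ _
    (G.integrable.comp_mul_left' hε.ne') hψε
  have hsymbol : (fun ξ => ((ε⁻¹ : ℝ) * latticeSymbol b (ε * ξ)) ^ j *
      (stepSymbol a (ε * ξ) ^ ⌊t / ε ^ 2⌋₊ * G (ε * ξ))) =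
      ((ε⁻¹ ^ j : ℝ) : ℂ) • fun ξ => kernelSymbol a b G j ⌊t / ε ^ 2⌋₊ (ε * ξ) := by
    ext ξ
    simp only [kernelSymbol, Pi.smul_apply, smul_eq_mul, mul_pow, mul_assoc, Complex.ofReal_pow]
  have hsmul : 𝓕 (((ε⁻¹ ^ j : ℝ) : ℂ) • fun ξ => kernelSymbol a b G j ⌊t / ε ^ 2⌋₊ (ε * ξ)) x =
      ((ε⁻¹ ^ j : ℝ) : ℂ) • 𝓕 (fun ξ => kernelSymbol a b G j ⌊t / ε ^ 2⌋₊ (ε * ξ)) x :=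
    congrFun (VectorFourier.fourierIntegral_const_smul 𝐞 volume (innerₗ ℝ) _ _) x
  rw [PeKer, if_pos ht, ((isFourierMultiplier_dDerivR b ε).iterate j _ _ hPi hP).2, hsymbol, hsmul,
    fourier_comp_mul_left _ hε, smul_eq_mul, ← mul_assoc, ← Complex.ofReal_mul, ← pow_succ]

lemma abs_iteratedDeriv_dDerivR_PeKer (hψ : ∀ x, (ψ x : ℂ) = 𝓕 (G : ℝ → ℂ) x)
    (hG : ∀ ξ, ρ < |ξ| → G ξ = 0) (hε : 0 < ε) (ht : 0 ≤ t) (j k : ℕ) (x : ℝ) :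
    |iteratedDeriv k ((dDerivR b ε)^[j] (PeKer a ε ψ t)) x| = ε⁻¹ ^ (k + j + 1) *
      ‖iteratedDeriv k (𝓕 (kernelSymbol a b G j ⌊t / ε ^ 2⌋₊)) (ε⁻¹ * x)‖ := by
  have hsmooth := contDiff_fourier_of_hasCompactSupport
    (contDiff_kernelSymbol a b G j ⌊t / ε ^ 2⌋₊) (hasCompactSupport_kernelSymbol hG j _)
  have hk : ContDiff ℝ k (𝓕 (kernelSymbol a b G j ⌊t / ε ^ 2⌋₊)) :=
    hsmooth.of_le (mod_cast le_top)
  have hofReal : (fun x => ((dDerivR b ε)^[j] (PeKer a ε ψ t) x : ℂ)) = fun x =>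
      ((ε⁻¹ ^ (j + 1) : ℝ) : ℂ) * 𝓕 (kernelSymbol a b G j ⌊t / ε ^ 2⌋₊) (ε⁻¹ * x) :=
    funext fun x => ofReal_dDerivR_PeKer hψ hε ht j x
  have hscale : iteratedDeriv k
      (fun x => 𝓕 (kernelSymbol a b G j ⌊t / ε ^ 2⌋₊) (ε⁻¹ * x)) x =
      ε⁻¹ ^ k • iteratedDeriv k (𝓕 (kernelSymbol a b G j ⌊t / ε ^ 2⌋₊)) (ε⁻¹ * x) :=
    congrFun (iteratedDeriv_comp_const_smul hk ε⁻¹) x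
  rw [abs_iteratedDeriv_eq_norm_iteratedDeriv_ofReal, hofReal, iteratedDeriv_const_mul_field,
    hscale, norm_mul, norm_smul, Complex.norm_real, norm_eq_abs,
    norm_eq_abs, abs_of_pos (by positivity), abs_of_pos (by positivity)]
  · ring
  · rw [hofReal]
    fun_prop

lemma dDerivR_PeKer_of_neg (ht : t < 0) (j : ℕ) :
    (dDerivR b ε)^[j] (PeKer a ε ψ t) = fun _ => 0 := by
  rw [PeKer, if_neg ht.not_ge]
  exact Function.iterate_fixed (by ext x; simp [dDerivR]) j

lemma max_sqrt_le_mul_diffusiveScale (hε : 0 < ε) (t : ℝ) :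
    max √t ε ≤ ε * diffusiveScale ⌊t / ε ^ 2⌋₊ := by
  refine max_le ?_ (le_mul_of_one_le_right hε.le (one_le_diffusiveScale _))
  have := diffusiveScale_pos ⌊t / ε ^ 2⌋₊
  rw [sqrt_le_left (by positivity), mul_pow, diffusiveScale_sq, ← div_le_iff₀' (by positivity)]
  exact (Nat.lt_floor_add_one _).le

lemma mul_diffusiveScale_le_two_mul_max_sqrt (hε : 0 < ε) (ht : 0 ≤ t) :
    ε * diffusiveScale ⌊t / ε ^ 2⌋₊ ≤ 2 * max √t ε := by
  refine abs_le_of_sq_le_sq' ?_ (by positivity) |>.2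
  have hfloor : ε ^ 2 * ⌊t / ε ^ 2⌋₊ ≤ t := by
    rw [← le_div_iff₀' (by positivity)]
    exact Nat.floor_le (by positivity)
  have htmax : t ≤ max √t ε ^ 2 := (sqrt_le_left (by positivity)).1 (le_max_left _ _)
  have hεmax : ε ^ 2 ≤ max √t ε ^ 2 := by gcongr; exact le_max_right _ _
  rw [mul_pow, diffusiveScale_sq]
  linarith

lemma isUniformSymbol_kernelSymbol (ha_symm : ∀ k, a (-k) = a k)
    (hb0 : ∑ k ∈ b.support, b k = 0) (G : 𝓢(ℝ, ℂ)) (ρ : ℝ) (j k : ℕ) :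
    IsUniformSymbol (Icc (-ρ) ρ) parabolicRate
      (fun n ξ => parabolicWeight n ξ ^ (k + j) * ‖stepSymbol a ξ‖ ^ n)
      (fun n ξ => (-2 * π * Complex.I * ξ) ^ k * kernelSymbol a b G j n ξ) := by
  have hL : ∀ n : ℕ, ∀ ξ ∈ Icc (-ρ) ρ, 1 ≤ parabolicRate n ξ := fun n ξ _ =>
    one_le_parabolicRate n ξ
  have hvanish {g : ℝ → ℂ} (hg : ContDiff ℝ ∞ g) (hg0 : g 0 = 0) :
      IsUniformSymbol (Icc (-ρ) ρ) parabolicRate parabolicWeight fun _ => g :=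
    .const_of_eq_zero hg hg0 hL (fun n ξ _ => abs_le_parabolicWeight n ξ)
      fun n ξ _ => one_le_parabolicRate_mul_parabolicWeight n ξ
  have hofReal : ContDiff ℝ ∞ Complex.ofReal := Complex.ofRealCLM.contDiff
  have hξ := (hvanish (g := fun ξ => -2 * π * Complex.I * ξ) (by fun_prop) (by simp)).pow
    isCompact_Icc hL k
  have hb := (hvanish (contDiff_latticeSymbol b) (latticeSymbol_zero hb0)).pow isCompact_Icc hL j
  have hlog_smooth : ContDiff ℝ ∞ fun ξ => deriv (stepSymbol a) ξ / stepSymbol a ξ := by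
    simp only [div_eq_mul_inv]
    exact (contDiff_infty_iff_deriv.1 (contDiff_stepSymbol a)).2.mul
      ((contDiff_stepSymbol a).inv (stepSymbol_ne_zero a))
  have hlog := hvanish hlog_smooth (by rw [deriv_stepSymbol_zero ha_symm, zero_div])
  have hstep := IsUniformSymbol.pow_index (contDiff_stepSymbol a) (stepSymbol_ne_zero a) hlog
    (fun n ξ hξ => zero_le_one.trans (hL n ξ hξ)) fun n ξ _ => natCast_mul_parabolicWeight_le n ξ
  refine (hξ.mul (hb.mul (hstep.mul (.const (G.smooth ⊤) isCompact_Icc hL)))).mono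
    (fun n ξ hξ => zero_le_one.trans (hL n ξ hξ)) fun n ξ _ => le_of_eq ?_
  rw [mul_one, pow_add, mul_assoc]

lemma exists_iteratedDeriv_fourier_kernelSymbol_le (ha_symm : ∀ k, a (-k) = a k)
    (ha0 : ∑ k ∈ a.support, a k = 0) (ha2 : 0 < ∑ k ∈ a.support, (k : ℝ) ^ 2 * a k)
    (ha_zero : ∀ θ, latticeSymbol a θ = 0 → ∃ z : ℤ, θ = z) (hb0 : ∑ k ∈ b.support, b k = 0)
    (hρ : ρ < 1) (hG : ∀ ξ, ρ < |ξ| → G ξ = 0) (j k m : ℕ) :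
    ∃ C : ℝ, 0 ≤ C ∧ ∀ n x, diffusiveScale n ^ (k + j + 1) *
      (|x| ^ m * ‖iteratedDeriv k (𝓕 (kernelSymbol a b G j n)) x‖) ≤ C * diffusiveScale n ^ m := by
  obtain ⟨c, hc, hstep⟩ := exists_norm_stepSymbol_le_exp ha_symm ha0 ha2 ha_zero hρ
  obtain ⟨C, hC, hint⟩ := (isUniformSymbol_kernelSymbol ha_symm hb0 G ρ j k
    ).exists_integral_norm_iteratedDeriv_le hc hstep
    (fun n ξ hξ => mul_eq_zero_of_right _ (kernelSymbol_eq_zero (hG ξ hξ) j n)) m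
  refine ⟨C, hC, fun n x => le_trans ?_ (hint n)⟩
  have := diffusiveScale_pos n
  gcongr
  exact abs_pow_mul_norm_iteratedDeriv_fourier_le (contDiff_kernelSymbol a b G j n)
    (hasCompactSupport_kernelSymbol hG j n) k m x

lemma exists_pow_mul_abs_iteratedDeriv_dDerivR_PeKer_le (ha_symm : ∀ k, a (-k) = a k)
    (ha0 : ∑ k ∈ a.support, a k = 0) (ha2 : 0 < ∑ k ∈ a.support, (k : ℝ) ^ 2 * a k)
    (ha_zero : ∀ θ, latticeSymbol a θ = 0 → ∃ z : ℤ, θ = z) (hb0 : ∑ k ∈ b.support, b k = 0)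
    (hψ : ∀ x, (ψ x : ℂ) = 𝓕 (G : ℝ → ℂ) x) (hρ : ρ < 1) (hG : ∀ ξ, ρ < |ξ| → G ξ = 0)
    (j k m : ℕ) :
    ∃ C : ℝ, 0 ≤ C ∧ ∀ ε, 0 < ε → ∀ t x,
      max √|t| ε ^ (k + j + 1) *
        (|x| ^ m * |iteratedDeriv k ((dDerivR b ε)^[j] (PeKer a ε ψ t)) x|) ≤
        C * max √|t| ε ^ m := by
  obtain ⟨C, hC, hbound⟩ :=
    exists_iteratedDeriv_fourier_kernelSymbol_le ha_symm ha0 ha2 ha_zero hb0 hρ hG j k m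
  refine ⟨C * 2 ^ m, by positivity, fun ε hε t x => ?_⟩
  rcases lt_or_ge t 0 with ht | ht
  · simp only [dDerivR_PeKer_of_neg ht, iteratedDeriv_fun_const_zero, abs_zero, mul_zero]
    positivity
  rw [abs_of_nonneg ht, abs_iteratedDeriv_dDerivR_PeKer hψ hG hε ht]
  set n := ⌊t / ε ^ 2⌋₊
  set D := ‖iteratedDeriv k (𝓕 (kernelSymbol a b G j n)) (ε⁻¹ * x)‖
  have hR := diffusiveScale_pos n
  calc max √t ε ^ (k + j + 1) * (|x| ^ m * (ε⁻¹ ^ (k + j + 1) * D))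
      ≤ (ε * diffusiveScale n) ^ (k + j + 1) * (|x| ^ m * (ε⁻¹ ^ (k + j + 1) * D)) := by
        gcongr
        exact max_sqrt_le_mul_diffusiveScale hε t
    _ = ε ^ m * (diffusiveScale n ^ (k + j + 1) * (|ε⁻¹ * x| ^ m * D)) := by
        rw [abs_mul, abs_of_pos (inv_pos.2 hε), mul_pow, mul_pow, inv_pow, inv_pow]
        field_simp
    _ ≤ ε ^ m * (C * diffusiveScale n ^ m) := by
        gcongr ε ^ m * ?_
        exact hbound n _
    _ = C * (ε * diffusiveScale n) ^ m := by ring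
    _ ≤ C * (2 * max √t ε) ^ m := by
        gcongr C * ?_ ^ m
        exact mul_diffusiveScale_le_two_mul_max_sqrt hε ht
    _ = C * 2 ^ m * max √t ε ^ m := by ring

lemma rpow_neg_one_sub_sub_add {T : ℝ} (hT : 0 < T) (j k m : ℕ) :
    T ^ (-1 - (j : ℝ) - (k : ℝ) + (m : ℝ)) = T ^ m / T ^ (k + j + 1) := by
  rw [← rpow_natCast, ← rpow_natCast, ← rpow_sub hT]
  push_cast
  ring_nf

lemma exists_abs_rpow_mul_abs_iteratedDeriv_dDerivR_PeKer_le (ha_symm : ∀ k, a (-k) = a k)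
    (ha0 : ∑ k ∈ a.support, a k = 0) (ha2 : 0 < ∑ k ∈ a.support, (k : ℝ) ^ 2 * a k)
    (ha_zero : ∀ θ, latticeSymbol a θ = 0 → ∃ z : ℤ, θ = z) (hb0 : ∑ k ∈ b.support, b k = 0)
    (hψ : ∀ x, (ψ x : ℂ) = 𝓕 (G : ℝ → ℂ) x) (hρ : ρ < 1) (hG : ∀ ξ, ρ < |ξ| → G ξ = 0)
    (j k m : ℕ) :
    ∃ C : ℝ, 0 < C ∧ ∀ ε, 0 < ε → ∀ t x,
      |x| ^ (m : ℝ) * |iteratedDeriv k ((dDerivR b ε)^[j] (PeKer a ε ψ t)) x| ≤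
        C * max √|t| ε ^ (-1 - (j : ℝ) - (k : ℝ) + (m : ℝ)) := by
  obtain ⟨C, hC, hbound⟩ := exists_pow_mul_abs_iteratedDeriv_dDerivR_PeKer_le ha_symm ha0 ha2
    ha_zero hb0 hψ hρ hG j k m
  refine ⟨C + 1, by positivity, fun ε hε t x => ?_⟩
  have hT : 0 < max √|t| ε := lt_max_of_lt_right hε
  rw [rpow_neg_one_sub_sub_add hT, rpow_natCast, ← mul_div_assoc, le_div_iff₀' (by positivity)]
  refine (hbound ε hε t x).trans ?_
  gcongr
  exact le_add_of_nonneg_right zero_le_one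

end Kernel

theorem statement5_general (a : ℤ →₀ ℝ)
    (ha_symm : ∀ k : ℤ, a (-k) = a k)
    (ha0 : ∑ k ∈ a.support, a k = 0)
    (ha2 : 0 < ∑ k ∈ a.support, (k : ℝ) ^ 2 * a k)
    (ha_four : ∀ θ : ℝ,
      (∑ k ∈ a.support, (a k : ℂ) * Complex.exp (-(2 * π * k * θ) * Complex.I)) = 0 →
      ∃ z : ℤ, θ = (z : ℝ))
    (b : ℤ →₀ ℝ)
    (hb0 : ∑ k ∈ b.support, b k = 0)
    (ψ : 𝓢(ℝ, ℝ)) {ρ : ℝ} (hρ : ρ < 1)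
    (hψFT : ∀ ξ : ℝ, ρ < |ξ| →
      (∫ x : ℝ, Complex.exp (-(2 * π * ξ * x) * Complex.I) * (ψ x : ℂ)) = 0)
    (j k m : ℕ) :
    ∃ C : ℝ, 0 < C ∧ ∀ ε : ℝ, 0 < ε → ∀ t x : ℝ,
      |x| ^ (m : ℝ) * |iteratedDeriv k ((dDerivR b ε)^[j] (PeKer a ε (fun y => ψ y) t)) x| ≤
        C * max √|t| ε ^ (-1 - (j : ℝ) - (k : ℝ) + (m : ℝ)) ∧
      |iteratedDeriv k ((dDerivR b ε)^[j] (PeKer a ε (fun y => ψ y) t)) x| ≤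
        C * max √|t| ε ^ (-1 - (j : ℝ) - (k : ℝ)) := by
  obtain ⟨G, hG, hψ⟩ := exists_schwartz_fourier_eq ψ hψFT
  have hbound := exists_abs_rpow_mul_abs_iteratedDeriv_dDerivR_PeKer_le ha_symm ha0 ha2 ha_four
    hb0 hψ hρ hG j k
  obtain ⟨C, hC, hdecay⟩ := hbound m
  obtain ⟨D, -, hsize⟩ := hbound 0
  refine ⟨max C D, lt_max_of_lt_left hC, fun ε hε t x => ⟨?_, ?_⟩⟩
  · refine (hdecay ε hε t x).trans ?_
    gcongr
    exact le_max_left C D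
  · refine le_trans (by simpa using hsize ε hε t x) ?_
    gcongr
    exact le_max_right C D

/-- uniform-in-`ε` pointwise bounds, with polynomial decay, for
spatial derivatives of discrete derivatives of the extended discrete heat
kernel. At `x = 0` the first bound is stated in the equivalent multiplicative
form `|x|^m · |∂_x^k D_{x,ε}^j P^ε_t(x)| ≤ C |t|_ε^{-1-j-k+m}`. -/
theorem statement5 (a : ℤ →₀ ℝ)
    (ha_symm : ∀ k : ℤ, a (-k) = a k)
    (ha0 : ∑ k ∈ a.support, a k = 0)
    (ha2 : ∑ k ∈ a.support, ((k : ℝ)) ^ 2 * a k = 2)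
    (ha_four : ∀ θ : ℝ,
      (∑ k ∈ a.support, (a k : ℂ) * Complex.exp (-(2 * Real.pi * k * θ) * Complex.I)) = 0 →
      ∃ z : ℤ, θ = (z : ℝ))
    (b : ℤ →₀ ℝ)
    (hb0 : ∑ k ∈ b.support, b k = 0)
    (hb1 : ∑ k ∈ b.support, (k : ℝ) * b k = 1)
    (ψ : SchwartzMap ℝ ℝ)
    (hψFT : ∀ ξ : ℝ, 3 / 4 < |ξ| →
      (∫ x : ℝ, Complex.exp (-(2 * Real.pi * ξ * x) * Complex.I) * (ψ x : ℂ)) = 0)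
    (c : ℝ) (hc : 0 < c) (j k m : ℕ)
    (hm : m < max (Nat.floor c) (Nat.floor c⁻¹)) :
    ∃ C : ℝ, 0 < C ∧
      ∀ (N : ℕ) (ε : ℝ), ε = ((2 : ℝ) ^ N)⁻¹ →
        (∀ t x : ℝ, c * ε ≤ max (Real.sqrt |t|) |x| →
          |x| ^ (m : ℝ) *
            |iteratedDeriv k ((dDerivR b ε)^[j] (PeKer a ε (fun y => ψ y) t)) x| ≤
            C * (max (Real.sqrt |t|) ε) ^ (-1 - (j : ℝ) - (k : ℝ) + (m : ℝ))) ∧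
        (∀ t x : ℝ, max (Real.sqrt |t|) |x| < c * ε →
          |iteratedDeriv k ((dDerivR b ε)^[j] (PeKer a ε (fun y => ψ y) t)) x| ≤
            C * (max (Real.sqrt |t|) ε) ^ (-1 - (j : ℝ) - (k : ℝ))) := by
  obtain ⟨C, hC, hbound⟩ := statement5_general a ha_symm ha0 (by norm_num [ha2]) ha_four b hb0 ψ
    (by norm_num) hψFT j k m
  exact ⟨C, hC, fun N ε hε => ⟨fun t x _ => (hbound ε (by rw [hε]; positivity) t x).1,
    fun t x _ => (hbound ε (by rw [hε]; positivity) t x).2⟩⟩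
end
end
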